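/- arXiv:1605.06618 — 2 statements merged into one kernel-verified Lean document; each statement's English description precedes it below -/
import Mathlib

section
/- Assume (H1)–(H6) and the growth condition ρ(v) ≤ C(1+‖v‖_V^α)(1+‖i v‖_H^β). Fix N∈ℕ and x∈H, and let g_n,g∈S^N be such that ∫_{𝕏_T} φ·g_n dν_T → ∫_{𝕏_T} φ·g dν_T as n→∞ for every continuous compactly supported φ:𝕏_T→ℝ. Let X^n and X denote the unique solutions of the skeleton equation with initial value x and controls g_n and g respectively. Then lim_{n→∞} sup_{t∈[0,T]} ‖X^n_t − X_t‖_H = 0. -/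
open MeasureTheory Real Filter
open scoped ENNReal RealInnerProductSpace

/-- A solution of the skeleton equation with initial value `x` and control `g`:
a continuous `H`-valued path `X` on `[0,T]` together with a strongly measurable
`V`-valued representative `u` with `i ∘ u = X` a.e., `∫_0^T ‖u_t‖_V^α dt < ∞`, and
`⟪X_t, i v⟫ = ⟪x, i v⟫ + ∫_0^t ⟨𝒜(s,u_s), v⟩ ds + ∫_0^t ∫_𝕏 ⟪f(s,u_s,z), i v⟫ (g(s,z)-1) ν(dz) ds`
for all `t ∈ [0,T]`, `v ∈ V`. -/
def IsSkeletonSolution {𝕏 H V : Type*} [MeasurableSpace 𝕏]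
    [NormedAddCommGroup H] [InnerProductSpace ℝ H]
    [NormedAddCommGroup V] [NormedSpace ℝ V]
    (T α : ℝ) (ν : Measure 𝕏) (i : V →L[ℝ] H) (A : ℝ → V → (V →L[ℝ] ℝ))
    (f : ℝ → V → 𝕏 → H) (x : H) (g : ℝ × 𝕏 → ℝ) (X : ℝ → H) (u : ℝ → V) : Prop :=
  ContinuousOn X (Set.Icc 0 T) ∧ StronglyMeasurable u ∧
  (∀ᵐ t ∂(volume.restrict (Set.Icc 0 T)), i (u t) = X t) ∧
  (∫⁻ t in Set.Icc 0 T, ENNReal.ofReal (‖u t‖ ^ α)) < ⊤ ∧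
  ∀ t ∈ Set.Icc 0 T, ∀ v : V,
    ⟪X t, i v⟫ = ⟪x, i v⟫ + (∫ s in Set.Icc 0 t, A s (u s) v)
      + ∫ s in Set.Icc 0 t, ∫ z, ⟪f s (u s) z, i v⟫ * (g (s, z) - 1) ∂ν

/-!
The argument compares `X^n` and `X` directly, without compactness. The energy inequality for
`Y = X^n - X`, local monotonicity and Gronwall's inequality bound `sup ‖Y‖²` by a constant, uniform
in `n`, times the supremum over `t` of the pairing
`∫_{[0,t] × 𝕏} ⟪f(s, u_s, z), Y_s⟫ (g_n - g) dν_T`, so it suffices that this pairing tends to zero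
uniformly in `t`. By the entropy bound, `f` can be replaced by a simple function with values in the
dense subspace `i(V)`, uniformly in `n`. For `i v` in place of `f`, the equation makes `⟪i v, Y⟫` a
primitive of a function with bounded `L¹` norm, and integrating by parts moves the other factor onto
`∫_{[0,t] × B} (g_n - g) dν_T`, which converges to zero uniformly in `t`.
-/

open Set Topology InformationTheory
open scoped Interval NNReal

section AbsolutelyContinuous

theorem absolutelyContinuousOnInterval_comp_of_lipschitzOnWith {φ f : ℝ → ℝ} {a b : ℝ} {s : Set ℝ}
    {K : ℝ≥0} (hφ : LipschitzOnWith K φ s) (hf : AbsolutelyContinuousOnInterval f a b)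
    (hs : MapsTo f [[a, b]] s) : AbsolutelyContinuousOnInterval (fun t ↦ φ (f t)) a b := by
  rw [absolutelyContinuousOnInterval_iff] at hf ⊢
  intro ε hε
  obtain ⟨δ, hδ, hsmall⟩ := hf (ε / (K + 1)) (by positivity)
  refine ⟨δ, hδ, fun ⟨n, I⟩ hI hlength ↦ ?_⟩
  calc ∑ i ∈ Finset.range n, dist (φ (f (I i).1)) (φ (f (I i).2))
      ≤ ∑ i ∈ Finset.range n, K * dist (f (I i).1) (f (I i).2) :=
        Finset.sum_le_sum fun i hi ↦ hφ.dist_le_mul _ (hs (hI.1 i hi).1) _ (hs (hI.1 i hi).2)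
    _ ≤ (K + 1) * ∑ i ∈ Finset.range n, dist (f (I i).1) (f (I i).2) := by
        rw [← Finset.mul_sum]
        gcongr
        linarith
    _ < (K + 1) * (ε / (K + 1)) := by
        gcongr
        exact hsmall ⟨n, I⟩ hI hlength
    _ = ε := by field

theorem absolutelyContinuousOnInterval_exp {f : ℝ → ℝ} {a b : ℝ}
    (hf : AbsolutelyContinuousOnInterval f a b) :
    AbsolutelyContinuousOnInterval (fun t ↦ exp (f t)) a b := by
  obtain ⟨C, hC⟩ := hf.exists_bound
  obtain ⟨K, hK⟩ := (contDiff_exp.contDiffOn (n := 1)).exists_lipschitzOnWith one_ne_zero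
    (convex_closedBall (0 : ℝ) C) (isCompact_closedBall (0 : ℝ) C)
  exact absolutelyContinuousOnInterval_comp_of_lipschitzOnWith hK hf fun t ht ↦
    mem_closedBall_zero_iff.2 (hC t ht)

theorem integral_primitive_mul_eq_sub {a b : ℝ → ℝ} {t₀ t : ℝ}
    (ha : IntervalIntegrable a volume t₀ t) (hb : IntervalIntegrable b volume t₀ t) :
    ∫ s in t₀..t, (∫ r in t₀..s, a r) * b s
      = (∫ r in t₀..t, a r) * (∫ r in t₀..t, b r) - ∫ s in t₀..t, a s * ∫ r in t₀..s, b r := by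
  have deriv_primitive {c : ℝ → ℝ} (hc : IntervalIntegrable c volume t₀ t) :
      ∀ᵐ s, s ∈ Ι t₀ t → deriv (fun s ↦ ∫ r in t₀..s, c r) s = c s := by
    filter_upwards [hc.ae_hasDerivAt_integral] with s hs hmem
    exact (hs (uIoc_subset_uIcc hmem) t₀ left_mem_uIcc).deriv
  have hparts :=
    (ha.absolutelyContinuousOnInterval_intervalIntegral (c := t₀) left_mem_uIcc
      ).integral_mul_deriv_eq_deriv_mul
    (hb.absolutelyContinuousOnInterval_intervalIntegral (c := t₀) left_mem_uIcc)
  simp only [intervalIntegral.integral_same, mul_zero, sub_zero] at hparts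
  rw [← intervalIntegral.integral_congr_ae ((deriv_primitive hb).mono fun s hs hmem ↦
      congrArg ((∫ r in t₀..s, a r) * ·) (hs hmem)), hparts,
    intervalIntegral.integral_congr_ae ((deriv_primitive ha).mono fun s hs hmem ↦
      congrArg (· * ∫ r in t₀..s, b r) (hs hmem))]

theorem abs_integral_primitive_mul_le {a b : ℝ → ℝ} {t₀ t c d : ℝ} (ht : t₀ ≤ t)
    (ha : IntervalIntegrable a volume t₀ t) (hb : IntervalIntegrable b volume t₀ t)
    (hc : ∫ r in t₀..t, |a r| ≤ c) (hd : ∀ s ∈ Icc t₀ t, |∫ r in t₀..s, b r| ≤ d) :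
    |∫ s in t₀..t, (∫ r in t₀..s, a r) * b s| ≤ 2 * c * d := by
  have hd0 : 0 ≤ d := (abs_nonneg _).trans (hd t ⟨ht, le_rfl⟩)
  have ha_le : |∫ r in t₀..t, a r| ≤ c :=
    (intervalIntegral.abs_integral_le_integral_abs ht).trans hc
  have hboundary : |(∫ r in t₀..t, a r) * ∫ r in t₀..t, b r| ≤ c * d := by
    rw [abs_mul]
    exact mul_le_mul ha_le (hd t ⟨ht, le_rfl⟩) (abs_nonneg _) ((abs_nonneg _).trans ha_le)
  have hprim := hb.absolutelyContinuousOnInterval_intervalIntegral (c := t₀) left_mem_uIcc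
  have hinterior : |∫ s in t₀..t, a s * ∫ r in t₀..s, b r| ≤ c * d := calc
    _ ≤ ∫ s in t₀..t, |a s * ∫ r in t₀..s, b r| := intervalIntegral.abs_integral_le_integral_abs ht
    _ ≤ ∫ s in t₀..t, |a s| * d := by
      refine intervalIntegral.integral_mono_on ht
        (ha.mul_continuousOn hprim.continuousOn).abs (ha.abs.mul_const d) fun s hs ↦ ?_
      rw [abs_mul]
      exact mul_le_mul_of_nonneg_left (hd s hs) (abs_nonneg _)
    _ ≤ c * d := by
      rw [intervalIntegral.integral_mul_const]
      exact mul_le_mul_of_nonneg_right hc hd0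
  rw [integral_primitive_mul_eq_sub ha hb]
  linarith [abs_sub ((∫ r in t₀..t, a r) * ∫ r in t₀..t, b r)
    (∫ s in t₀..t, a s * ∫ r in t₀..s, b r)]

theorem le_mul_exp_integral_of_le_add_integral_mul {k y : ℝ → ℝ} {a t₀ t : ℝ} (ht : t₀ ≤ t)
    (hk : IntervalIntegrable k volume t₀ t) (hk0 : ∀ s, 0 ≤ k s)
    (hky : IntervalIntegrable (fun s ↦ k s * y s) volume t₀ t)
    (hy : ∀ s ∈ Icc t₀ t, y s ≤ a + ∫ r in t₀..s, k r * y r) :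
    y t ≤ a * exp (∫ s in t₀..t, k s) := by
  have hY := hky.absolutelyContinuousOnInterval_intervalIntegral (c := t₀) left_mem_uIcc
  have hE := absolutelyContinuousOnInterval_exp
    (hk.absolutelyContinuousOnInterval_intervalIntegral (c := t₀) left_mem_uIcc).neg
  have hdecreasing :
      (a + ∫ r in t₀..t, k r * y r) * exp (-∫ r in t₀..t, k r) - a * exp (-0) ≤ 0 := by
    have hconst : AbsolutelyContinuousOnInterval (fun _ ↦ a) t₀ t :=
      (LipschitzWith.const a).lipschitzOnWith.absolutelyContinuousOnInterval
    have hderiv := (hconst.add hY).integral_deriv_mul_eq_sub hE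
    simp only [Pi.add_apply, Pi.neg_apply, intervalIntegral.integral_same, add_zero] at hderiv
    rw [← hderiv]
    have hneg : ∀ᵐ s, s ∈ Ι t₀ t →
        deriv ((fun _ ↦ a) + fun s ↦ ∫ r in t₀..s, k r * y r) s * exp (-∫ r in t₀..s, k r)
          + (a + ∫ r in t₀..s, k r * y r) * deriv (fun s ↦ exp (-∫ r in t₀..s, k r)) s
        = -(k s * (a + (∫ r in t₀..s, k r * y r) - y s) * exp (-∫ r in t₀..s, k r)) := by
      filter_upwards [hky.ae_hasDerivAt_integral, hk.ae_hasDerivAt_integral] with s hYs hκs hs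
      have hs' := uIoc_subset_uIcc hs
      have hderiv_exp : deriv (fun s ↦ exp (-∫ r in t₀..s, k r)) s = _ :=
        (hκs hs' t₀ left_mem_uIcc).neg.exp.deriv
      rw [((hasDerivAt_const s a).add (hYs hs' t₀ left_mem_uIcc)).deriv, hderiv_exp, Pi.neg_apply]
      ring
    rw [intervalIntegral.integral_congr_ae hneg, intervalIntegral.integral_neg, neg_nonpos]
    exact intervalIntegral.integral_nonneg ht fun s hs ↦
      mul_nonneg (mul_nonneg (hk0 s) (sub_nonneg.2 (hy s hs))) (exp_pos _).le
  calc y t ≤ a + ∫ r in t₀..t, k r * y r := hy t ⟨ht, le_rfl⟩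
    _ = (a + ∫ r in t₀..t, k r * y r) * exp (-∫ r in t₀..t, k r) * exp (∫ r in t₀..t, k r) := by
      rw [mul_assoc, ← exp_add, neg_add_cancel, exp_zero, mul_one]
    _ ≤ a * exp (∫ s in t₀..t, k s) := by
      gcongr
      simpa using hdecreasing

end AbsolutelyContinuous

theorem tendstoUniformlyOn_Icc_of_monotoneOn {ι : Type*} {l : Filter ι} {M : ι → ℝ → ℝ}
    {m : ℝ → ℝ} {a b : ℝ} (hM : ∀ n, MonotoneOn (M n) (Icc a b)) (hm : ContinuousOn m (Icc a b))
    (hlim : ∀ t ∈ Icc a b, Tendsto (M · t) l (𝓝 (m t))) :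
    TendstoUniformlyOn M m l (Icc a b) := by
  rw [← tendstoLocallyUniformlyOn_iff_tendstoUniformlyOn_of_compact isCompact_Icc,
    Metric.tendstoLocallyUniformlyOn_iff]
  intro ε hε t ht
  obtain ⟨δ, hδ, hclose⟩ := Metric.continuousOn_iff.1 hm t ht (ε / 3) (by positivity)
  have hp : max a (t - δ / 2) ∈ Icc a b := ⟨le_max_left _ _, max_le (ht.1.trans ht.2) (by grind)⟩
  have hq : min b (t + δ / 2) ∈ Icc a b := ⟨le_min (ht.1.trans ht.2) (by grind), min_le_left _ _⟩
  refine ⟨Icc a b ∩ Metric.ball t (δ / 2),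
    inter_mem_nhdsWithin _ (Metric.ball_mem_nhds t (by positivity)), ?_⟩
  filter_upwards [Metric.tendsto_nhds.1 (hlim _ hp) (ε / 3) (by positivity),
    Metric.tendsto_nhds.1 (hlim _ hq) (ε / 3) (by positivity)] with n hnp hnq s ⟨hs, hst⟩
  rw [Metric.mem_ball] at hst
  have hps : M n (max a (t - δ / 2)) ≤ M n s := hM n hp hs (by grind [Real.dist_eq])
  have hsq : M n s ≤ M n (min b (t + δ / 2)) := hM n hs hq (by grind [Real.dist_eq])
  have hmp := hclose _ hp (by grind [Real.dist_eq])
  have hmq := hclose _ hq (by grind [Real.dist_eq])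
  have hms := hclose s hs (by linarith)
  grind [Real.dist_eq]

section Entropy

theorem mul_le_klFun_add_exp_sub_one (x : ℝ) {b : ℝ} (hb : 0 ≤ b) :
    x * b ≤ klFun b + (exp x - 1) := by
  rw [klFun_apply]
  rcases hb.eq_or_lt with rfl | hb
  · simpa using (exp_pos x).le
  · have h := mul_le_mul_of_nonneg_left (add_one_le_exp (x - log b)) hb.le
    rw [exp_sub, exp_log hb, mul_div_cancel₀ _ hb.ne'] at h
    linarith

theorem exp_sub_one_sub_le {x : ℝ} (hx : 0 ≤ x) : exp x - 1 - x ≤ x ^ 2 * exp x := by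
  have h1 : exp x * (1 - x) ≤ 1 := by
    have := mul_le_mul_of_nonneg_left (one_sub_le_exp_neg x) (exp_pos x).le
    rwa [← exp_add, add_neg_cancel, exp_zero] at this
  nlinarith

theorem mul_abs_sub_one_le_klFun_add {x b : ℝ} (hx : 0 ≤ x) (hb : 0 ≤ b) :
    x * |b - 1| ≤ klFun b + x ^ 2 * exp x := by
  have hexp := exp_sub_one_sub_le hx
  rcases abs_cases (b - 1) with ⟨habs, -⟩ | ⟨habs, -⟩ <;> rw [habs]
  · linarith [mul_le_klFun_add_exp_sub_one x hb]
  · have hsinh : x ≤ sinh x := self_le_sinh_iff.2 hx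
    rw [sinh_eq] at hsinh
    linarith [mul_le_klFun_add_exp_sub_one (-x) hb]

theorem mul_abs_sub_one_le_klFun_div_add {σ x b : ℝ} (hσ : 0 < σ) (hx : 0 ≤ x) (hb : 0 ≤ b) :
    x * |b - 1| ≤ klFun b / σ + σ * (x ^ 2 * exp (σ * x)) := by
  have h := mul_abs_sub_one_le_klFun_add (mul_nonneg hσ.le hx) hb
  calc x * |b - 1| = (σ * x * |b - 1|) / σ := by field_simp
    _ ≤ (klFun b + (σ * x) ^ 2 * exp (σ * x)) / σ := by gcongr
    _ = _ := by field_simp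

end Entropy

theorem tendsto_eLpNorm_sub_comp_sub {E : Type*} [NormedAddCommGroup E] {p : ℝ≥0∞} {f : ℝ → E}
    (hp₁ : 1 ≤ p) (hp : p ≠ ∞) (hf : MemLp f p) :
    Tendsto (fun τ ↦ eLpNorm (fun s ↦ f s - f (s - τ)) p volume) (𝓝 0) (𝓝 0) := by
  have := Fact.mk hp₁
  have := Fact.mk hp
  have hcont : Continuous fun τ : ℝ ↦ DomAddAct.mk (-τ) +ᵥ hf.toLp f :=
    (DomAddAct.continuous_mk.comp continuous_neg).vadd continuous_const
  have hlim := (hcont.tendsto 0).edist (tendsto_const_nhds (x := hf.toLp f))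
  simp only [neg_zero, DomAddAct.mk_zero, zero_vadd, edist_self] at hlim
  refine hlim.congr fun τ ↦ ?_
  rw [DomAddAct.mk_vadd_toLp, edist_comm, Lp.edist_toLp_toLp]
  refine eLpNorm_congr_ae (.of_forall fun s ↦ ?_)
  simp [sub_eq_neg_add]

theorem le_of_integral_sub_comp_sub_le {P : ℝ → ℝ} {t : ℝ} (ht : 0 ≤ t)
    (hP : ContinuousOn P (Icc 0 t))
    (hincr : ∀ ε > 0, ∀ᶠ h in 𝓝[>] 0, ∫ s in h..t, (P s - P (s - h)) ≤ h * ε) : P t ≤ P 0 := by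
  set Q := IccExtend ht ((Icc 0 t).domRestrict P) with hQdef
  have hQ : Continuous Q := continuous_IccExtend_iff.2 hP.domRestrict
  have hQP {s : ℝ} (hs : s ∈ Icc 0 t) : Q s = P s := IccExtend_of_mem ht _ hs
  have hint (a b : ℝ) : IntervalIntegrable Q volume a b := hQ.intervalIntegrable a b
  have hderiv : HasDerivAt (fun h ↦ (∫ s in (t - h)..t, Q s) - ∫ s in (0 : ℝ)..h, Q s)
      (Q t - Q 0) 0 := by
    have hupper := (intervalIntegral.integral_hasDerivAt_left (hint (t - 0) t)
      (hQ.stronglyMeasurableAtFilter _ _) hQ.continuousAt).comp 0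
      ((hasDerivAt_id (0 : ℝ)).const_sub t)
    have hlower := intervalIntegral.integral_hasDerivAt_right (hint 0 0)
      (hQ.stronglyMeasurableAtFilter _ _) hQ.continuousAt
    exact (hupper.sub hlower).congr_deriv (by simp)
  rw [← hQP ⟨ht, le_rfl⟩, ← hQP ⟨le_rfl, ht⟩]
  rcases ht.eq_or_lt with rfl | htpos
  · exact le_rfl
  refine le_of_forall_pos_le_add fun ε hε ↦ ?_
  rw [← sub_le_iff_le_add']
  refine le_of_tendsto hderiv.tendsto_slope_zero_right ?_
  filter_upwards [hincr ε hε, Ioo_mem_nhdsGT htpos] with h hle ⟨hh0, hht⟩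
  have htelescope : ∫ s in h..t, (P s - P (s - h))
      = (∫ s in (t - h)..t, Q s) - ∫ s in (0 : ℝ)..h, Q s := calc
    _ = ∫ s in h..t, (Q s - Q (s - h)) := by
      refine intervalIntegral.integral_congr fun s hs ↦ ?_
      rw [uIcc_of_le hht.le] at hs
      simp only [hQP (s := s) ⟨hh0.le.trans hs.1, hs.2⟩,
        hQP (s := s - h) ⟨sub_nonneg.2 hs.1, by linarith [hs.2]⟩]
    _ = _ := by
      rw [intervalIntegral.integral_sub (hint h t)
          (Continuous.intervalIntegrable (by fun_prop) h t),
        intervalIntegral.integral_comp_sub_right Q, sub_self,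
        intervalIntegral.integral_interval_sub_interval_comm (hint h t) (hint 0 (t - h)) (hint h 0),
        intervalIntegral.integral_symm 0 h, intervalIntegral.integral_symm (t - h) t]
      ring
  simp only [zero_add, sub_zero, intervalIntegral.integral_same, smul_eq_mul]
  rw [← htelescope, inv_mul_le_iff₀ hh0]
  exact hle

theorem measurePreserving_sub_Icc (τ T : ℝ) : MeasurePreserving (· - τ)
    (volume.restrict (Icc τ T)) (volume.restrict (Icc 0 (T - τ))) := by
  convert (measurePreserving_sub_right volume τ).restrict_preimage measurableSet_Icc using 2
  simp

theorem tendsto_lintegral_mul_edist_comp_sub {E : Type*} [PseudoEMetricSpace E] {T : ℝ}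
    {b : ℝ → ℝ≥0∞} {X : ℝ → E} (hb : ∫⁻ s in Icc 0 T, b s ≠ ∞) (hX : ContinuousOn X (Icc 0 T)) :
    Tendsto (fun τ ↦ ∫⁻ s in Icc τ T, b (s - τ) * edist (X s) (X (s - τ))) (𝓝[≥] 0) (𝓝 0) := by
  rw [ENNReal.tendsto_nhds_zero]
  intro ε hε
  obtain ⟨η, hη, hηε⟩ := ENNReal.exists_nnreal_pos_mul_lt hb hε.ne'
  obtain ⟨δ, hδ, hclose⟩ := EMetric.uniformContinuousOn_iff.1
    (isCompact_Icc.uniformContinuousOn_of_continuous hX) η (by exact_mod_cast hη)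
  have hsmall : ∀ᶠ τ : ℝ in 𝓝[≥] 0, edist τ 0 < δ :=
    mem_nhdsWithin_of_mem_nhds (Metric.eball_mem_nhds 0 hδ)
  filter_upwards [hsmall, self_mem_nhdsWithin] with τ hτδ hτ
  calc ∫⁻ s in Icc τ T, b (s - τ) * edist (X s) (X (s - τ))
      ≤ ∫⁻ s in Icc τ T, b (s - τ) * η := by
        refine setLIntegral_mono' measurableSet_Icc fun s hs ↦ ?_
        gcongr
        refine (hclose ⟨hτ.trans hs.1, hs.2⟩ ⟨sub_nonneg.2 hs.1, ?_⟩ ?_).le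
        · linarith [hs.2, mem_Ici.1 hτ]
        · simpa [edist_dist, Real.dist_eq] using hτδ
    _ = (∫⁻ s in Icc τ T, b (s - τ)) * η := lintegral_mul_const' _ _ ENNReal.coe_ne_top
    _ ≤ (∫⁻ s in Icc 0 T, b s) * η := by
        gcongr ?_ * _
        rw [(measurePreserving_sub_Icc τ T).lintegral_comp_emb
          (measurableEmbedding_subRight τ) b]
        exact lintegral_mono_set (Icc_subset_Icc_right (by linarith [mem_Ici.1 hτ]))
    _ ≤ ε := by rw [mul_comm]; exact hηε.le

section Drift

variable {H V : Type*} [NormedAddCommGroup H] [InnerProductSpace ℝ H] [NormedAddCommGroup V]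
  [NormedSpace ℝ V] {T : ℝ} {p q : ℝ≥0∞} {i : V →L[ℝ] H} {D D₁ D₂ : ℝ → V → ℝ}

/-- `D` represents a time-dependent functional in `L^q(0,T;V*) + L¹(0,T;H)`: `D r v` is its value
at time `r` on the test vector `v`. Linearity in `v` is weakened to the estimate by the norms of the
two summands, which is insensitive to null sets of times and to junk values of integrals. -/
structure IsDrift [MeasurableSpace V] (T : ℝ) (q : ℝ≥0∞) (i : V →L[ℝ] H) (D : ℝ → V → ℝ) :
    Prop where
  measurable : Measurable fun z : ℝ × V ↦ D z.1 z.2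
  map_zero : ∀ r, D r 0 = 0
  exists_bound : ∃ a b : ℝ → ℝ, MemLp a q (volume.restrict (Icc 0 T)) ∧
    MemLp b 1 (volume.restrict (Icc 0 T)) ∧ ∀ᵐ r ∂volume.restrict (Icc 0 T), ∀ v w,
      |D r v - D r w| ≤ |a r| * ‖v - w‖ + |b r| * ‖i v - i w‖

/-- `X` is a continuous path in `H` with representative `u ∈ L^p(0,T;V)`, solving `X' = D` weakly
with `X 0 = x`. -/
structure IsWeakSolution (T : ℝ) (p : ℝ≥0∞) (i : V →L[ℝ] H) (D : ℝ → V → ℝ) (x : H)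
    (X : ℝ → H) (u : ℝ → V) : Prop where
  continuousOn : ContinuousOn X (Icc 0 T)
  stronglyMeasurable : StronglyMeasurable u
  ae_eq : ∀ᵐ t ∂volume.restrict (Icc 0 T), i (u t) = X t
  memLp : MemLp u p (volume.restrict (Icc 0 T))
  inner_eq : ∀ t ∈ Icc 0 T, ∀ v, ⟪X t, i v⟫ = ⟪x, i v⟫ + ∫ s in 0..t, D s v

theorem IsDrift.add [MeasurableSpace V] (hD₁ : IsDrift T q i D₁) (hD₂ : IsDrift T q i D₂) :
    IsDrift T q i (D₁ + D₂) where
  measurable := hD₁.measurable.add hD₂.measurable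
  map_zero r := by simp [hD₁.map_zero, hD₂.map_zero]
  exists_bound := by
    obtain ⟨a₁, b₁, ha₁, hb₁, hbound₁⟩ := hD₁.exists_bound
    obtain ⟨a₂, b₂, ha₂, hb₂, hbound₂⟩ := hD₂.exists_bound
    refine ⟨|a₁| + |a₂|, |b₁| + |b₂|, ha₁.abs.add ha₂.abs, hb₁.abs.add hb₂.abs, ?_⟩
    filter_upwards [hbound₁, hbound₂] with r h₁ h₂ v w
    simp only [Pi.add_apply, Pi.abs_apply]
    calc |D₁ r v + D₂ r v - (D₁ r w + D₂ r w)|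
        = |(D₁ r v - D₁ r w) + (D₂ r v - D₂ r w)| := by rw [add_sub_add_comm]
      _ ≤ |D₁ r v - D₁ r w| + |D₂ r v - D₂ r w| := abs_add_le _ _
      _ ≤ (|a₁ r| + |a₂ r|) * ‖v - w‖ + (|b₁ r| + |b₂ r|) * ‖i v - i w‖ := by
        linarith [h₁ v w, h₂ v w]
      _ ≤ _ := by gcongr <;> exact le_abs_self _

theorem IsDrift.neg [MeasurableSpace V] (hD : IsDrift T q i D) : IsDrift T q i (-D) where
  measurable := hD.measurable.neg
  map_zero r := by simp [hD.map_zero]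
  exists_bound := by
    obtain ⟨a, b, ha, hb, hbound⟩ := hD.exists_bound
    refine ⟨a, b, ha, hb, hbound.mono fun r hr v w ↦ ?_⟩
    simpa [neg_add_eq_sub, abs_sub_comm] using hr v w

theorem IsDrift.sub [MeasurableSpace V] (hD₁ : IsDrift T q i D₁) (hD₂ : IsDrift T q i D₂) :
    IsDrift T q i (D₁ - D₂) :=
  sub_eq_add_neg D₁ D₂ ▸ hD₁.add hD₂.neg

theorem IsDrift.integrable_comp [MeasurableSpace V] [BorelSpace V] [p.HolderConjugate q]
    (hD : IsDrift T q i D) {u : ℝ → V} (hum : StronglyMeasurable u)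
    (hu : MemLp u p (volume.restrict (Icc 0 T))) {M : ℝ}
    (hM : ∀ᵐ t ∂volume.restrict (Icc 0 T), ‖i (u t)‖ ≤ M) :
    IntegrableOn (fun r ↦ D r (u r)) (Icc 0 T) := by
  obtain ⟨a, b, ha, hb, hbound⟩ := hD.exists_bound
  have hau : MemLp (fun r ↦ |a r| * ‖u r‖) 1 (volume.restrict (Icc 0 T)) := hu.norm.mul' ha.abs
  refine (hau.integrable le_rfl |>.add ((hb.abs.integrable le_rfl).mul_const M)).mono'
    (hD.measurable.comp (measurable_id.prodMk hum.measurable)).aestronglyMeasurable ?_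
  filter_upwards [hbound, hM] with r hr hMr
  have hr0 := hr (u r) 0
  rw [hD.map_zero, _root_.map_zero, sub_zero, sub_zero, sub_zero] at hr0
  exact hr0.trans (add_le_add_right (mul_le_mul_of_nonneg_left hMr (abs_nonneg _)) _)

theorem exists_ae_norm_le_of_continuousOn {E : Type*} [SeminormedAddCommGroup E] {X Y : ℝ → E}
    (hX : ContinuousOn X (Icc 0 T)) (hY : ∀ᵐ t ∂volume.restrict (Icc 0 T), Y t = X t) :
    ∃ M, ∀ᵐ t ∂volume.restrict (Icc 0 T), ‖Y t‖ ≤ M := by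
  obtain ⟨M, hM⟩ := isCompact_Icc.exists_bound_of_continuousOn hX
  refine ⟨M, ?_⟩
  filter_upwards [hY, ae_restrict_mem measurableSet_Icc] with t ht hmem
  exact ht ▸ hM t hmem

theorem IsWeakSolution.integrable_drift [MeasurableSpace V] [BorelSpace V] [p.HolderConjugate q]
    {x : H} {X : ℝ → H} {u : ℝ → V} (hX : IsWeakSolution T p i D x X u) (hD : IsDrift T q i D) :
    IntegrableOn (fun r ↦ D r (u r)) (Icc 0 T) :=
  have ⟨_, hM⟩ := exists_ae_norm_le_of_continuousOn hX.continuousOn hX.ae_eq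
  hD.integrable_comp hX.stronglyMeasurable hX.memLp hM

theorem IsDrift.intervalIntegrable [MeasurableSpace V] [BorelSpace V] (p : ℝ≥0∞)
    [p.HolderConjugate q] (hD : IsDrift T q i D) (v : V) {s t : ℝ} (hs : s ∈ Icc 0 T)
    (ht : t ∈ Icc 0 T) :
    IntervalIntegrable (D · v) volume s t := by
  refine IntegrableOn.intervalIntegrable (IntegrableOn.mono_set ?_ (uIcc_subset_Icc hs ht))
  exact hD.integrable_comp (p := p) stronglyMeasurable_const (memLp_const v)
    (.of_forall fun _ ↦ le_rfl)

namespace IsWeakSolution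

variable {x x₁ x₂ : H} {X X₁ X₂ : ℝ → H} {u u₁ u₂ : ℝ → V}

theorem sub [MeasurableSpace V] [BorelSpace V] [p.HolderConjugate q]
    (h₁ : IsWeakSolution T p i D₁ x₁ X₁ u₁) (hD₁ : IsDrift T q i D₁)
    (h₂ : IsWeakSolution T p i D₂ x₂ X₂ u₂) (hD₂ : IsDrift T q i D₂) :
    IsWeakSolution T p i (D₁ - D₂) (x₁ - x₂) (X₁ - X₂) (u₁ - u₂) where
  continuousOn := h₁.continuousOn.sub h₂.continuousOn
  stronglyMeasurable := h₁.stronglyMeasurable.sub h₂.stronglyMeasurable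
  ae_eq := by
    filter_upwards [h₁.ae_eq, h₂.ae_eq] with t ht₁ ht₂
    simp [ht₁, ht₂]
  memLp := h₁.memLp.sub h₂.memLp
  inner_eq t ht v := by
    have h0 : (0 : ℝ) ∈ Icc 0 T := ⟨le_rfl, ht.1.trans ht.2⟩
    simp only [Pi.sub_apply, inner_sub_left, h₁.inner_eq t ht, h₂.inner_eq t ht]
    rw [intervalIntegral.integral_sub (hD₁.intervalIntegrable p v h0 ht)
      (hD₂.intervalIntegrable p v h0 ht)]
    ring

theorem apply_zero (hX : IsWeakSolution T p i D x X u) (hT : 0 ≤ T) (hi : DenseRange i) :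
    X 0 = x :=
  hi.eq_of_inner_left ℝ fun v ↦ by simpa using hX.inner_eq 0 ⟨le_rfl, hT⟩ v

end IsWeakSolution

end Drift

theorem lintegral_enorm_comp_sub_mul_enorm_sub_le {E : Type*} [NormedAddCommGroup E]
    [NormedSpace ℝ E] {T τ : ℝ} {p q : ℝ≥0∞} [p.HolderConjugate q] {a : ℝ → ℝ} {u : ℝ → E}
    (hτ : 0 ≤ τ) (ha : AEStronglyMeasurable a (volume.restrict (Icc 0 T)))
    (hu : StronglyMeasurable u) :
    ∫⁻ s in Icc τ T, ‖a (s - τ)‖ₑ * ‖u s - u (s - τ)‖ₑ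
      ≤ eLpNorm a q (volume.restrict (Icc 0 T))
        * eLpNorm (fun s ↦ (Icc 0 T).indicator u s - (Icc 0 T).indicator u (s - τ)) p volume := by
  have hshift := measurePreserving_sub_Icc τ T
  have hmono : volume.restrict (Icc 0 (T - τ)) ≤ volume.restrict (Icc 0 T) :=
    Measure.restrict_mono_set _ (Icc_subset_Icc_right (by linarith))
  calc ∫⁻ s in Icc τ T, ‖a (s - τ)‖ₑ * ‖u s - u (s - τ)‖ₑ
      = eLpNorm ((a ∘ (· - τ)) • fun s ↦ u s - u (s - τ)) 1 (volume.restrict (Icc τ T)) := by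
        simp [eLpNorm_one_eq_lintegral_enorm, enorm_smul]
    _ ≤ eLpNorm (a ∘ (· - τ)) q (volume.restrict (Icc τ T))
          * eLpNorm (fun s ↦ u s - u (s - τ)) p (volume.restrict (Icc τ T)) :=
        eLpNorm_smul_le_mul_eLpNorm
          (hu.sub (hu.comp_measurable (measurable_sub_const τ))).aestronglyMeasurable
          ((ha.mono_measure hmono).comp_measurePreserving hshift)
    _ ≤ _ := by
        gcongr
        · rw [eLpNorm_comp_measurePreserving (ha.mono_measure hmono) hshift]
          exact eLpNorm_mono_measure a hmono
        · refine (eLpNorm_congr_ae ?_).trans_le (eLpNorm_restrict_le _ p volume _)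
          filter_upwards [ae_restrict_mem measurableSet_Icc] with s hs
          have hs' : s ∈ Icc 0 T := ⟨hτ.trans hs.1, hs.2⟩
          have hsτ : s - τ ∈ Icc 0 T := ⟨sub_nonneg.2 hs.1, by linarith [hs.2]⟩
          rw [indicator_of_mem hs', indicator_of_mem hsτ]

theorem integral_le_of_lintegral_ofReal_le {Ω : Type*} [MeasurableSpace Ω] {μ : Measure Ω}
    {f : Ω → ℝ} {c : ℝ} (hc : 0 ≤ c) (hf : ∫⁻ ω, ENNReal.ofReal (f ω) ∂μ ≤ ENNReal.ofReal c) :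
    ∫ ω, f ω ∂μ ≤ c := by
  by_cases hint : Integrable f μ
  · rw [integral_eq_lintegral_pos_part_sub_lintegral_neg_part hint]
    exact (sub_le_self _ ENNReal.toReal_nonneg).trans (ENNReal.toReal_le_of_le_ofReal hc hf)
  · rwa [integral_undef hint]

section Energy

variable {H V : Type*} [NormedAddCommGroup H] [InnerProductSpace ℝ H] [NormedAddCommGroup V]
  [NormedSpace ℝ V] [MeasurableSpace V] {T : ℝ} {p q : ℝ≥0∞} {i : V →L[ℝ] H}
  {D : ℝ → V → ℝ} {x : H} {X : ℝ → H} {u : ℝ → V}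

theorem IsDrift.exists_enorm_bound (hD : IsDrift T q i D) :
    ∃ a b : ℝ → ℝ, MemLp a q (volume.restrict (Icc 0 T)) ∧ MemLp b 1 (volume.restrict (Icc 0 T)) ∧
      ∀ᵐ r ∂volume.restrict (Icc 0 T), ∀ v w,
        ‖D r v - D r w‖ₑ ≤ ‖a r‖ₑ * ‖v - w‖ₑ + ‖b r‖ₑ * ‖i v - i w‖ₑ := by
  obtain ⟨a, b, ha, hb, hbound⟩ := hD.exists_bound
  refine ⟨a, b, ha, hb, hbound.mono fun r hr v w ↦ ?_⟩
  calc ‖D r v - D r w‖ₑ ≤ ‖|a r| * ‖v - w‖ + |b r| * ‖i v - i w‖‖ₑ :=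
        enorm_le_iff_norm_le.2 ((hr v w).trans (le_abs_self _))
    _ ≤ ‖|a r| * ‖v - w‖‖ₑ + ‖|b r| * ‖i v - i w‖‖ₑ := enorm_add_le _ _
    _ = _ := by simp only [enorm_mul, enorm_abs, enorm_norm]

namespace IsWeakSolution

variable [p.HolderConjugate q]

theorem tendsto_lintegral_drift_increment (hX : IsWeakSolution T p i D x X u)
    (hD : IsDrift T q i D) (hp : p ≠ ∞) :
    Tendsto (fun τ ↦ ∫⁻ s in Icc τ T, ‖D (s - τ) (u s) - D (s - τ) (u (s - τ))‖ₑ)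
      (𝓝[≥] 0) (𝓝 0) := by
  obtain ⟨a, b, ha, hb, hbound⟩ := hD.exists_enorm_bound
  have hb_int : ∫⁻ s in Icc 0 T, ‖b s‖ₑ ≠ ∞ := (hb.integrable le_rfl).2.ne
  have hX_lim := tendsto_lintegral_mul_edist_comp_sub hb_int hX.continuousOn
  have hu : MemLp ((Icc 0 T).indicator u) p :=
    (memLp_indicator_iff_restrict measurableSet_Icc).2 hX.memLp
  have hu_lim := (tendsto_eLpNorm_sub_comp_sub (ENNReal.HolderConjugate.one_le p q) hp hu).mono_left
    (nhdsWithin_le_nhds (s := Ici 0))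
  have hlim := (ENNReal.Tendsto.const_mul hu_lim (.inr ha.2.ne)).add hX_lim
  rw [mul_zero, add_zero] at hlim
  refine tendsto_of_tendsto_of_tendsto_of_le_of_le' tendsto_const_nhds hlim
    (.of_forall fun _ ↦ zero_le) ?_
  filter_upwards [self_mem_nhdsWithin] with τ (hτ : 0 ≤ τ)
  have hshift := (measurePreserving_sub_Icc τ T).quasiMeasurePreserving
  have hmono : volume.restrict (Icc 0 (T - τ)) ≤ volume.restrict (Icc 0 T) :=
    Measure.restrict_mono_set _ (Icc_subset_Icc_right (sub_le_self T hτ))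
  have ham : AEMeasurable (fun s ↦ a (s - τ)) (volume.restrict (Icc τ T)) :=
    (ha.aestronglyMeasurable.mono_measure hmono).aemeasurable.comp_quasiMeasurePreserving hshift
  have hum : AEStronglyMeasurable (fun s ↦ u s - u (s - τ)) (volume.restrict (Icc τ T)) :=
    (hX.stronglyMeasurable.sub (hX.stronglyMeasurable.comp_measurable
      (measurable_sub_const τ))).aestronglyMeasurable
  calc ∫⁻ s in Icc τ T, ‖D (s - τ) (u s) - D (s - τ) (u (s - τ))‖ₑ
      ≤ ∫⁻ s in Icc τ T, (‖a (s - τ)‖ₑ * ‖u s - u (s - τ)‖ₑ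
          + ‖b (s - τ)‖ₑ * edist (X s) (X (s - τ))) := by
        refine lintegral_mono_ae ?_
        filter_upwards [ae_restrict_of_ae_restrict_of_subset (Icc_subset_Icc_left hτ) hX.ae_eq,
          hshift.ae (ae_mono hmono hX.ae_eq), hshift.ae (ae_mono hmono hbound)]
          with s hs hsτ hsbound
        rw [← hs, ← hsτ, edist_eq_enorm_sub]
        exact hsbound _ _
    _ = _ := lintegral_add_left' (ham.enorm.mul hum.enorm) _
    _ ≤ _ := by
        gcongr
        exact lintegral_enorm_comp_sub_mul_enorm_sub_le hτ ha.aestronglyMeasurable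
          hX.stronglyMeasurable

variable [BorelSpace V]

theorem eventually_lintegral_lintegral_drift_increment_le (hX : IsWeakSolution T p i D x X u)
    (hD : IsDrift T q i D) (hp : p ≠ ∞) {ε : ℝ≥0∞} (hε : 0 < ε) :
    ∀ᶠ h : ℝ in 𝓝[>] 0, ∫⁻ s in Icc h T, ∫⁻ τ in Icc 0 h,
      ‖D (s - τ) (u s) - D (s - τ) (u (s - τ))‖ₑ ≤ ε * ENNReal.ofReal h := by
  have hu := hX.stronglyMeasurable.measurable
  have hmeas : Measurable fun z : ℝ × ℝ ↦
      ‖D (z.1 - z.2) (u z.1) - D (z.1 - z.2) (u (z.1 - z.2))‖ₑ := by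
    have hsub : Measurable fun z : ℝ × ℝ ↦ z.1 - z.2 := by fun_prop
    exact ((hD.measurable.comp (hsub.prodMk (hu.comp measurable_fst))).sub
      (hD.measurable.comp (hsub.prodMk (hu.comp hsub)))).enorm
  have hsmall := (hX.tendsto_lintegral_drift_increment hD hp).eventually_le_const hε
  obtain ⟨δ, hδ, hsmall⟩ := mem_nhdsGE_iff_exists_Ico_subset.1 hsmall
  filter_upwards [Ioo_mem_nhdsGT hδ] with h hh
  rw [lintegral_lintegral_swap hmeas.aemeasurable]
  calc ∫⁻ τ in Icc 0 h, ∫⁻ s in Icc h T, ‖D (s - τ) (u s) - D (s - τ) (u (s - τ))‖ₑ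
      ≤ ∫⁻ _ in Icc 0 h, ε := by
        refine setLIntegral_mono' measurableSet_Icc fun τ hτ ↦ ?_
        exact (lintegral_mono_set (Icc_subset_Icc_left hτ.2)).trans
          (hsmall ⟨hτ.1, hτ.2.trans_lt hh.2⟩)
    _ = ε * ENNReal.ofReal h := by simp

theorem norm_sq_sub_le (hX : IsWeakSolution T p i D x X u) (hD : IsDrift T q i D) {s t : ℝ}
    (hs : s ∈ Icc 0 T) (ht : t ∈ Icc 0 T) (hut : i (u t) = X t) :
    ‖X t‖ ^ 2 - ‖X s‖ ^ 2 ≤ 2 * ∫ r in s..t, D r (u t) := by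
  have h0 : (0 : ℝ) ∈ Icc 0 T := ⟨le_rfl, hs.1.trans hs.2⟩
  have hinner : ⟪X t - X s, X t⟫ = ∫ r in s..t, D r (u t) := by
    nth_rewrite 2 [← hut]
    rw [inner_sub_left, hX.inner_eq t ht, hX.inner_eq s hs, add_sub_add_left_eq_sub,
      intervalIntegral.integral_interval_sub_left (hD.intervalIntegrable p _ h0 ht)
        (hD.intervalIntegrable p _ h0 hs)]
  have hsq := norm_sub_sq_real (X t) (X s)
  rw [← hinner, inner_sub_left, real_inner_self_eq_norm_sq, real_inner_comm]
  linarith [sq_nonneg ‖X t - X s‖]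

theorem ofReal_energy_sub_le (hX : IsWeakSolution T p i D x X u) (hD : IsDrift T q i D) {h s : ℝ}
    (hh : 0 ≤ h) (hs : s ∈ Icc h T) (hus : i (u s) = X s) :
    ENNReal.ofReal ((‖X s‖ ^ 2 - 2 * ∫ r in 0..s, D r (u r))
        - (‖X (s - h)‖ ^ 2 - 2 * ∫ r in 0..s - h, D r (u r)))
      ≤ 2 * ∫⁻ τ in Icc 0 h, ‖D (s - τ) (u s) - D (s - τ) (u (s - τ))‖ₑ := by
  have h0 : (0 : ℝ) ∈ Icc 0 T := ⟨le_rfl, (hh.trans hs.1).trans hs.2⟩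
  have hs' : s ∈ Icc 0 T := ⟨hh.trans hs.1, hs.2⟩
  have hsh : s - h ∈ Icc 0 T := ⟨sub_nonneg.2 hs.1, by linarith [hs.2]⟩
  have hint {a b : ℝ} (ha : a ∈ Icc 0 T) (hb : b ∈ Icc 0 T) :
      IntervalIntegrable (fun r ↦ D r (u r)) volume a b :=
    ((hX.integrable_drift hD).mono_set (uIcc_subset_Icc ha hb)).intervalIntegrable
  have hsub := intervalIntegral.integral_interval_sub_left (hint h0 hs') (hint h0 hsh)
  have hdiff := intervalIntegral.integral_sub (hD.intervalIntegrable p (u s) hsh hs')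
    (hint hsh hs')
  have hshift := intervalIntegral.integral_comp_sub_left (a := 0) (b := h)
    (fun r ↦ D r (u s) - D r (u r)) s
  rw [sub_zero] at hshift
  calc _ ≤ ENNReal.ofReal (2 * ∫ τ in 0..h, (D (s - τ) (u s) - D (s - τ) (u (s - τ)))) :=
        ENNReal.ofReal_le_ofReal (by linarith [hX.norm_sq_sub_le hD hsh hs' hus])
    _ ≤ _ := by
        rw [ENNReal.ofReal_mul zero_le_two, ENNReal.ofReal_ofNat,
          intervalIntegral.integral_of_le hh, ← integral_Icc_eq_integral_Ioc]
        gcongr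
        exact (ENNReal.ofReal_le_ofReal (le_norm_self _)).trans
          (ofReal_norm _ |>.trans_le (enorm_integral_le_lintegral_enorm _))

theorem norm_sq_le_add_integral (hX : IsWeakSolution T p i D x X u) (hD : IsDrift T q i D)
    (hp : p ≠ ∞) {t : ℝ} (ht : t ∈ Icc 0 T) :
    ‖X t‖ ^ 2 ≤ ‖X 0‖ ^ 2 + 2 * ∫ r in 0..t, D r (u r) := by
  have hT : 0 ≤ T := ht.1.trans ht.2
  set P : ℝ → ℝ := fun s ↦ ‖X s‖ ^ 2 - 2 * ∫ r in 0..s, D r (u r)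
  have hP : ContinuousOn P (Icc 0 T) :=
    (hX.continuousOn.norm.pow 2).sub (continuousOn_const.mul (by
      rw [← uIcc_of_le hT]
      exact intervalIntegral.continuousOn_primitive_interval
        (by rw [uIcc_of_le hT]; exact hX.integrable_drift hD)))
  rcases ht.1.eq_or_lt with rfl | htpos
  · simp
  suffices P t ≤ P 0 by simp only [P, intervalIntegral.integral_same] at this; linarith
  refine le_of_integral_sub_comp_sub_le ht.1 (hP.mono (Icc_subset_Icc_right ht.2)) fun ε hε ↦ ?_
  filter_upwards [hX.eventually_lintegral_lintegral_drift_increment_le hD hp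
    (ENNReal.ofReal_pos.2 (half_pos hε)), Ioc_mem_nhdsGT htpos] with h hsmall ⟨hh, hht⟩
  rw [intervalIntegral.integral_of_le hht, ← integral_Icc_eq_integral_Ioc]
  refine integral_le_of_lintegral_ofReal_le (by positivity) ?_
  calc ∫⁻ s in Icc h t, ENNReal.ofReal (P s - P (s - h))
      ≤ ∫⁻ s in Icc h t, 2 * ∫⁻ τ in Icc 0 h, ‖D (s - τ) (u s) - D (s - τ) (u (s - τ))‖ₑ := by
        refine lintegral_mono_ae ?_
        filter_upwards [ae_restrict_of_ae_restrict_of_subset (Icc_subset_Icc hh.le ht.2) hX.ae_eq,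
          ae_restrict_mem measurableSet_Icc] with s hs hmem
        exact hX.ofReal_energy_sub_le hD hh.le ⟨hmem.1, hmem.2.trans ht.2⟩ hs
    _ = 2 * ∫⁻ s in Icc h t, ∫⁻ τ in Icc 0 h, ‖D (s - τ) (u s) - D (s - τ) (u (s - τ))‖ₑ :=
        lintegral_const_mul' _ _ ENNReal.ofNat_ne_top
    _ ≤ 2 * (ENNReal.ofReal (ε / 2) * ENNReal.ofReal h) := by
        gcongr
        exact (lintegral_mono_set (Icc_subset_Icc_right ht.2)).trans hsmall
    _ = ENNReal.ofReal (h * ε) := by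
        rw [← ENNReal.ofReal_mul (by positivity), ← ENNReal.ofReal_ofNat 2,
          ← ENNReal.ofReal_mul zero_le_two]
        congr 1
        ring

theorem norm_sq_add_integral_le_add_integral (hX : IsWeakSolution T p i D x X u)
    (hD : IsDrift T q i D) (hp : p ≠ ∞) {b c : ℝ → ℝ} (hb : IntegrableOn b (Icc 0 T))
    (hc : IntegrableOn c (Icc 0 T))
    (hle : ∀ᵐ r ∂volume.restrict (Icc 0 T), 2 * D r (u r) + c r ≤ b r) {t : ℝ} (ht : t ∈ Icc 0 T) :
    ‖X t‖ ^ 2 + ∫ r in 0..t, c r ≤ ‖X 0‖ ^ 2 + ∫ r in 0..t, b r := by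
  have hint {h : ℝ → ℝ} (hh : IntegrableOn h (Icc 0 T)) : IntervalIntegrable h volume 0 t :=
    (hh.mono_set (uIcc_subset_Icc ⟨le_rfl, ht.1.trans ht.2⟩ ht)).intervalIntegrable
  have hDt := (hint (hX.integrable_drift hD)).const_mul 2
  have hmono := intervalIntegral.integral_mono_ae_restrict ht.1 (hDt.add (hint hc)) (hint hb)
    (ae_restrict_of_ae_restrict_of_subset (Icc_subset_Icc_right ht.2) hle)
  rw [intervalIntegral.integral_add hDt (hint hc), intervalIntegral.integral_const_mul] at hmono
  linarith [hX.norm_sq_le_add_integral hD hp ht]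

theorem norm_sq_add_integral_le (hX : IsWeakSolution T p i D x X u) (hD : IsDrift T q i D)
    (hp : p ≠ ∞) {k c e : ℝ → ℝ} {R : ℝ} (hk : IntegrableOn k (Icc 0 T)) (hk0 : ∀ r, 0 ≤ k r)
    (hc : IntegrableOn c (Icc 0 T)) (hc0 : ∀ r, 0 ≤ c r) (he : IntegrableOn e (Icc 0 T))
    (hle : ∀ᵐ r ∂volume.restrict (Icc 0 T), 2 * D r (u r) + c r ≤ k r * ‖X r‖ ^ 2 + e r)
    (hR : ∀ t ∈ Icc 0 T, ∫ r in 0..t, e r ≤ R) {t : ℝ} (ht : t ∈ Icc 0 T) :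
    ‖X t‖ ^ 2 + ∫ r in 0..t, c r ≤ (‖X 0‖ ^ 2 + R) * exp (∫ r in Icc 0 T, k r) := by
  have hint {h : ℝ → ℝ} (hh : IntegrableOn h (Icc 0 T)) {s : ℝ} (hs : s ∈ Icc 0 T) :
      IntervalIntegrable h volume 0 s :=
    (hh.mono_set (uIcc_subset_Icc ⟨le_rfl, hs.1.trans hs.2⟩ hs)).intervalIntegrable
  have hX2 : ContinuousOn (fun s ↦ ‖X s‖ ^ 2) (Icc 0 T) := hX.continuousOn.norm.pow 2
  have hcont : ContinuousOn (fun s ↦ ‖X s‖ ^ 2 + ∫ r in 0..s, c r) (Icc 0 T) := by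
    refine hX2.add ?_
    rw [← uIcc_of_le (ht.1.trans ht.2)] at hc ⊢
    exact intervalIntegral.continuousOn_primitive_interval hc
  have hkX := hk.mul_continuousOn hX2 isCompact_Icc
  have hky := hk.mul_continuousOn hcont isCompact_Icc
  have hgronwall (s : ℝ) (hs : s ∈ Icc 0 T) : ‖X s‖ ^ 2 + ∫ r in 0..s, c r ≤
      ‖X 0‖ ^ 2 + R + ∫ r in 0..s, k r * (‖X r‖ ^ 2 + ∫ τ in 0..r, c τ) := by
    have henergy := hX.norm_sq_add_integral_le_add_integral hD hp (hkX.add he) hc hle hs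
    have hkmono : ∫ r in 0..s, k r * ‖X r‖ ^ 2 ≤
        ∫ r in 0..s, k r * (‖X r‖ ^ 2 + ∫ τ in 0..r, c τ) :=
      intervalIntegral.integral_mono_on hs.1 (hint hkX hs) (hint hky hs) fun r hr ↦ by
        have := hk0 r
        gcongr
        exact le_add_of_nonneg_right (intervalIntegral.integral_nonneg hr.1 fun τ _ ↦ hc0 τ)
    have hadd := intervalIntegral.integral_add (hint hkX hs) (hint he hs)
    simp only [Pi.add_apply] at henergy
    linarith [hR s hs]
  have hR0 : 0 ≤ R := by simpa using hR 0 ⟨le_rfl, ht.1.trans ht.2⟩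
  refine (le_mul_exp_integral_of_le_add_integral_mul ht.1 (hint hk ht) hk0 (hint hky ht)
    fun s hs ↦ hgronwall s ⟨hs.1, hs.2.trans ht.2⟩).trans ?_
  gcongr
  rw [intervalIntegral.integral_of_le ht.1]
  exact setIntegral_mono_set hk (.of_forall hk0)
    (Ioc_subset_Icc_self.trans (Icc_subset_Icc_right ht.2)).eventuallyLE

end IsWeakSolution

end Energy

section Entropy

variable {Ω E : Type*} [MeasurableSpace Ω] {μ : Measure Ω} [NormedAddCommGroup E]

/-- The class of functions that pair with all densities of finite entropy: by the Legendre duality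
between `klFun` and `exp`, they are integrable against `|g - 1|` (see
`EntropyLE.integral_norm_mul_abs_sub_one_le`). -/
structure SqExpIntegrable (h : Ω → E) (μ : Measure Ω) : Prop where
  aestronglyMeasurable : AEStronglyMeasurable h μ
  integrable {σ : ℝ} (hσ : 0 ≤ σ) : Integrable (fun ω ↦ ‖h ω‖ ^ 2 * exp (σ * ‖h ω‖)) μ

/-- The nonnegative densities `g` of entropy `∫ klFun g dμ` at most `N`: the controls `S^N`. -/
structure EntropyLE (μ : Measure Ω) (N : ℝ≥0) (g : Ω → ℝ) : Prop where
  measurable : Measurable g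
  nonneg : ∀ ω, 0 ≤ g ω
  lintegral_le : ∫⁻ ω, ENNReal.ofReal (klFun (g ω)) ∂μ ≤ N

/-- Convergence of densities of entropy at most `N`, tested on the sets of finite measure. -/
structure EntropyTendsto {ι : Type*} (μ : Measure Ω) (N : ℝ≥0) (gn : ι → Ω → ℝ) (l : Filter ι)
    (g : Ω → ℝ) : Prop where
  entropyLE (n : ι) : EntropyLE μ N (gn n)
  entropyLE_lim : EntropyLE μ N g
  tendsto_setIntegral {B : Set Ω} (hB : MeasurableSet B) (hfin : μ B ≠ ∞) :
    Tendsto (fun n ↦ ∫ ω in B, gn n ω ∂μ) l (𝓝 (∫ ω in B, g ω ∂μ))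

namespace SqExpIntegrable

theorem mono {F : Type*} [NormedAddCommGroup F] {f : Ω → F} {h : Ω → E}
    (hh : SqExpIntegrable h μ) (hf : AEStronglyMeasurable f μ) (hle : ∀ᵐ ω ∂μ, ‖f ω‖ ≤ ‖h ω‖) :
    SqExpIntegrable f μ where
  aestronglyMeasurable := hf
  integrable {σ} hσ := by
    refine (hh.integrable hσ).mono' (by have := hf.norm; fun_prop) ?_
    filter_upwards [hle] with ω hω
    rw [Real.norm_of_nonneg (by positivity)]
    gcongr

theorem const_mul {h : Ω → ℝ} (hh : SqExpIntegrable h μ) (c : ℝ) :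
    SqExpIntegrable (fun ω ↦ c * h ω) μ where
  aestronglyMeasurable := hh.aestronglyMeasurable.const_mul c
  integrable {σ} hσ := by
    refine ((hh.integrable (mul_nonneg hσ (abs_nonneg c))).const_mul (c ^ 2)).congr
      (.of_forall fun ω ↦ ?_)
    simp only [norm_mul, mul_pow, norm_eq_abs, sq_abs]
    ring_nf

theorem norm {h : Ω → E} (hh : SqExpIntegrable h μ) : SqExpIntegrable (fun ω ↦ ‖h ω‖) μ :=
  hh.mono hh.aestronglyMeasurable.norm (.of_forall fun _ ↦ (norm_norm _).le)

theorem measure_preimage_singleton_lt_top {h : Ω → E} (hh : SqExpIntegrable h μ) {b : E}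
    (hb : b ≠ 0) : μ (h ⁻¹' {b}) < ∞ := by
  have hsq : Integrable (fun ω ↦ ‖h ω‖ ^ 2) μ := by simpa using hh.integrable le_rfl
  refine (measure_mono fun ω (hω : h ω = b) ↦ ?_).trans_lt
    (hsq.measure_norm_ge_lt_top (ε := ‖b‖ ^ 2) (by positivity))
  simp [hω]

theorem tendsto_integral {h : Ω → E} {f : ℕ → Ω → E} (hh : SqExpIntegrable h μ)
    (hf : ∀ k, AEStronglyMeasurable (f k) μ) (hle : ∀ k, ∀ᵐ ω ∂μ, ‖f k ω‖ ≤ ‖h ω‖)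
    (hlim : ∀ᵐ ω ∂μ, Tendsto (f · ω) atTop (𝓝 0)) {σ : ℝ} (hσ : 0 ≤ σ) :
    Tendsto (fun k ↦ ∫ ω, ‖f k ω‖ ^ 2 * exp (σ * ‖f k ω‖) ∂μ) atTop (𝓝 0) := by
  rw [← integral_zero Ω ℝ (μ := μ)]
  refine tendsto_integral_of_dominated_convergence _
    (fun k ↦ ((hh.mono (hf k) (hle k)).integrable hσ).aestronglyMeasurable) (hh.integrable hσ)
    (fun k ↦ ?_) (hlim.mono fun ω hω ↦ ?_)
  · filter_upwards [hle k] with ω hω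
    rw [Real.norm_of_nonneg (by positivity)]
    gcongr
  · have hcont : Continuous fun e : E ↦ ‖e‖ ^ 2 * exp (σ * ‖e‖) := by fun_prop
    simpa [Function.comp_def] using (hcont.tendsto 0).comp hω

end SqExpIntegrable

theorem sq_mul_exp_le_of_le {C x σ : ℝ} (hx : 0 ≤ x) (hxC : x ≤ C) (hσ : 0 ≤ σ) :
    x ^ 2 * exp (σ * x) ≤ C * exp (σ * C) * x := by
  have hC : 0 ≤ C := hx.trans hxC
  calc x ^ 2 * exp (σ * x) = x * exp (σ * x) * x := by ring
    _ ≤ C * exp (σ * C) * x := by gcongr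

theorem sqExpIntegrable_of_norm_le {f : Ω → E} (hf : Integrable f μ) {C : ℝ}
    (hC : ∀ ω, ‖f ω‖ ≤ C) : SqExpIntegrable f μ where
  aestronglyMeasurable := hf.aestronglyMeasurable
  integrable {σ} hσ := by
    refine (hf.norm.const_mul (C * exp (σ * C))).mono'
      (by have := hf.aestronglyMeasurable.norm; fun_prop) (.of_forall fun ω ↦ ?_)
    rw [Real.norm_of_nonneg (by positivity)]
    exact sq_mul_exp_le_of_le (norm_nonneg _) (hC ω) hσ

theorem tendsto_integral_sq_mul_exp_of_norm_le {ι : Type*} {l : Filter ι} {f : ι → Ω → E}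
    (hf : ∀ k, Integrable (f k) μ) {C : ℝ} (hC : ∀ k ω, ‖f k ω‖ ≤ C)
    (hlim : Tendsto (fun k ↦ ∫ ω, ‖f k ω‖ ∂μ) l (𝓝 0)) {σ : ℝ} (hσ : 0 ≤ σ) :
    Tendsto (fun k ↦ ∫ ω, ‖f k ω‖ ^ 2 * exp (σ * ‖f k ω‖) ∂μ) l (𝓝 0) := by
  refine squeeze_zero (fun k ↦ integral_nonneg fun ω ↦ by positivity) (fun k ↦ ?_)
    (by simpa using hlim.const_mul (C * exp (σ * C)))
  rw [← integral_const_mul]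
  exact integral_mono ((sqExpIntegrable_of_norm_le (hf k) (hC k)).integrable hσ)
    ((hf k).norm.const_mul _) fun ω ↦ sq_mul_exp_le_of_le (norm_nonneg _) (hC k ω) hσ

theorem sqExpIntegrable_indicator_const {B : Set Ω} (hB : MeasurableSet B) (hfin : μ B ≠ ∞)
    (b : E) : SqExpIntegrable (B.indicator fun _ ↦ b) μ :=
  sqExpIntegrable_of_norm_le ((integrable_indicator_iff hB).2 (integrableOn_const hfin))
    fun _ ↦ norm_indicator_le_norm_self _ _

theorem sq_mul_exp_le {δ p x : ℝ} (hδ : 0 < δ) (hp : 2 ≤ p) (hx : 1 ≤ x) (σ : ℝ) :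
    x ^ 2 * exp (σ * x) ≤ exp ((σ + 2) ^ 2 / (4 * δ)) * exp (δ * x ^ p) := by
  have hsq : x ^ 2 ≤ exp (2 * x) := by
    rw [two_mul, exp_add, ← sq]
    exact pow_le_pow_left₀ (by linarith) (by linarith [add_one_le_exp x]) 2
  have hyoung : (σ + 2) * x ≤ (σ + 2) ^ 2 / (4 * δ) + δ * x ^ 2 := by
    have : 0 ≤ (2 * δ * x - (σ + 2)) ^ 2 / (4 * δ) := by positivity
    calc (σ + 2) * x ≤ (σ + 2) * x + (2 * δ * x - (σ + 2)) ^ 2 / (4 * δ) := by linarith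
      _ = _ := by field
  have hpow : x ^ 2 ≤ x ^ p := by
    rw [← rpow_natCast]
    exact rpow_le_rpow_of_exponent_le hx (by exact_mod_cast hp)
  calc x ^ 2 * exp (σ * x) ≤ exp (2 * x) * exp (σ * x) := by gcongr
    _ = exp ((σ + 2) * x) := by rw [← exp_add]; ring_nf
    _ ≤ exp ((σ + 2) ^ 2 / (4 * δ) + δ * x ^ p) := by gcongr; nlinarith
    _ = _ := exp_add _ _

theorem sqExpIntegrable_of_integrableOn_exp {h : Ω → E} (hh : StronglyMeasurable h)
    (h2 : MemLp h 2 μ) {δ p : ℝ} (hδ : 0 < δ) (hp : 2 ≤ p)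
    (hexp : IntegrableOn (fun ω ↦ exp (δ * ‖h ω‖ ^ p)) {ω | 1 ≤ ‖h ω‖} μ) :
    SqExpIntegrable h μ where
  aestronglyMeasurable := hh.aestronglyMeasurable
  integrable {σ} hσ := by
    have hlarge : MeasurableSet {ω | 1 ≤ ‖h ω‖} :=
      measurableSet_le measurable_const hh.norm.measurable
    have hmeas : Measurable fun ω ↦ ‖h ω‖ ^ 2 * exp (σ * ‖h ω‖) := by
      have := hh.norm.measurable
      fun_prop
    rw [← integrableOn_univ, ← union_compl_self {ω | 1 ≤ ‖h ω‖}]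
    refine .union ?_ ?_
    · refine (hexp.const_mul (exp ((σ + 2) ^ 2 / (4 * δ)))).mono' hmeas.aestronglyMeasurable ?_
      filter_upwards [ae_restrict_mem hlarge] with ω hω
      rw [Real.norm_of_nonneg (by positivity)]
      exact sq_mul_exp_le hδ hp hω σ
    · refine (h2.norm.integrable_sq.integrableOn.mul_const (exp σ)).mono'
        hmeas.aestronglyMeasurable ?_
      filter_upwards [ae_restrict_mem hlarge.compl] with ω hω
      rw [Real.norm_of_nonneg (by positivity)]
      gcongr
      exact mul_le_of_le_one_right hσ (le_of_not_ge hω)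

theorem sqExpIntegrable_of_setLIntegral_exp_lt_top {h : Ω → ℝ} {p : ℝ} (hm : Measurable h)
    (h0 : ∀ ω, 0 ≤ h ω) (h2 : ∫⁻ ω, ENNReal.ofReal (h ω ^ 2) ∂μ < ⊤) (hp : 2 ≤ p)
    (hexp : ∃ δ : ℝ, 0 < δ ∧ ∀ Γ : Set Ω, MeasurableSet Γ → μ Γ < ⊤ →
      ∫⁻ ω in Γ, ENNReal.ofReal (exp (δ * h ω ^ p)) ∂μ < ⊤) : SqExpIntegrable h μ := by
  obtain ⟨δ, hδ, hfin⟩ := hexp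
  have hsq : Integrable (fun ω ↦ h ω ^ 2) μ := by
    refine ⟨(hm.pow_const 2).aestronglyMeasurable, ?_⟩
    rwa [hasFiniteIntegral_iff_ofReal (.of_forall fun ω ↦ sq_nonneg _)]
  have hlarge : μ {ω | 1 ≤ h ω} < ⊤ := by
    refine (measure_mono fun ω (hω : 1 ≤ h ω) ↦ ?_).trans_lt (hsq.measure_ge_lt_top one_pos)
    exact one_le_pow₀ hω
  refine sqExpIntegrable_of_integrableOn_exp hm.stronglyMeasurable
    ((memLp_two_iff_integrable_sq hm.aestronglyMeasurable).2 hsq) hδ hp ?_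
  simp only [norm_of_nonneg (h0 _)]
  refine ⟨(by fun_prop : Measurable fun ω ↦ exp (δ * h ω ^ p)).aestronglyMeasurable, ?_⟩
  rw [hasFiniteIntegral_iff_ofReal (.of_forall fun ω ↦ (exp_pos _).le)]
  exact hfin _ (measurableSet_le measurable_const hm) hlarge

theorem entropyLE_of_lintegral_le {N : ℕ} {g : Ω → ℝ} (hg : Measurable g ∧ (∀ ω, 0 ≤ g ω) ∧
      ∫⁻ ω, ENNReal.ofReal (g ω * log (g ω) - g ω + 1) ∂μ ≤ N) : EntropyLE μ N g where
  measurable := hg.1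
  nonneg := hg.2.1
  lintegral_le := by
    simpa only [klFun, sub_add_eq_add_sub, ENNReal.coe_natCast] using hg.2.2

namespace EntropyLE

variable {N : ℝ≥0} {g : Ω → ℝ}

theorem integrable_klFun (hg : EntropyLE μ N g) : Integrable (fun ω ↦ klFun (g ω)) μ := by
  refine ⟨(measurable_klFun.comp hg.measurable).aestronglyMeasurable, ?_⟩
  rw [hasFiniteIntegral_iff_ofReal (.of_forall fun ω ↦ klFun_nonneg (hg.nonneg ω))]
  exact hg.lintegral_le.trans_lt ENNReal.coe_lt_top

theorem integral_klFun_le (hg : EntropyLE μ N g) : ∫ ω, klFun (g ω) ∂μ ≤ N :=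
  integral_le_of_lintegral_ofReal_le N.2 (by simpa using hg.lintegral_le)

theorem integrable_norm_mul_abs_sub_one (hg : EntropyLE μ N g) {h : Ω → E}
    (hh : SqExpIntegrable h μ) : Integrable (fun ω ↦ ‖h ω‖ * |g ω - 1|) μ := by
  refine (hg.integrable_klFun.div_const 1 |>.add
    ((hh.integrable zero_le_one).const_mul 1)).mono'
      (hh.aestronglyMeasurable.norm.mul (by have := hg.measurable; fun_prop)) ?_
  refine .of_forall fun ω ↦ ?_
  rw [Real.norm_of_nonneg (by positivity)]
  exact mul_abs_sub_one_le_klFun_div_add one_pos (norm_nonneg _) (hg.nonneg ω)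

theorem integral_norm_mul_abs_sub_one_le (hg : EntropyLE μ N g) {h : Ω → E}
    (hh : SqExpIntegrable h μ) {σ : ℝ} (hσ : 0 < σ) :
    ∫ ω, ‖h ω‖ * |g ω - 1| ∂μ ≤ N / σ + σ * ∫ ω, ‖h ω‖ ^ 2 * exp (σ * ‖h ω‖) ∂μ := by
  have hkl := hg.integrable_klFun.div_const σ
  have hexp := (hh.integrable hσ.le).const_mul σ
  calc ∫ ω, ‖h ω‖ * |g ω - 1| ∂μ
      ≤ ∫ ω, (klFun (g ω) / σ + σ * (‖h ω‖ ^ 2 * exp (σ * ‖h ω‖))) ∂μ :=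
        integral_mono (hg.integrable_norm_mul_abs_sub_one hh) (hkl.add hexp) fun ω ↦
          mul_abs_sub_one_le_klFun_div_add hσ (norm_nonneg _) (hg.nonneg ω)
    _ = (∫ ω, klFun (g ω) ∂μ) / σ + σ * ∫ ω, ‖h ω‖ ^ 2 * exp (σ * ‖h ω‖) ∂μ := by
        rw [integral_add hkl hexp, integral_div, integral_const_mul]
    _ ≤ _ := by
        gcongr
        exact hg.integral_klFun_le

theorem integrableOn (hg : EntropyLE μ N g) {B : Set Ω} (hB : MeasurableSet B) (hfin : μ B ≠ ∞) :
    IntegrableOn g B μ := by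
  have hind := hg.integrable_norm_mul_abs_sub_one (sqExpIntegrable_indicator_const hB hfin (1 : ℝ))
  have hsub : IntegrableOn (fun ω ↦ g ω - 1) B μ := by
    refine (integrable_indicator_iff hB).1 (hind.mono'
      ((hg.measurable.sub_const 1).indicator hB).aestronglyMeasurable (.of_forall fun ω ↦ ?_))
    by_cases hω : ω ∈ B <;> simp [hω]
  exact (hsub.add (integrableOn_const (C := (1 : ℝ)) hfin)).congr (.of_forall fun ω ↦ by simp)

theorem integrable_indicator (hg : EntropyLE μ N g) {B : Set Ω} (hB : MeasurableSet B)
    (hfin : μ B ≠ ∞) : Integrable (B.indicator g) μ :=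
  (integrable_indicator_iff hB).2 (hg.integrableOn hB hfin)

theorem integrable_mul_sub_one (hg : EntropyLE μ N g) {h : Ω → ℝ} (hh : SqExpIntegrable h μ) :
    Integrable (fun ω ↦ h ω * (g ω - 1)) μ :=
  (hg.integrable_norm_mul_abs_sub_one hh).mono'
    (hh.aestronglyMeasurable.mul (hg.measurable.sub_const 1).aestronglyMeasurable)
    (.of_forall fun ω ↦ by rw [norm_mul, norm_eq_abs (g ω - 1)])

/-- Pairing with the densities of entropy at most `N` is equicontinuous: choose `σ` first to make
`N / σ` small. -/
theorem eventually_forall_integral_norm_mul_abs_sub_one_le {ι : Type*} {l : Filter ι}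
    {h : ι → Ω → E} (hh : ∀ k, SqExpIntegrable (h k) μ)
    (hlim : ∀ σ > 0, Tendsto (fun k ↦ ∫ ω, ‖h k ω‖ ^ 2 * exp (σ * ‖h k ω‖) ∂μ) l (𝓝 0)) (N : ℝ≥0)
    {ε : ℝ} (hε : 0 < ε) :
    ∀ᶠ k in l, ∀ g, EntropyLE μ N g → ∫ ω, ‖h k ω‖ * |g ω - 1| ∂μ < ε := by
  have hσ : 0 < 2 * (N + 1) / ε := by positivity
  have hN : N / (2 * (N + 1) / ε) < ε / 2 := by
    rw [div_div_eq_mul_div, div_lt_div_iff₀ (by positivity) two_pos]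
    nlinarith
  have hsmall := ((hlim _ hσ).const_mul (2 * (N + 1) / ε)).eventually_lt_const
    (u := ε / 2) (by simpa using half_pos hε)
  filter_upwards [hsmall] with k hk g hg
  linarith [hg.integral_norm_mul_abs_sub_one_le (hh k) hσ]

theorem integral_mul_eq (hg : EntropyLE μ N g) {φ : Ω → ℝ} (hφ : Integrable φ μ)
    (hφS : SqExpIntegrable φ μ) :
    ∫ ω, φ ω * g ω ∂μ = ∫ ω, φ ω * (g ω - 1) ∂μ + ∫ ω, φ ω ∂μ := by
  rw [← integral_add (hg.integrable_mul_sub_one hφS) hφ]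
  exact integral_congr_ae (.of_forall fun ω ↦ by ring)

theorem tendsto_integral_mul_sub_one_of_approx {ι κ : Type*} {l : Filter ι} {l' : Filter κ}
    [l'.NeBot] {gn : ι → Ω → ℝ} (hgn : ∀ n, EntropyLE μ N (gn n)) (hg : EntropyLE μ N g)
    {φ : Ω → ℝ} (hφ : SqExpIntegrable φ μ) {ψ : κ → Ω → ℝ} (hψ : ∀ k, SqExpIntegrable (ψ k) μ)
    (hsub : ∀ k, SqExpIntegrable (fun ω ↦ φ ω - ψ k ω) μ)
    (hlim : ∀ σ > 0,
      Tendsto (fun k ↦ ∫ ω, ‖φ ω - ψ k ω‖ ^ 2 * exp (σ * ‖φ ω - ψ k ω‖) ∂μ) l' (𝓝 0))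
    (hconv : ∀ k, Tendsto (fun n ↦ ∫ ω, ψ k ω * (gn n ω - 1) ∂μ) l
      (𝓝 (∫ ω, ψ k ω * (g ω - 1) ∂μ))) :
    Tendsto (fun n ↦ ∫ ω, φ ω * (gn n ω - 1) ∂μ) l (𝓝 (∫ ω, φ ω * (g ω - 1) ∂μ)) := by
  refine Metric.tendsto_nhds.2 fun ε hε ↦ ?_
  obtain ⟨k, hk⟩ := (eventually_forall_integral_norm_mul_abs_sub_one_le hsub hlim N
    (ε := ε / 3) (by positivity)).exists
  have happrox {γ : Ω → ℝ} (hγ : EntropyLE μ N γ) :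
      |∫ ω, φ ω * (γ ω - 1) ∂μ - ∫ ω, ψ k ω * (γ ω - 1) ∂μ| < ε / 3 := by
    rw [← integral_sub (hγ.integrable_mul_sub_one hφ) (hγ.integrable_mul_sub_one (hψ k))]
    refine abs_integral_le_integral_abs.trans_lt (lt_of_eq_of_lt ?_ (hk γ hγ))
    simp only [← sub_mul, abs_mul, norm_eq_abs]
  filter_upwards [Metric.tendsto_nhds.1 (hconv k) (ε / 3) (by positivity)] with n hn
  rw [dist_eq, abs_lt] at hn ⊢
  have happrox_n := abs_lt.1 (happrox (hgn n))
  have happrox_g := abs_lt.1 (happrox hg)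
  constructor <;> linarith

end EntropyLE

end Entropy

section VagueConvergence

variable {Ω : Type*} [TopologicalSpace Ω] [NormalSpace Ω] [R1Space Ω] [WeaklyLocallyCompactSpace Ω]
  [MeasurableSpace Ω] [BorelSpace Ω] {μ : Measure Ω} [μ.Regular] {B : Set Ω}

theorem exists_hasCompactSupport_integral_abs_indicator_sub_le (hB : MeasurableSet B)
    (hfin : μ B ≠ ∞) {ε : ℝ} (hε : 0 < ε) :
    ∃ ψ : Ω → ℝ, Continuous ψ ∧ HasCompactSupport ψ ∧
      (∀ ω, |B.indicator 1 ω - ψ ω| ≤ 1) ∧ ∫ ω, |B.indicator 1 ω - ψ ω| ∂μ ≤ ε := by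
  have hind : Integrable (B.indicator (1 : Ω → ℝ)) μ :=
    (integrable_indicator_iff hB).2 (integrableOn_const hfin)
  obtain ⟨ψ, hψsupp, hψε, hψcont, hψint⟩ := hind.exists_hasCompactSupport_integral_sub_le hε
  have hclampcont : Continuous fun ω ↦ max 0 (min 1 (ψ ω)) := by fun_prop
  have hclampsupp : HasCompactSupport fun ω ↦ max 0 (min 1 (ψ ω)) :=
    hψsupp.comp_left (g := fun x : ℝ ↦ max 0 (min 1 x)) (by simp)
  have hle (ω : Ω) : |B.indicator 1 ω - max 0 (min 1 (ψ ω))| ≤ |B.indicator 1 ω - ψ ω| := by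
    by_cases hω : ω ∈ B <;> simp only [hω, indicator_of_mem, indicator_of_notMem, not_false_eq_true,
      Pi.one_apply] <;> grind
  have hle_one (ω : Ω) : |B.indicator 1 ω - max 0 (min 1 (ψ ω))| ≤ 1 := by
    by_cases hω : ω ∈ B <;> simp only [hω, indicator_of_mem, indicator_of_notMem, not_false_eq_true,
      Pi.one_apply] <;> grind
  refine ⟨_, hclampcont, hclampsupp, hle_one, le_trans ?_ hψε⟩
  exact integral_mono (hind.sub (hclampcont.integrable_of_hasCompactSupport hclampsupp)).abs
    (hind.sub hψint).abs hle

variable {ι : Type*} {l : Filter ι} {N : ℝ≥0} {gn : ι → Ω → ℝ} {g : Ω → ℝ}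

/-- Vague convergence of densities is tested on continuous functions of compact support; entropy
bounds upgrade the test functions to indicators, because these are approximated by continuous
functions uniformly in the density. -/
theorem entropyTendsto_of_tendsto_integral_mul (hgn : ∀ n, EntropyLE μ N (gn n))
    (hg : EntropyLE μ N g) (hconv : ∀ φ : Ω → ℝ, Continuous φ → HasCompactSupport φ →
      Tendsto (fun n ↦ ∫ ω, φ ω * gn n ω ∂μ) l (𝓝 (∫ ω, φ ω * g ω ∂μ))) :
    EntropyTendsto μ N gn l g := by
  refine ⟨hgn, hg, fun {B} hB hfin ↦ ?_⟩
  choose ψ hψcont hψsupp hψ1 hψε using fun k : ℕ ↦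
    exists_hasCompactSupport_integral_abs_indicator_sub_le hB hfin (Nat.one_div_pos_of_nat (n := k))
  have hind : Integrable (B.indicator (1 : Ω → ℝ)) μ :=
    (integrable_indicator_iff hB).2 (integrableOn_const hfin)
  have hindS : SqExpIntegrable (B.indicator (1 : Ω → ℝ)) μ :=
    sqExpIntegrable_indicator_const hB hfin 1
  have hψ (k : ℕ) : Integrable (ψ k) μ := (hψcont k).integrable_of_hasCompactSupport (hψsupp k)
  have hψS (k : ℕ) : SqExpIntegrable (ψ k) μ :=
    let ⟨_, hC⟩ := (hψsupp k).exists_bound_of_continuous (hψcont k)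
    sqExpIntegrable_of_norm_le (hψ k) hC
  have hset {γ : Ω → ℝ} (hγ : EntropyLE μ N γ) :
      ∫ ω in B, γ ω ∂μ = ∫ ω, B.indicator 1 ω * (γ ω - 1) ∂μ + ∫ ω, B.indicator 1 ω ∂μ := by
    rw [← hγ.integral_mul_eq hind hindS, ← integral_indicator hB]
    exact integral_congr_ae (.of_forall fun ω ↦ by by_cases hω : ω ∈ B <;> simp [hω])
  simp only [hset hg, hset (hgn _)]
  refine .add_const _ (EntropyLE.tendsto_integral_mul_sub_one_of_approx (l' := atTop) hgn hg hindS
    hψS (fun k ↦ sqExpIntegrable_of_norm_le (hind.sub (hψ k)) (hψ1 k)) (fun σ hσ ↦ ?_) fun k ↦ ?_)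
  · exact tendsto_integral_sq_mul_exp_of_norm_le (fun k ↦ hind.sub (hψ k)) hψ1
      (squeeze_zero (fun k ↦ integral_nonneg fun ω ↦ norm_nonneg _) hψε
        tendsto_one_div_add_atTop_nhds_zero_nat) hσ.le
  · have := (hconv _ (hψcont k) (hψsupp k)).sub_const (∫ ω, ψ k ω ∂μ)
    simpa only [(hgn _).integral_mul_eq (hψ k) (hψS k), hg.integral_mul_eq (hψ k) (hψS k),
      add_sub_cancel_right] using this

end VagueConvergence

section SpaceTime

/-- The measure `ν_T = λ_T ⊗ ν`, carried by `[0, T] × 𝕏` but defined on `ℝ × 𝕏`. -/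
noncomputable abbrev spaceTime {𝕏 : Type*} [MeasurableSpace 𝕏] (T : ℝ) (ν : Measure 𝕏) :
    Measure (ℝ × 𝕏) :=
  (volume.restrict (Icc 0 T)).prod ν

/-- A family of continuous paths on `[0, T]` which is bounded by `M` and, tested against each
vector of `D`, of bounded variation uniformly in the family. The variation is encoded by an
integrable derivative. -/
structure IsWeaklyEquiBV {ι H : Type*} [NormedAddCommGroup H] [InnerProductSpace ℝ H] (T M : ℝ)
    (D : Set H) (w : ι → ℝ → H) : Prop where
  continuousOn (n : ι) : ContinuousOn (w n) (Icc 0 T)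
  norm_le (n : ι) : ∀ s ∈ Icc 0 T, ‖w n s‖ ≤ M
  exists_primitive {b : H} (hb : b ∈ D) : ∃ c, ∀ n, ∃ a : ℝ → ℝ, IntervalIntegrable a volume 0 T ∧
    ∫ r in 0..T, |a r| ≤ c ∧ ∀ s ∈ Icc 0 T, ⟪b, w n s⟫ = ∫ r in 0..s, a r

variable {𝕏 H : Type*} [MeasurableSpace 𝕏] [NormedAddCommGroup H] [InnerProductSpace ℝ H]
  {ν : Measure 𝕏} {T M : ℝ}

section Pairing

variable {N : ℝ≥0} {g₁ g₂ : ℝ × 𝕏 → ℝ} {φ : ℝ × 𝕏 → H} {w : ℝ → H}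

theorem ae_abs_inner_mul_sub_le (hM : ∀ s ∈ Icc 0 T, ‖w s‖ ≤ M) :
    ∀ᵐ q ∂spaceTime T ν, |⟪φ q, w q.1⟫ * (g₁ q - g₂ q)|
      ≤ M * (‖φ q‖ * |g₁ q - 1| + ‖φ q‖ * |g₂ q - 1|) := by
  filter_upwards [Measure.quasiMeasurePreserving_fst.ae (ae_restrict_mem measurableSet_Icc)]
    with q hq
  have hinner : |⟪φ q, w q.1⟫| ≤ M * ‖φ q‖ :=
    (abs_real_inner_le_norm _ _).trans (by rw [mul_comm]; gcongr; exact hM _ hq)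
  have hsub : |g₁ q - g₂ q| ≤ |g₁ q - 1| + |g₂ q - 1| := by
    simpa only [abs_sub_comm 1 (g₂ q)] using abs_sub_le (g₁ q) 1 (g₂ q)
  calc |⟪φ q, w q.1⟫ * (g₁ q - g₂ q)| ≤ M * ‖φ q‖ * (|g₁ q - 1| + |g₂ q - 1|) := by
        rw [abs_mul]
        gcongr
        exact (abs_nonneg _).trans hinner
    _ = _ := by ring

theorem EntropyLE.integrable_inner_mul_sub (hg₁ : EntropyLE (spaceTime T ν) N g₁)
    (hg₂ : EntropyLE (spaceTime T ν) N g₂) (hφ : SqExpIntegrable φ (spaceTime T ν))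
    (hw : ContinuousOn w (Icc 0 T)) (hM : ∀ s ∈ Icc 0 T, ‖w s‖ ≤ M) :
    Integrable (fun q ↦ ⟪φ q, w q.1⟫ * (g₁ q - g₂ q)) (spaceTime T ν) := by
  refine (((hg₁.integrable_norm_mul_abs_sub_one hφ).add
    (hg₂.integrable_norm_mul_abs_sub_one hφ)).const_mul M).mono' ?_ (ae_abs_inner_mul_sub_le hM)
  exact (hφ.aestronglyMeasurable.inner
    (hw.aestronglyMeasurable measurableSet_Icc).comp_fst).mul
    (hg₁.measurable.sub hg₂.measurable).aestronglyMeasurable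

theorem EntropyLE.abs_setIntegral_inner_mul_sub_le (hg₁ : EntropyLE (spaceTime T ν) N g₁)
    (hg₂ : EntropyLE (spaceTime T ν) N g₂) (hφ : SqExpIntegrable φ (spaceTime T ν))
    (hw : ContinuousOn w (Icc 0 T)) (hM : ∀ s ∈ Icc 0 T, ‖w s‖ ≤ M) (S : Set (ℝ × 𝕏)) :
    |∫ q in S, ⟪φ q, w q.1⟫ * (g₁ q - g₂ q) ∂spaceTime T ν|
      ≤ M * (∫ q, ‖φ q‖ * |g₁ q - 1| ∂spaceTime T ν + ∫ q, ‖φ q‖ * |g₂ q - 1| ∂spaceTime T ν) := by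
  have hint := (hg₁.integrable_inner_mul_sub hg₂ hφ hw hM).abs
  have hint₁ := hg₁.integrable_norm_mul_abs_sub_one hφ
  have hint₂ := hg₂.integrable_norm_mul_abs_sub_one hφ
  calc |∫ q in S, ⟪φ q, w q.1⟫ * (g₁ q - g₂ q) ∂spaceTime T ν|
      ≤ ∫ q in S, |⟪φ q, w q.1⟫ * (g₁ q - g₂ q)| ∂spaceTime T ν := abs_integral_le_integral_abs
    _ ≤ ∫ q, |⟪φ q, w q.1⟫ * (g₁ q - g₂ q)| ∂spaceTime T ν :=
        setIntegral_le_integral hint (.of_forall fun _ ↦ abs_nonneg _)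
    _ ≤ ∫ q, M * (‖φ q‖ * |g₁ q - 1| + ‖φ q‖ * |g₂ q - 1|) ∂spaceTime T ν :=
        integral_mono_ae hint ((hint₁.add hint₂).const_mul M) (ae_abs_inner_mul_sub_le hM)
    _ = _ := by rw [integral_const_mul, integral_add hint₁ hint₂]

end Pairing

variable {ι : Type*} {l : Filter ι} {N : ℝ≥0} {gn : ι → ℝ × 𝕏 → ℝ} {g : ℝ × 𝕏 → ℝ}

namespace IsWeaklyEquiBV

variable {D : Set H} {w : ι → ℝ → H}

theorem tendstoUniformlyOn_setIntegral_of_approx (hw : IsWeaklyEquiBV T M D w)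
    (hg : EntropyTendsto (spaceTime T ν) N gn l g) {φ : ℝ × 𝕏 → H} {ψ : ℕ → ℝ × 𝕏 → H}
    (hψ : ∀ k, SqExpIntegrable (ψ k) (spaceTime T ν))
    (hsub : ∀ k, SqExpIntegrable (fun q ↦ φ q - ψ k q) (spaceTime T ν))
    (hlim : ∀ σ > 0, Tendsto (fun k ↦ ∫ q, ‖φ q - ψ k q‖ ^ 2 * exp (σ * ‖φ q - ψ k q‖)
      ∂spaceTime T ν) atTop (𝓝 0))
    (hconv : ∀ k, TendstoUniformlyOn (fun n t ↦ ∫ q in Icc 0 t ×ˢ univ,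
      ⟪ψ k q, w n q.1⟫ * (gn n q - g q) ∂spaceTime T ν) 0 l (Icc 0 T)) :
    TendstoUniformlyOn (fun n t ↦ ∫ q in Icc 0 t ×ˢ univ,
      ⟪φ q, w n q.1⟫ * (gn n q - g q) ∂spaceTime T ν) 0 l (Icc 0 T) := by
  refine Metric.tendstoUniformlyOn_iff.2 fun ε hε ↦ ?_
  obtain ⟨k, hk⟩ := (EntropyLE.eventually_forall_integral_norm_mul_abs_sub_one_le hsub hlim N
    (ε := ε / (4 * (|M| + 1))) (by positivity)).exists
  filter_upwards [Metric.tendstoUniformlyOn_iff.1 (hconv k) (ε / 2) (by positivity)] with n hn t ht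
  have hgn := hg.entropyLE n
  have hint {f : ℝ × 𝕏 → H} (hf : SqExpIntegrable f (spaceTime T ν)) :=
    (hgn.integrable_inner_mul_sub hg.entropyLE_lim hf (hw.continuousOn n)
      (hw.norm_le n)).integrableOn (s := Icc 0 t ×ˢ univ)
  have hsplit : ∫ q in Icc 0 t ×ˢ univ, ⟪φ q, w n q.1⟫ * (gn n q - g q) ∂spaceTime T ν =
      ∫ q in Icc 0 t ×ˢ univ, ⟪ψ k q, w n q.1⟫ * (gn n q - g q) ∂spaceTime T ν +
      ∫ q in Icc 0 t ×ˢ univ, ⟪φ q - ψ k q, w n q.1⟫ * (gn n q - g q) ∂spaceTime T ν := by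
    rw [← integral_add (hint (hψ k)) (hint (hsub k))]
    congr! 2
    rw [inner_sub_left]
    ring
  have herror := calc
    |∫ q in Icc 0 t ×ˢ univ, ⟪φ q - ψ k q, w n q.1⟫ * (gn n q - g q) ∂spaceTime T ν|
      ≤ M * (∫ q, ‖φ q - ψ k q‖ * |gn n q - 1| ∂spaceTime T ν +
          ∫ q, ‖φ q - ψ k q‖ * |g q - 1| ∂spaceTime T ν) :=
        hgn.abs_setIntegral_inner_mul_sub_le hg.entropyLE_lim (hsub k) (hw.continuousOn n)
          (hw.norm_le n) _
    _ ≤ (|M| + 1) * (ε / (4 * (|M| + 1)) + ε / (4 * (|M| + 1))) := by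
        gcongr
        · exact (le_abs_self M).trans (le_add_of_nonneg_right zero_le_one)
        · exact (hk _ hgn).le
        · exact (hk _ hg.entropyLE_lim).le
    _ = ε / 2 := by field
  have hmain := hn t ht
  simp only [Pi.zero_apply, dist_zero_left, norm_eq_abs] at hmain ⊢
  rw [hsplit]
  exact (abs_add_le _ _).trans_lt (by linarith)

end IsWeaklyEquiBV

variable [SFinite ν]

theorem setIntegral_Icc_prod_univ {F : ℝ × 𝕏 → ℝ} (hF : Integrable F (spaceTime T ν)) {t : ℝ}
    (ht : t ∈ Icc 0 T) :
    ∫ q in Icc 0 t ×ˢ univ, F q ∂spaceTime T ν = ∫ s in 0..t, ∫ z, F (s, z) ∂ν := by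
  rw [setIntegral_prod _ hF.integrableOn, Measure.restrict_univ,
    Measure.restrict_restrict measurableSet_Icc, inter_eq_left.2 (Icc_subset_Icc le_rfl ht.2),
    intervalIntegral.integral_of_le ht.1, integral_Icc_eq_integral_Ioc]

theorem intervalIntegrable_integral_prod {F : ℝ × 𝕏 → ℝ} (hF : Integrable F (spaceTime T ν))
    {s t : ℝ} (hs : s ∈ Icc 0 T) (ht : t ∈ Icc 0 T) :
    IntervalIntegrable (fun s ↦ ∫ z, F (s, z) ∂ν) volume s t :=
  (IntegrableOn.mono_set hF.integral_prod_left (uIcc_subset_Icc hs ht)).intervalIntegrable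

theorem continuousOn_setIntegral_Icc_prod_univ {F : ℝ × 𝕏 → ℝ} (hF : Integrable F (spaceTime T ν)) :
    ContinuousOn (fun t ↦ ∫ q in Icc 0 t ×ˢ univ, F q ∂spaceTime T ν) (Icc 0 T) := by
  refine ContinuousOn.congr ?_ fun t ht ↦ setIntegral_Icc_prod_univ hF ht
  rcases le_or_gt 0 T with hT | hT
  · rw [← uIcc_of_le hT]
    exact intervalIntegral.continuousOn_primitive_interval
      (by rw [uIcc_of_le hT]; exact hF.integral_prod_left)
  · simp [Icc_eq_empty_of_lt hT]

variable {B : Set (ℝ × 𝕏)}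

theorem EntropyTendsto.tendstoUniformlyOn_setIntegral_Icc_prod_univ
    (hg : EntropyTendsto (spaceTime T ν) N gn l g) (hB : MeasurableSet B)
    (hfin : spaceTime T ν B ≠ ∞) :
    TendstoUniformlyOn (fun n t ↦ ∫ q in Icc 0 t ×ˢ univ, B.indicator (gn n) q ∂spaceTime T ν)
      (fun t ↦ ∫ q in Icc 0 t ×ˢ univ, B.indicator g q ∂spaceTime T ν) l (Icc 0 T) := by
  refine tendstoUniformlyOn_Icc_of_monotoneOn (fun n r _ t _ hrt ↦ ?_)
    (continuousOn_setIntegral_Icc_prod_univ (hg.entropyLE_lim.integrable_indicator hB hfin))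
    fun t _ ↦ ?_
  · refine setIntegral_mono_set ((hg.entropyLE n).integrable_indicator hB hfin).integrableOn
      (.of_forall fun q ↦ indicator_nonneg (fun q _ ↦ (hg.entropyLE n).nonneg q) q) ?_
    exact (prod_mono_left (Icc_subset_Icc_right hrt)).eventuallyLE
  · simp only [setIntegral_indicator hB]
    exact hg.tendsto_setIntegral ((measurableSet_Icc.prod .univ).inter hB)
      (measure_inter_ne_top_of_right_ne_top hfin)

section Pairing

variable {g₁ g₂ : ℝ × 𝕏 → ℝ} {w : ℝ → H}

theorem EntropyLE.setIntegral_Icc_prod_univ_indicator_inner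
    (hg₁ : EntropyLE (spaceTime T ν) N g₁) (hg₂ : EntropyLE (spaceTime T ν) N g₂)
    (hw : ContinuousOn w (Icc 0 T)) (hM : ∀ s ∈ Icc 0 T, ‖w s‖ ≤ M) (hB : MeasurableSet B)
    (hfin : spaceTime T ν B ≠ ∞) (b : H) {t : ℝ} (ht : t ∈ Icc 0 T) :
    ∫ q in Icc 0 t ×ˢ univ, ⟪B.indicator (fun _ ↦ b) q, w q.1⟫ * (g₁ q - g₂ q) ∂spaceTime T ν =
      ∫ s in 0..t, ⟪b, w s⟫ * ∫ z, (B.indicator g₁ - B.indicator g₂) (s, z) ∂ν := by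
  rw [setIntegral_Icc_prod_univ
    (hg₁.integrable_inner_mul_sub hg₂ (sqExpIntegrable_indicator_const hB hfin b) hw hM) ht]
  refine intervalIntegral.integral_congr fun s _ ↦ ?_
  rw [← integral_const_mul]
  refine integral_congr_ae (.of_forall fun z ↦ ?_)
  by_cases hz : (s, z) ∈ B <;> simp [hz]

end Pairing

namespace IsWeaklyEquiBV

variable {D : Set H} {w : ι → ℝ → H}

/-- For a fixed vector `b`, the pairing is the integral of a function of bounded variation against
the difference of the densities; integrate by parts. -/
theorem tendstoUniformlyOn_setIntegral_indicator (hw : IsWeaklyEquiBV T M D w)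
    (hg : EntropyTendsto (spaceTime T ν) N gn l g) (hB : MeasurableSet B)
    (hfin : spaceTime T ν B ≠ ∞) {b : H} (hb : b ∈ D) :
    TendstoUniformlyOn (fun n t ↦ ∫ q in Icc 0 t ×ˢ univ,
      ⟪B.indicator (fun _ ↦ b) q, w n q.1⟫ * (gn n q - g q) ∂spaceTime T ν) 0 l (Icc 0 T) := by
  obtain ⟨c, hc⟩ := hw.exists_primitive hb
  have hdensity := hg.tendstoUniformlyOn_setIntegral_Icc_prod_univ hB hfin
  refine Metric.tendstoUniformlyOn_iff.2 fun ε hε ↦ ?_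
  filter_upwards [Metric.tendstoUniformlyOn_iff.1 hdensity (ε / (2 * (|c| + 1))) (by positivity)]
    with n hn t ht
  obtain ⟨a, ha, hac, hab⟩ := hc n
  have hT : (0 : ℝ) ∈ Icc 0 T := ⟨le_rfl, ht.1.trans ht.2⟩
  have hprim : ∀ s ∈ uIcc 0 t, ⟪b, w n s⟫ = ∫ r in 0..s, a r := fun s hs ↦
    hab s (uIcc_subset_Icc hT ht hs)
  have hBn := (hg.entropyLE n).integrable_indicator hB hfin
  have hBg := hg.entropyLE_lim.integrable_indicator hB hfin
  rw [Pi.zero_apply, dist_zero_left, norm_eq_abs,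
    (hg.entropyLE n).setIntegral_Icc_prod_univ_indicator_inner hg.entropyLE_lim (hw.continuousOn n)
      (hw.norm_le n) hB hfin b ht,
    intervalIntegral.integral_congr fun s hs ↦ congrArg (· * _) (hprim s hs)]
  refine (abs_integral_primitive_mul_le (c := |c|) (d := ε / (2 * (|c| + 1))) ht.1 ?_
    (intervalIntegrable_integral_prod (hBn.sub hBg) hT ht) ?_ fun s hs ↦ ?_).trans_lt ?_
  · exact ha.mono_set (uIcc_subset_uIcc_left (by rwa [uIcc_of_le hT.2]))
  · exact (intervalIntegral.integral_mono_interval le_rfl ht.1 ht.2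
      (.of_forall fun _ ↦ abs_nonneg _) ha.abs).trans (hac.trans (le_abs_self c))
  · have hs' : s ∈ Icc 0 T := ⟨hs.1, hs.2.trans ht.2⟩
    rw [← setIntegral_Icc_prod_univ (hBn.sub hBg) hs', Pi.sub_def,
      integral_sub hBn.integrableOn hBg.integrableOn, abs_sub_comm, ← dist_eq]
    exact (hn s hs').le
  · rw [mul_div_assoc', div_lt_iff₀ (by positivity)]
    linarith

theorem tendstoUniformlyOn_setIntegral_simpleFunc (hw : IsWeaklyEquiBV T M D w)
    (hg : EntropyTendsto (spaceTime T ν) N gn l g) (φ : SimpleFunc (ℝ × 𝕏) H)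
    (hφD : ∀ q, φ q ∈ insert 0 D) (hφ : SqExpIntegrable φ (spaceTime T ν)) :
    TendstoUniformlyOn (fun n t ↦ ∫ q in Icc 0 t ×ˢ univ,
      ⟪φ q, w n q.1⟫ * (gn n q - g q) ∂spaceTime T ν) 0 l (Icc 0 T) := by
  induction φ using SimpleFunc.induction with
  | @const b B hB =>
    have hφ_eq : (SimpleFunc.piecewise B hB (.const _ b) (.const _ 0) : ℝ × 𝕏 → H) =
        B.indicator fun _ ↦ b := rfl
    rw [hφ_eq] at hφ hφD ⊢
    by_cases hb : b ∈ D ∧ b ≠ 0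
    · refine hw.tendstoUniformlyOn_setIntegral_indicator hg hB (ne_top_of_le_ne_top
        (hφ.measure_preimage_singleton_lt_top hb.2).ne (measure_mono fun q hq ↦ ?_)) hb.1
      simp [hq]
    · have hzero (q : ℝ × 𝕏) : B.indicator (fun _ ↦ b) q = 0 := by
        by_contra hq
        have hqB : q ∈ B := mem_of_indicator_ne_zero hq
        have := hφD q
        simp_all
      exact fun u hu ↦ .of_forall fun n t _ ↦ by simp [hzero, refl_mem_uniformity hu]
  | @add f₁ f₂ hdisj h₁ h₂ =>
    have hzero (q : ℝ × 𝕏) : f₁ q = 0 ∨ f₂ q = 0 := by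
      by_contra! hq
      exact disjoint_left.1 hdisj hq.1 hq.2
    have hf₁ : SqExpIntegrable f₁ (spaceTime T ν) := hφ.mono f₁.aestronglyMeasurable
      (.of_forall fun q ↦ by rcases hzero q with hq | hq <;> simp [hq])
    have hf₂ : SqExpIntegrable f₂ (spaceTime T ν) := hφ.mono f₂.aestronglyMeasurable
      (.of_forall fun q ↦ by rcases hzero q with hq | hq <;> simp [hq])
    have hint {f : ℝ × 𝕏 → H} (hf : SqExpIntegrable f (spaceTime T ν)) (n : ι) :=
      (hg.entropyLE n).integrable_inner_mul_sub hg.entropyLE_lim hf (hw.continuousOn n)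
        (hw.norm_le n)
    have hmem {a b : H} (hab : a = 0 ∨ b = 0) (hD : a + b ∈ insert 0 D) : a ∈ insert 0 D := by
      rcases hab with rfl | rfl
      · exact mem_insert _ _
      · rwa [add_zero] at hD
    have hsum := (h₁ (fun q ↦ hmem (hzero q) (hφD q)) hf₁).add
      (h₂ (fun q ↦ hmem (hzero q).symm (add_comm (f₁ q) _ ▸ hφD q)) hf₂)
    rw [add_zero] at hsum
    refine hsum.congr (.of_forall fun n t _ ↦ ?_)
    simp only [Pi.add_apply, SimpleFunc.coe_add, inner_add_left, add_mul]
    exact (integral_add (hint hf₁ n).integrableOn (hint hf₂ n).integrableOn).symm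

theorem tendstoUniformlyOn_setIntegral (hw : IsWeaklyEquiBV T M D w)
    (hg : EntropyTendsto (spaceTime T ν) N gn l g) [MeasurableSpace H] [BorelSpace H]
    [SecondCountableTopology H] (hD : Dense D) {φ : ℝ × 𝕏 → H} (hφm : Measurable φ)
    (hφ : SqExpIntegrable φ (spaceTime T ν)) :
    TendstoUniformlyOn (fun n t ↦ ∫ q in Icc 0 t ×ˢ univ,
      ⟪φ q, w n q.1⟫ * (gn n q - g q) ∂spaceTime T ν) 0 l (Icc 0 T) := by
  have h0 : (0 : H) ∈ insert 0 D := mem_insert _ _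
  let ψ := SimpleFunc.approxOn φ hφm (insert 0 D) 0 h0
  have hψ_lim (q : ℝ × 𝕏) : Tendsto (ψ · q) atTop (𝓝 (φ q)) :=
    SimpleFunc.tendsto_approxOn hφm h0 (closure_mono (subset_insert _ _) (hD _))
  have hψ (k : ℕ) : SqExpIntegrable (ψ k) (spaceTime T ν) := by
    refine SqExpIntegrable.mono (hφ.norm.const_mul 2) (ψ k).aestronglyMeasurable
      (.of_forall fun q ↦ ?_)
    rw [norm_eq_abs, abs_of_nonneg (by positivity), two_mul]
    exact SimpleFunc.norm_approxOn_zero_le hφm h0 q k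
  have hsub_le (k : ℕ) (q : ℝ × 𝕏) : ‖φ q - ψ k q‖ ≤ ‖φ q‖ := by
    have := SimpleFunc.edist_approxOn_le hφm h0 q k
    rwa [edist_comm, edist_comm 0, edist_eq_enorm_sub, edist_zero_right,
      enorm_le_iff_norm_le] at this
  have hsub (k : ℕ) : SqExpIntegrable (fun q ↦ φ q - ψ k q) (spaceTime T ν) :=
    hφ.mono (hφm.sub (ψ k).measurable).aestronglyMeasurable (.of_forall (hsub_le k))
  exact hw.tendstoUniformlyOn_setIntegral_of_approx hg hψ hsub
    (fun σ hσ ↦ hφ.tendsto_integral (fun k ↦ (hsub k).aestronglyMeasurable)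
      (fun k ↦ .of_forall (hsub_le k))
      (.of_forall fun q ↦ by simpa using (hψ_lim q).const_sub (φ q)) hσ.le)
    fun k ↦ hw.tendstoUniformlyOn_setIntegral_simpleFunc hg (ψ k)
      (SimpleFunc.approxOn_mem hφm h0 k) (hψ k)

end IsWeaklyEquiBV

end SpaceTime

section Control

variable {𝕏 E F H V : Type*} [MeasurableSpace 𝕏] [NormedAddCommGroup E] [NormedAddCommGroup F]
  [NormedAddCommGroup H]
  [InnerProductSpace ℝ H] [NormedAddCommGroup V] [NormedSpace ℝ V]

/-- The intensity `∫ ‖h(r,z)‖ |g(r,z) - 1| ν(dz)` with which the control `g` acts at time `r`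
through a noise coefficient `h`. -/
noncomputable def controlWeight (ν : Measure 𝕏) (h : ℝ × 𝕏 → E) (g : ℝ × 𝕏 → ℝ) (r : ℝ) : ℝ :=
  ∫ z, ‖h (r, z)‖ * |g (r, z) - 1| ∂ν

/-- The weak form `y ↦ ∫ ⟨φ(r,z), y⟩ (g(r,z) - 1) ν(dz)` of the drift which the control `g` exerts
at time `r` through a noise coefficient `φ`. -/
noncomputable def controlDrift (ν : Measure 𝕏) (φ : ℝ × 𝕏 → H) (g : ℝ × 𝕏 → ℝ) (r : ℝ) (y : H) :
    ℝ :=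
  ∫ z, ⟪φ (r, z), y⟫ * (g (r, z) - 1) ∂ν

variable {ν : Measure 𝕏} {T : ℝ} {N : ℝ≥0} {h : ℝ × 𝕏 → E} {k : ℝ × 𝕏 → F} {φ φ₁ φ₂ : ℝ × 𝕏 → H}
  {g g₁ g₂ : ℝ × 𝕏 → ℝ}

theorem controlWeight_nonneg (r : ℝ) : 0 ≤ controlWeight ν h g r :=
  integral_nonneg fun _ ↦ by positivity

variable [SFinite ν]

theorem exists_forall_integral_controlWeight_le (hh : SqExpIntegrable h (spaceTime T ν)) (N : ℝ≥0) :
    ∃ S, ∀ g, EntropyLE (spaceTime T ν) N g → ∫ r in Icc 0 T, controlWeight ν h g r ≤ S := by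
  refine ⟨N / 1 + 1 * ∫ q, ‖h q‖ ^ 2 * exp (1 * ‖h q‖) ∂spaceTime T ν, fun g hg ↦ ?_⟩
  simpa only [controlWeight, integral_prod _ (hg.integrable_norm_mul_abs_sub_one hh)] using
    hg.integral_norm_mul_abs_sub_one_le hh one_pos

namespace EntropyLE

theorem integrableOn_controlWeight (hg : EntropyLE (spaceTime T ν) N g)
    (hh : SqExpIntegrable h (spaceTime T ν)) : IntegrableOn (controlWeight ν h g) (Icc 0 T) :=
  (hg.integrable_norm_mul_abs_sub_one hh).integral_prod_left

theorem ae_controlWeight_le (hg : EntropyLE (spaceTime T ν) N g)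
    (hh : SqExpIntegrable h (spaceTime T ν)) {c : ℝ → ℝ}
    (hle : ∀ r ∈ Icc 0 T, ∀ z, ‖k (r, z)‖ ≤ ‖h (r, z)‖ * c r) :
    ∀ᵐ r ∂volume.restrict (Icc 0 T), controlWeight ν k g r ≤ c r * controlWeight ν h g r := by
  filter_upwards [(hg.integrable_norm_mul_abs_sub_one hh).prod_right_ae,
    ae_restrict_mem measurableSet_Icc] with r hr hmem
  rw [controlWeight, controlWeight, ← integral_const_mul]
  refine integral_mono_of_nonneg (.of_forall fun z ↦ by positivity) (hr.const_mul _)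
    (.of_forall fun z ↦ ?_)
  calc ‖k (r, z)‖ * |g (r, z) - 1| ≤ ‖h (r, z)‖ * c r * |g (r, z) - 1| := by
        gcongr
        exact hle r hmem z
    _ = c r * (‖h (r, z)‖ * |g (r, z) - 1|) := by ring

theorem ae_integrable_inner_mul_sub_one (hg : EntropyLE (spaceTime T ν) N g)
    (hφ : SqExpIntegrable φ (spaceTime T ν)) :
    ∀ᵐ r ∂volume.restrict (Icc 0 T), ∀ y,
      Integrable (fun z ↦ ⟪φ (r, z), y⟫ * (g (r, z) - 1)) ν := by
  filter_upwards [(hg.integrable_norm_mul_abs_sub_one hφ).prod_right_ae,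
    hφ.aestronglyMeasurable.prodMk_left] with r hr hφr y
  refine (hr.mul_const ‖y‖).mono' ((hφr.inner aestronglyMeasurable_const).mul
    ((hg.measurable.comp measurable_prodMk_left).sub_const 1).aestronglyMeasurable)
    (.of_forall fun z ↦ ?_)
  rw [norm_mul, mul_right_comm]
  exact mul_le_mul_of_nonneg_right (abs_real_inner_le_norm _ _) (abs_nonneg _)

theorem ae_abs_controlDrift_le (hg : EntropyLE (spaceTime T ν) N g)
    (hφ : SqExpIntegrable φ (spaceTime T ν)) :
    ∀ᵐ r ∂volume.restrict (Icc 0 T), ∀ y,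
      |controlDrift ν φ g r y| ≤ controlWeight ν φ g r * ‖y‖ := by
  filter_upwards [(hg.integrable_norm_mul_abs_sub_one hφ).prod_right_ae] with r hr y
  rw [controlDrift, controlWeight, ← integral_mul_const, ← norm_eq_abs]
  refine norm_integral_le_of_norm_le (hr.mul_const ‖y‖) (.of_forall fun z ↦ ?_)
  rw [norm_mul, mul_right_comm]
  exact mul_le_mul_of_nonneg_right (norm_inner_le_norm _ _) (abs_nonneg _)

theorem ae_controlDrift_sub (hg : EntropyLE (spaceTime T ν) N g)
    (hφ : SqExpIntegrable φ (spaceTime T ν)) :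
    ∀ᵐ r ∂volume.restrict (Icc 0 T), ∀ y₁ y₂,
      controlDrift ν φ g r (y₁ - y₂) = controlDrift ν φ g r y₁ - controlDrift ν φ g r y₂ := by
  filter_upwards [hg.ae_integrable_inner_mul_sub_one hφ] with r hr y₁ y₂
  simp only [controlDrift, inner_sub_right, sub_mul, integral_sub (hr y₁) (hr y₂)]

theorem ae_controlDrift_sub_controlDrift (hg₁ : EntropyLE (spaceTime T ν) N g₁)
    (hg₂ : EntropyLE (spaceTime T ν) N g₂) (hφ₁ : SqExpIntegrable φ₁ (spaceTime T ν))
    (hφ₂ : SqExpIntegrable φ₂ (spaceTime T ν)) :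
    ∀ᵐ r ∂volume.restrict (Icc 0 T), ∀ y,
      controlDrift ν φ₁ g₁ r y - controlDrift ν φ₂ g₂ r y
        = controlDrift ν (φ₁ - φ₂) g₁ r y + ∫ z, ⟪φ₂ (r, z), y⟫ * (g₁ (r, z) - g₂ (r, z)) ∂ν := by
  filter_upwards [hg₁.ae_integrable_inner_mul_sub_one hφ₁, hg₁.ae_integrable_inner_mul_sub_one hφ₂,
    hg₂.ae_integrable_inner_mul_sub_one hφ₂] with r h₁₁ h₁₂ h₂₂ y
  have hfirst : controlDrift ν (φ₁ - φ₂) g₁ r y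
      = controlDrift ν φ₁ g₁ r y - controlDrift ν φ₂ g₁ r y := by
    simp only [controlDrift, Pi.sub_apply, inner_sub_left, sub_mul, integral_sub (h₁₁ y) (h₁₂ y)]
  have hsecond : ∫ z, ⟪φ₂ (r, z), y⟫ * (g₁ (r, z) - g₂ (r, z)) ∂ν
      = controlDrift ν φ₂ g₁ r y - controlDrift ν φ₂ g₂ r y := by
    simp only [controlDrift, ← integral_sub (h₁₂ y) (h₂₂ y), ← mul_sub, sub_sub_sub_cancel_right]
  rw [hfirst, hsecond, sub_add_sub_cancel]

theorem isDrift_controlDrift [MeasurableSpace H] [BorelSpace H] [SecondCountableTopology H]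
    [MeasurableSpace V] [BorelSpace V] {i : V →L[ℝ] H} (hg : EntropyLE (spaceTime T ν) N g)
    (hφm : Measurable φ) (hφ : SqExpIntegrable φ (spaceTime T ν)) (q : ℝ≥0∞) :
    IsDrift T q i fun r v ↦ controlDrift ν φ g r (i v) where
  measurable := by
    have hgm := hg.measurable
    have him := i.continuous.measurable
    have hm : Measurable fun s : (ℝ × V) × 𝕏 ↦
        ⟪φ (s.1.1, s.2), i s.1.2⟫ * (g (s.1.1, s.2) - 1) :=
      (Measurable.inner (by fun_prop) (by fun_prop)).mul (by fun_prop)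
    exact (hm.stronglyMeasurable.integral_prod_right' (ν := ν)).measurable
  map_zero r := by simp [controlDrift]
  exists_bound := by
    refine ⟨0, controlWeight ν φ g, MemLp.zero',
      memLp_one_iff_integrable.2 (hg.integrableOn_controlWeight hφ), ?_⟩
    filter_upwards [hg.ae_abs_controlDrift_le hφ, hg.ae_controlDrift_sub hφ] with r hr hsub v w
    rw [← hsub]
    simpa using (hr _).trans
      (mul_le_mul_of_nonneg_right (le_abs_self _) (norm_nonneg (i v - i w)))

end EntropyLE

end Control

theorem memLp_rpow_inv_of_integrable {Ω : Type*} [MeasurableSpace Ω] {μ : Measure Ω} {G : Ω → ℝ}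
    (hG : Integrable G μ) (hG0 : ∀ ω, 0 ≤ G ω) {q : ℝ} (hq : 0 < q) :
    MemLp (fun ω ↦ G ω ^ q⁻¹) (ENNReal.ofReal q) μ := by
  have h := (memLp_one_iff_integrable.2 hG).norm_rpow_div (ENNReal.ofReal q⁻¹)
  rw [ENNReal.toReal_ofReal (by positivity), ENNReal.ofReal_inv_of_pos hq, one_div, inv_inv] at h
  exact h.congr_norm (hG.aemeasurable.pow_const _).aestronglyMeasurable (.of_forall fun ω ↦ by
    rw [norm_of_nonneg (hG0 ω)])

theorem SqExpIntegrable.of_norm_le_mul {𝕏 E F : Type*} [MeasurableSpace 𝕏] [NormedAddCommGroup E]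
    [NormedAddCommGroup F] {ν : Measure 𝕏} {T M : ℝ} {h : ℝ × 𝕏 → E} {k : ℝ × 𝕏 → F}
    {c : ℝ → ℝ} (hh : SqExpIntegrable h (spaceTime T ν))
    (hk : AEStronglyMeasurable k (spaceTime T ν))
    (hle : ∀ r ∈ Icc 0 T, ∀ z, ‖k (r, z)‖ ≤ ‖h (r, z)‖ * c r)
    (hM : ∀ᵐ r ∂volume.restrict (Icc 0 T), c r ≤ M) : SqExpIntegrable k (spaceTime T ν) := by
  refine (hh.norm.const_mul M).mono hk ?_
  filter_upwards [Measure.quasiMeasurePreserving_fst.ae hM,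
    Measure.quasiMeasurePreserving_fst.ae (ae_restrict_mem measurableSet_Icc)] with q hq hmem
  calc ‖k q‖ ≤ ‖h q‖ * c q.1 := hle _ hmem _
    _ ≤ ‖h q‖ * M := by gcongr
    _ ≤ ‖M * ‖h q‖‖ := by
        rw [mul_comm]
        exact le_norm_self _

section Skeleton

variable {𝕏 H V : Type*} [MeasurableSpace 𝕏] [NormedAddCommGroup H] [InnerProductSpace ℝ H]
  [NormedAddCommGroup V] [NormedSpace ℝ V]

/-- The noise coefficient `f` along the path `u`. -/
def noiseAlong (f : ℝ → V → 𝕏 → H) (u : ℝ → V) (q : ℝ × 𝕏) : H :=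
  f q.1 (u q.1) q.2

/-- The right-hand side of the skeleton equation along the path `u`, tested with vectors of `V`. -/
noncomputable def skeletonDrift (ν : Measure 𝕏) (i : V →L[ℝ] H) (A : ℝ → V → V →L[ℝ] ℝ)
    (f : ℝ → V → 𝕏 → H) (g : ℝ × 𝕏 → ℝ) (u : ℝ → V) : ℝ → V → ℝ :=
  (fun r v ↦ A r (u r) v) + fun r v ↦ controlDrift ν (noiseAlong f u) g r (i v)

/-- Measurability, coercivity (H3), growth of the drift (H4) and growth of the noise (H5). -/
structure IsSkeletonCoeff [MeasurableSpace H] [MeasurableSpace V] (T α β θ C : ℝ) (ν : Measure 𝕏)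
    (F : ℝ → ℝ) (L : ℝ × 𝕏 → ℝ) (i : V →L[ℝ] H) (A : ℝ → V → V →L[ℝ] ℝ) (f : ℝ → V → 𝕏 → H) :
    Prop where
  one_lt : 1 < α
  beta_nonneg : 0 ≤ β
  theta_pos : 0 < θ
  const_nonneg : 0 ≤ C
  nonneg : ∀ t, 0 ≤ F t
  integrableOn : IntegrableOn F (Icc 0 T)
  measurable_drift : ∀ v, Measurable fun q : ℝ × V ↦ A q.1 q.2 v
  measurable_noise : Measurable fun q : ℝ × V × 𝕏 ↦ f q.1 q.2.1 q.2.2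
  coercive : ∀ t ∈ Icc 0 T, ∀ v, 2 * A t v v + θ * ‖v‖ ^ α ≤ F t * (1 + ‖i v‖ ^ 2)
  norm_drift_rpow_le : ∀ t ∈ Icc 0 T, ∀ v,
    ‖A t v‖ ^ α.conjExponent ≤ (F t + C * ‖v‖ ^ α) * (1 + ‖i v‖ ^ β)
  sqExpIntegrable : SqExpIntegrable L (spaceTime T ν)
  norm_noise_le : ∀ t ∈ Icc 0 T, ∀ v z, ‖f t v z‖ ≤ ‖L (t, z)‖ * (1 + ‖i v‖)

variable {T α β θ C : ℝ} {ν : Measure 𝕏} {F : ℝ → ℝ} {L : ℝ × 𝕏 → ℝ} {i : V →L[ℝ] H}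
  {A : ℝ → V → V →L[ℝ] ℝ} {f : ℝ → V → 𝕏 → H} {N : ℝ≥0} {g : ℝ × 𝕏 → ℝ} {x : H} {X : ℝ → H}
  {u : ℝ → V}

namespace IsSkeletonSolution

theorem integrableOn_norm_rpow (hX : IsSkeletonSolution T α ν i A f x g X u) :
    IntegrableOn (fun r ↦ ‖u r‖ ^ α) (Icc 0 T) := by
  refine ⟨(hX.2.1.norm.measurable.pow_const α).aestronglyMeasurable, ?_⟩
  rw [hasFiniteIntegral_iff_ofReal (.of_forall fun r ↦ by positivity)]
  exact hX.2.2.2.1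

theorem memLp (hX : IsSkeletonSolution T α ν i A f x g X u) (hα : 0 < α) :
    MemLp u (ENNReal.ofReal α) (volume.restrict (Icc 0 T)) := by
  rw [← integrable_norm_rpow_iff hX.2.1.aestronglyMeasurable (by simpa using hα)
    ENNReal.ofReal_ne_top, ENNReal.toReal_ofReal hα.le]
  exact hX.integrableOn_norm_rpow

theorem exists_ae_norm_le (hX : IsSkeletonSolution T α ν i A f x g X u) :
    ∃ M, ∀ᵐ r ∂volume.restrict (Icc 0 T), ‖i (u r)‖ ≤ M :=
  exists_ae_norm_le_of_continuousOn hX.1 hX.2.2.1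

end IsSkeletonSolution

namespace IsSkeletonCoeff

variable [MeasurableSpace H] [MeasurableSpace V]

theorem holderConjugate (hc : IsSkeletonCoeff T α β θ C ν F L i A f) :
    (ENNReal.ofReal α).HolderConjugate (ENNReal.ofReal α.conjExponent) :=
  (Real.HolderConjugate.conjExponent hc.one_lt).ennrealOfReal

theorem growth_nonneg (hc : IsSkeletonCoeff T α β θ C ν F L i A f) (t : ℝ) (v : V) :
    0 ≤ F t + C * ‖v‖ ^ α := by
  have := hc.nonneg t
  have := hc.const_nonneg
  positivity

theorem integrableOn_growth (hc : IsSkeletonCoeff T α β θ C ν F L i A f)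
    (hX : IsSkeletonSolution T α ν i A f x g X u) :
    IntegrableOn (fun r ↦ F r + C * ‖u r‖ ^ α) (Icc 0 T) :=
  hc.integrableOn.add (hX.integrableOn_norm_rpow.const_mul C)

theorem ae_norm_drift_rpow_le (hc : IsSkeletonCoeff T α β θ C ν F L i A f) {M : ℝ}
    (hM : ∀ᵐ r ∂volume.restrict (Icc 0 T), ‖i (u r)‖ ≤ M) :
    ∀ᵐ r ∂volume.restrict (Icc 0 T),
      ‖A r (u r)‖ ^ α.conjExponent ≤ (F r + C * ‖u r‖ ^ α) * (1 + M ^ β) := by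
  filter_upwards [hM, ae_restrict_mem measurableSet_Icc] with r hr hmem
  refine (hc.norm_drift_rpow_le r hmem (u r)).trans ?_
  have := hc.growth_nonneg r (u r)
  have := hc.beta_nonneg
  gcongr

theorem isDrift_drift [BorelSpace V] [SecondCountableTopology V]
    (hc : IsSkeletonCoeff T α β θ C ν F L i A f) (hX : IsSkeletonSolution T α ν i A f x g X u) :
    IsDrift T (ENNReal.ofReal α.conjExponent) i fun r v ↦ A r (u r) v where
  measurable := (measurable_uncurry_of_continuous_of_measurable (u := fun v r ↦ A r (u r) v)
    (fun r ↦ (A r (u r)).continuous) fun v ↦ (hc.measurable_drift v).comp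
      (measurable_id.prodMk hX.2.1.measurable)).comp measurable_swap
  map_zero r := (A r (u r)).map_zero
  exists_bound := by
    obtain ⟨M, hM⟩ := hX.exists_ae_norm_le
    have hq : 0 < α.conjExponent := (Real.HolderConjugate.conjExponent hc.one_lt).symm.pos
    let G (r : ℝ) : ℝ := (F r + C * ‖u r‖ ^ α) * (1 + |M| ^ β)
    have hG0 (r : ℝ) : 0 ≤ G r := mul_nonneg (hc.growth_nonneg r (u r)) (by positivity)
    refine ⟨fun r ↦ G r ^ (α.conjExponent)⁻¹, 0, memLp_rpow_inv_of_integrable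
      ((hc.integrableOn_growth hX).mul_const _) hG0 hq, MemLp.zero', ?_⟩
    filter_upwards [hc.ae_norm_drift_rpow_le (hM.mono fun r hr ↦ hr.trans (le_abs_self M))]
      with r hr v w
    rw [← map_sub, Pi.zero_apply, abs_zero, zero_mul, add_zero]
    refine (A r (u r)).le_of_opNorm_le ?_ _
    exact ((le_rpow_inv_iff_of_pos (norm_nonneg _) (hG0 r) hq).2 hr).trans (le_abs_self _)

theorem measurable_noiseAlong (hc : IsSkeletonCoeff T α β θ C ν F L i A f)
    (hu : Measurable u) : Measurable (noiseAlong f u) :=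
  hc.measurable_noise.comp (measurable_fst.prodMk ((hu.comp measurable_fst).prodMk measurable_snd))

theorem ae_controlWeight_noiseAlong_le [SFinite ν] (hc : IsSkeletonCoeff T α β θ C ν F L i A f)
    (hg : EntropyLE (spaceTime T ν) N g) (hX : IsSkeletonSolution T α ν i A f x g X u) :
    ∀ᵐ r ∂volume.restrict (Icc 0 T),
      controlWeight ν (noiseAlong f u) g r ≤ (1 + ‖X r‖) * controlWeight ν L g r := by
  filter_upwards [hX.2.2.1, hg.ae_controlWeight_le (k := noiseAlong f u) hc.sqExpIntegrable
    (c := fun r ↦ 1 + ‖i (u r)‖) fun r hr z ↦ hc.norm_noise_le r hr (u r) z] with r hrX hr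
  rwa [← hrX]

variable [BorelSpace H] [SecondCountableTopology H] [BorelSpace V]

theorem sqExpIntegrable_noiseAlong (hc : IsSkeletonCoeff T α β θ C ν F L i A f)
    (hX : IsSkeletonSolution T α ν i A f x g X u) :
    SqExpIntegrable (noiseAlong f u) (spaceTime T ν) := by
  have ⟨_, hM⟩ := hX.exists_ae_norm_le
  exact hc.sqExpIntegrable.of_norm_le_mul
    (hc.measurable_noiseAlong hX.2.1.measurable).aestronglyMeasurable
    (fun r hr z ↦ hc.norm_noise_le r hr (u r) z) (hM.mono fun r hr ↦ add_le_add_right hr 1)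

theorem ae_two_mul_skeletonDrift_le [SFinite ν] (hc : IsSkeletonCoeff T α β θ C ν F L i A f)
    (hg : EntropyLE (spaceTime T ν) N g) (hX : IsSkeletonSolution T α ν i A f x g X u) :
    ∀ᵐ r ∂volume.restrict (Icc 0 T), 2 * skeletonDrift ν i A f g u r (u r) + θ * ‖u r‖ ^ α ≤
      (F r + 4 * controlWeight ν L g r) * ‖X r‖ ^ 2 + (F r + 4 * controlWeight ν L g r) := by
  filter_upwards [hX.2.2.1, hg.ae_abs_controlDrift_le (hc.sqExpIntegrable_noiseAlong hX),
    hc.ae_controlWeight_noiseAlong_le hg hX, ae_restrict_mem measurableSet_Icc]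
    with r hrX hdrift hweight hmem
  have hA := hc.coercive r hmem (u r)
  rw [hrX] at hA
  have hW : 0 ≤ controlWeight ν L g r := controlWeight_nonneg r
  have hφ : controlDrift ν (noiseAlong f u) g r (i (u r)) ≤
      2 * controlWeight ν L g r * (1 + ‖X r‖ ^ 2) := by
    calc controlDrift ν (noiseAlong f u) g r (i (u r))
        ≤ (1 + ‖X r‖) * controlWeight ν L g r * ‖X r‖ := by
          rw [hrX]
          exact (le_abs_self _).trans ((hdrift _).trans (by gcongr))
      _ = controlWeight ν L g r * (‖X r‖ + ‖X r‖ ^ 2) := by ring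
      _ ≤ controlWeight ν L g r * (2 * (1 + ‖X r‖ ^ 2)) := by
          gcongr
          nlinarith [sq_nonneg (‖X r‖ - 1)]
      _ = _ := by ring
  calc 2 * skeletonDrift ν i A f g u r (u r) + θ * ‖u r‖ ^ α
      = (2 * A r (u r) (u r) + θ * ‖u r‖ ^ α)
          + 2 * controlDrift ν (noiseAlong f u) g r (i (u r)) := by
        simp only [skeletonDrift, Pi.add_apply]
        ring
    _ ≤ _ := by linarith

theorem ae_abs_skeletonDrift_le [SFinite ν] (hc : IsSkeletonCoeff T α β θ C ν F L i A f)
    (hg : EntropyLE (spaceTime T ν) N g) (hX : IsSkeletonSolution T α ν i A f x g X u) {M : ℝ}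
    (hM : ∀ t ∈ Icc 0 T, ‖X t‖ ≤ M) (v : V) :
    ∀ᵐ r ∂volume.restrict (Icc 0 T), |skeletonDrift ν i A f g u r v| ≤
      (1 + (F r + C * ‖u r‖ ^ α) * (1 + M ^ β)) * ‖v‖
        + (1 + M) * controlWeight ν L g r * ‖i v‖ := by
  have hMu : ∀ᵐ r ∂volume.restrict (Icc 0 T), ‖i (u r)‖ ≤ M := by
    filter_upwards [hX.2.2.1, ae_restrict_mem measurableSet_Icc] with r hr hmem
    exact hr ▸ hM r hmem
  have hq : 1 ≤ α.conjExponent := (Real.HolderConjugate.conjExponent hc.one_lt).symm.lt.le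
  filter_upwards [hc.ae_norm_drift_rpow_le hMu, hc.ae_controlWeight_noiseAlong_le hg hX,
    hg.ae_abs_controlDrift_le (hc.sqExpIntegrable_noiseAlong hX), ae_restrict_mem measurableSet_Icc]
    with r hA hweight hdrift hmem
  have hA' : ‖A r (u r)‖ ≤ 1 + (F r + C * ‖u r‖ ^ α) * (1 + M ^ β) := by
    refine le_trans ?_ (add_le_add_right hA 1)
    rcases le_total ‖A r (u r)‖ 1 with h | h
    · exact h.trans (le_add_of_nonneg_right (by positivity))
    · exact (self_le_rpow_of_one_le h hq).trans (le_add_of_nonneg_left zero_le_one)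
  have hφ : controlWeight ν (noiseAlong f u) g r ≤ (1 + M) * controlWeight ν L g r := by
    refine hweight.trans ?_
    gcongr
    exacts [controlWeight_nonneg r, hM r hmem]
  calc |skeletonDrift ν i A f g u r v|
      ≤ |A r (u r) v| + |controlDrift ν (noiseAlong f u) g r (i v)| := abs_add_le _ _
    _ ≤ _ := add_le_add ((A r (u r)).le_of_opNorm_le hA' v) ((hdrift _).trans (by gcongr))

variable [SecondCountableTopology V]

theorem isDrift_skeletonDrift [SFinite ν] (hc : IsSkeletonCoeff T α β θ C ν F L i A f)
    (hg : EntropyLE (spaceTime T ν) N g) (hX : IsSkeletonSolution T α ν i A f x g X u) :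
    IsDrift T (ENNReal.ofReal α.conjExponent) i (skeletonDrift ν i A f g u) :=
  (hc.isDrift_drift hX).add (hg.isDrift_controlDrift
    (hc.measurable_noiseAlong hX.2.1.measurable) (hc.sqExpIntegrable_noiseAlong hX) _)

theorem isWeakSolution [SFinite ν] (hc : IsSkeletonCoeff T α β θ C ν F L i A f)
    (hg : EntropyLE (spaceTime T ν) N g) (hX : IsSkeletonSolution T α ν i A f x g X u) :
    IsWeakSolution T (ENNReal.ofReal α) i (skeletonDrift ν i A f g u) x X u where
  continuousOn := hX.1
  stronglyMeasurable := hX.2.1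
  ae_eq := hX.2.2.1
  memLp := hX.memLp (zero_lt_one.trans hc.one_lt)
  inner_eq t ht v := by
    have := hc.holderConjugate
    have h0 : (0 : ℝ) ∈ Icc 0 T := ⟨le_rfl, ht.1.trans ht.2⟩
    have hA := (hc.isDrift_drift hX).intervalIntegrable (.ofReal α) v h0 ht
    have hφ := (hg.isDrift_controlDrift (hc.measurable_noiseAlong hX.2.1.measurable)
      (hc.sqExpIntegrable_noiseAlong hX) (.ofReal α.conjExponent)).intervalIntegrable
      (.ofReal α) (i := i) v h0 ht
    rw [hX.2.2.2.2 t ht v, add_assoc, integral_Icc_eq_integral_Ioc, integral_Icc_eq_integral_Ioc,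
      ← intervalIntegral.integral_of_le ht.1, ← intervalIntegral.integral_of_le ht.1]
    congr 1
    exact (intervalIntegral.integral_add hA hφ).symm

theorem exists_norm_sq_add_integral_le [SFinite ν] (hc : IsSkeletonCoeff T α β θ C ν F L i A f)
    (hi : DenseRange i) (x : H) (N : ℝ≥0) :
    ∃ B, ∀ g X u, EntropyLE (spaceTime T ν) N g → IsSkeletonSolution T α ν i A f x g X u →
      ∀ t ∈ Icc 0 T, ‖X t‖ ^ 2 + θ * ∫ r in 0..t, ‖u r‖ ^ α ≤ B := by
  obtain ⟨S, hS⟩ := exists_forall_integral_controlWeight_le hc.sqExpIntegrable N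
  have := hc.holderConjugate
  set R := (∫ r in Icc 0 T, F r) + 4 * S
  refine ⟨(‖x‖ ^ 2 + R) * exp R, fun g X u hg hX t ht ↦ ?_⟩
  have hweak := hc.isWeakSolution hg hX
  have hW := (hg.integrableOn_controlWeight hc.sqExpIntegrable).const_mul 4
  have hk0 (r : ℝ) : 0 ≤ F r + 4 * controlWeight ν L g r :=
    add_nonneg (hc.nonneg r) (mul_nonneg zero_le_four (controlWeight_nonneg r))
  have hk : IntegrableOn (fun r ↦ F r + 4 * controlWeight ν L g r) (Icc 0 T) :=
    hc.integrableOn.add hW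
  have hkR : ∫ r in Icc 0 T, (F r + 4 * controlWeight ν L g r) ≤ R := by
    rw [integral_add hc.integrableOn hW, integral_const_mul]
    linarith [hS g hg]
  have hR (s : ℝ) (hs : s ∈ Icc 0 T) : ∫ r in 0..s, (F r + 4 * controlWeight ν L g r) ≤ R := by
    rw [intervalIntegral.integral_of_le hs.1]
    exact (setIntegral_mono_set hk (.of_forall hk0)
      (Ioc_subset_Icc_self.trans (Icc_subset_Icc_right hs.2)).eventuallyLE).trans hkR
  have hR0 : 0 ≤ R := (integral_nonneg hk0).trans hkR
  have henergy := hweak.norm_sq_add_integral_le (hc.isDrift_skeletonDrift hg hX)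
    ENNReal.ofReal_ne_top hk hk0 (hX.integrableOn_norm_rpow.const_mul θ)
    (fun r ↦ mul_nonneg hc.theta_pos.le (by positivity)) hk (hc.ae_two_mul_skeletonDrift_le hg hX)
    hR ht
  rw [intervalIntegral.integral_const_mul, hweak.apply_zero (ht.1.trans ht.2) hi] at henergy
  exact henergy.trans (by gcongr)

theorem exists_norm_le_and_integral_norm_rpow_le [SFinite ν]
    (hc : IsSkeletonCoeff T α β θ C ν F L i A f) (hT : 0 ≤ T) (hi : DenseRange i) (x : H)
    (N : ℝ≥0) :
    ∃ M c, 0 ≤ M ∧ ∀ g X u, EntropyLE (spaceTime T ν) N g →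
      IsSkeletonSolution T α ν i A f x g X u →
      (∀ t ∈ Icc 0 T, ‖X t‖ ≤ M) ∧ ∫ r in Icc 0 T, ‖u r‖ ^ α ≤ c := by
  obtain ⟨B, hB⟩ := hc.exists_norm_sq_add_integral_le hi x N
  have hθ := hc.theta_pos
  refine ⟨√B, B / θ, sqrt_nonneg B, fun g X u hg hX ↦ ⟨fun t ht ↦ le_sqrt_of_sq_le ?_, ?_⟩⟩
  · refine le_trans (le_add_of_nonneg_right ?_) (hB g X u hg hX t ht)
    exact mul_nonneg hθ.le (intervalIntegral.integral_nonneg ht.1 fun _ _ ↦ by positivity)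
  · rw [le_div_iff₀' hθ, integral_Icc_eq_integral_Ioc, ← intervalIntegral.integral_of_le hT]
    exact (le_add_of_nonneg_left (sq_nonneg _)).trans (hB g X u hg hX T ⟨hT, le_rfl⟩)

theorem exists_integral_abs_skeletonDrift_le [SFinite ν]
    (hc : IsSkeletonCoeff T α β θ C ν F L i A f) (hT : 0 ≤ T) (hi : DenseRange i) (x : H)
    (N : ℝ≥0) (v : V) :
    ∃ c, ∀ g X u, EntropyLE (spaceTime T ν) N g → IsSkeletonSolution T α ν i A f x g X u →
      ∫ r in 0..T, |skeletonDrift ν i A f g u r v| ≤ c := by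
  obtain ⟨M, c, hM0, hMc⟩ := hc.exists_norm_le_and_integral_norm_rpow_le hT hi x N
  obtain ⟨S, hS⟩ := exists_forall_integral_controlWeight_le hc.sqExpIntegrable N
  have := hc.const_nonneg
  refine ⟨(T + ((∫ r in Icc 0 T, F r) + C * c) * (1 + M ^ β)) * ‖v‖ + (1 + M) * S * ‖i v‖,
    fun g X u hg hX ↦ ?_⟩
  obtain ⟨hM, hu⟩ := hMc g X u hg hX
  have hint := (hc.integrableOn_growth hX).mul_const (1 + M ^ β)
  have hW := (hg.integrableOn_controlWeight hc.sqExpIntegrable).const_mul (1 + M)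
  have hone : IntegrableOn (fun _ ↦ (1 : ℝ)) (Icc 0 T) := integrableOn_const (by simp)
  have hadd : IntegrableOn (fun r ↦ 1 + (F r + C * ‖u r‖ ^ α) * (1 + M ^ β)) (Icc 0 T) :=
    hone.add hint
  rw [intervalIntegral.integral_of_le hT, ← integral_Icc_eq_integral_Ioc]
  calc ∫ r in Icc 0 T, |skeletonDrift ν i A f g u r v|
      ≤ ∫ r in Icc 0 T, ((1 + (F r + C * ‖u r‖ ^ α) * (1 + M ^ β)) * ‖v‖
          + (1 + M) * controlWeight ν L g r * ‖i v‖) :=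
        integral_mono_of_nonneg (.of_forall fun _ ↦ abs_nonneg _)
          ((hadd.mul_const _).add (hW.mul_const _))
          (hc.ae_abs_skeletonDrift_le hg hX hM v)
    _ = (T + ((∫ r in Icc 0 T, F r) + C * ∫ r in Icc 0 T, ‖u r‖ ^ α) * (1 + M ^ β)) * ‖v‖
          + (1 + M) * (∫ r in Icc 0 T, controlWeight ν L g r) * ‖i v‖ := by
        rw [integral_add (hadd.mul_const _) (hW.mul_const _), integral_mul_const,
          integral_mul_const, integral_const_mul, integral_add hone hint, integral_mul_const,
          integral_add hc.integrableOn (hX.integrableOn_norm_rpow.const_mul C), integral_const_mul]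
        simp [hT]
    _ ≤ _ := by
        gcongr
        exact hS g hg

theorem exists_isWeaklyEquiBV_sub [SFinite ν] {ι : Type*} {gn : ι → ℝ × 𝕏 → ℝ}
    {Xn : ι → ℝ → H} {un : ι → ℝ → V} (hc : IsSkeletonCoeff T α β θ C ν F L i A f) (hT : 0 ≤ T)
    (hi : DenseRange i) (hgn : ∀ n, EntropyLE (spaceTime T ν) N (gn n))
    (hg : EntropyLE (spaceTime T ν) N g)
    (hXn : ∀ n, IsSkeletonSolution T α ν i A f x (gn n) (Xn n) (un n))
    (hX : IsSkeletonSolution T α ν i A f x g X u) :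
    ∃ M, IsWeaklyEquiBV T M (range i) fun n ↦ Xn n - X := by
  have := hc.holderConjugate
  obtain ⟨M, _, -, hM⟩ := hc.exists_norm_le_and_integral_norm_rpow_le hT hi x N
  refine ⟨M + M, fun n ↦ (hXn n).1.sub hX.1, fun n s hs ↦ (norm_sub_le _ _).trans
    (add_le_add ((hM _ _ _ (hgn n) (hXn n)).1 s hs) ((hM _ _ _ hg hX).1 s hs)), ?_⟩
  rintro _ ⟨v, rfl⟩
  obtain ⟨c, hle⟩ := hc.exists_integral_abs_skeletonDrift_le hT hi x N v
  refine ⟨c + c, fun n ↦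
    ⟨fun r ↦ skeletonDrift ν i A f (gn n) (un n) r v - skeletonDrift ν i A f g u r v, ?_⟩⟩
  have h0 : (0 : ℝ) ∈ Icc 0 T := ⟨le_rfl, hT⟩
  have hDn := hc.isDrift_skeletonDrift (hgn n) (hXn n)
  have hD := hc.isDrift_skeletonDrift hg hX
  have hintn {t : ℝ} (ht : t ∈ Icc 0 T) := hDn.intervalIntegrable (.ofReal α) v h0 ht
  have hint {t : ℝ} (ht : t ∈ Icc 0 T) := hD.intervalIntegrable (.ofReal α) v h0 ht
  have hTT : T ∈ Icc 0 T := ⟨hT, le_rfl⟩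
  refine ⟨(hintn hTT).sub (hint hTT), ?_, fun s hs ↦ ?_⟩
  · refine (intervalIntegral.integral_mono_on hT ((hintn hTT).sub (hint hTT)).abs
      ((hintn hTT).abs.add (hint hTT).abs) fun r _ ↦ abs_sub _ _).trans ?_
    rw [intervalIntegral.integral_add (hintn hTT).abs (hint hTT).abs]
    exact add_le_add (hle _ _ _ (hgn n) (hXn n)) (hle _ _ _ hg hX)
  · rw [real_inner_comm, Pi.sub_apply, inner_sub_left,
      (hc.isWeakSolution (hgn n) (hXn n)).inner_eq s hs v,
      (hc.isWeakSolution hg hX).inner_eq s hs v, intervalIntegral.integral_sub (hintn hs) (hint hs),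
      add_sub_add_left_eq_sub]

end IsSkeletonCoeff

end Skeleton

section Stability

variable {𝕏 H V : Type*} [MeasurableSpace 𝕏] [NormedAddCommGroup H] [InnerProductSpace ℝ H]
  [MeasurableSpace H] [NormedAddCommGroup V] [NormedSpace ℝ V] [MeasurableSpace V]

/-- Local monotonicity of the drift (H2), with the growth condition on `ρ`, and Lipschitz continuity
of the noise (H6). -/
structure IsLocallyMonotoneCoeff (T α β C : ℝ) (ν : Measure 𝕏) (K : ℝ → ℝ) (ρ : V → ℝ)
    (G : ℝ × 𝕏 → ℝ) (i : V →L[ℝ] H) (A : ℝ → V → V →L[ℝ] ℝ) (f : ℝ → V → 𝕏 → H) : Prop where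
  nonneg : ∀ t, 0 ≤ K t
  integrableOn : IntegrableOn K (Icc 0 T)
  measurable_weight : Measurable ρ
  weight_nonneg : ∀ v, 0 ≤ ρ v
  weight_le : ∀ v, ρ v ≤ C * (1 + ‖v‖ ^ α) * (1 + ‖i v‖ ^ β)
  monotone : ∀ t ∈ Icc 0 T, ∀ v₁ v₂,
    2 * (A t v₁ (v₁ - v₂) - A t v₂ (v₁ - v₂)) ≤ (K t + ρ v₂) * ‖i v₁ - i v₂‖ ^ 2
  sqExpIntegrable : SqExpIntegrable G (spaceTime T ν)
  norm_noise_sub_le : ∀ t ∈ Icc 0 T, ∀ v₁ v₂ z,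
    ‖f t v₁ z - f t v₂ z‖ ≤ ‖G (t, z)‖ * ‖i v₁ - i v₂‖

variable {T α β θ C : ℝ} {ν : Measure 𝕏} {F K : ℝ → ℝ} {ρ : V → ℝ} {L G : ℝ × 𝕏 → ℝ}
  {i : V →L[ℝ] H} {A : ℝ → V → V →L[ℝ] ℝ} {f : ℝ → V → 𝕏 → H} {N : ℝ≥0} {g g₁ : ℝ × 𝕏 → ℝ}
  {x : H} {X X₁ : ℝ → H} {u u₁ : ℝ → V}

namespace IsSkeletonCoeff

theorem integrableOn_weight (hc : IsSkeletonCoeff T α β θ C ν F L i A f)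
    (hm : IsLocallyMonotoneCoeff T α β C ν K ρ G i A f)
    (hX : IsSkeletonSolution T α ν i A f x g X u) [BorelSpace V] :
    IntegrableOn (fun r ↦ ρ (u r)) (Icc 0 T) := by
  obtain ⟨M, hM⟩ := hX.exists_ae_norm_le
  have hone : IntegrableOn (fun _ ↦ (1 : ℝ)) (Icc 0 T) := integrableOn_const (by simp)
  refine (((hone.add hX.integrableOn_norm_rpow).const_mul C).mul_const (1 + M ^ β)).mono'
    (hm.measurable_weight.comp hX.2.1.measurable).aestronglyMeasurable ?_
  filter_upwards [hM] with r hr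
  have := hc.const_nonneg
  have := hc.beta_nonneg
  rw [norm_of_nonneg (hm.weight_nonneg _)]
  exact (hm.weight_le _).trans (by simp only [Pi.add_apply]; gcongr)

variable [BorelSpace H] [SecondCountableTopology H] [BorelSpace V]

theorem sqExpIntegrable_noiseAlong_sub (hc : IsSkeletonCoeff T α β θ C ν F L i A f)
    (hm : IsLocallyMonotoneCoeff T α β C ν K ρ G i A f)
    (hX₁ : IsSkeletonSolution T α ν i A f x g₁ X₁ u₁)
    (hX : IsSkeletonSolution T α ν i A f x g X u) :
    SqExpIntegrable (noiseAlong f u₁ - noiseAlong f u) (spaceTime T ν) := by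
  obtain ⟨M₁, hM₁⟩ := hX₁.exists_ae_norm_le
  obtain ⟨M, hM⟩ := hX.exists_ae_norm_le
  refine hm.sqExpIntegrable.of_norm_le_mul (M := M₁ + M)
    ((hc.measurable_noiseAlong hX₁.2.1.measurable).sub
      (hc.measurable_noiseAlong hX.2.1.measurable)).aestronglyMeasurable
    (fun r hr z ↦ hm.norm_noise_sub_le r hr (u₁ r) (u r) z) ?_
  filter_upwards [hM₁, hM] with r hr₁ hr
  exact (norm_sub_le _ _).trans (add_le_add hr₁ hr)

variable [SFinite ν]

theorem ae_controlDrift_noiseAlong_sub_le (hc : IsSkeletonCoeff T α β θ C ν F L i A f)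
    (hm : IsLocallyMonotoneCoeff T α β C ν K ρ G i A f) (hg₁ : EntropyLE (spaceTime T ν) N g₁)
    (hX₁ : IsSkeletonSolution T α ν i A f x g₁ X₁ u₁)
    (hX : IsSkeletonSolution T α ν i A f x g X u) :
    ∀ᵐ r ∂volume.restrict (Icc 0 T),
      controlDrift ν (noiseAlong f u₁ - noiseAlong f u) g₁ r (X₁ r - X r)
        ≤ controlWeight ν G g₁ r * ‖X₁ r - X r‖ ^ 2 := by
  filter_upwards [hX₁.2.2.1, hX.2.2.1,
    hg₁.ae_abs_controlDrift_le (hc.sqExpIntegrable_noiseAlong_sub hm hX₁ hX),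
    hg₁.ae_controlWeight_le (k := noiseAlong f u₁ - noiseAlong f u) hm.sqExpIntegrable
      (c := fun r ↦ ‖i (u₁ r) - i (u r)‖) fun r hr z ↦ hm.norm_noise_sub_le r hr (u₁ r) (u r) z]
    with r hr₁ hr hdrift hweight
  rw [hr₁, hr] at hweight
  calc controlDrift ν (noiseAlong f u₁ - noiseAlong f u) g₁ r (X₁ r - X r)
      ≤ controlWeight ν (noiseAlong f u₁ - noiseAlong f u) g₁ r * ‖X₁ r - X r‖ :=
        (le_abs_self _).trans (hdrift _)
    _ ≤ ‖X₁ r - X r‖ * controlWeight ν G g₁ r * ‖X₁ r - X r‖ := by gcongr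
    _ = _ := by ring

theorem ae_two_mul_skeletonDrift_sub_le (hc : IsSkeletonCoeff T α β θ C ν F L i A f)
    (hm : IsLocallyMonotoneCoeff T α β C ν K ρ G i A f) (hg₁ : EntropyLE (spaceTime T ν) N g₁)
    (hg : EntropyLE (spaceTime T ν) N g) (hX₁ : IsSkeletonSolution T α ν i A f x g₁ X₁ u₁)
    (hX : IsSkeletonSolution T α ν i A f x g X u) :
    ∀ᵐ r ∂volume.restrict (Icc 0 T),
      2 * (skeletonDrift ν i A f g₁ u₁ - skeletonDrift ν i A f g u) r ((u₁ - u) r)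
        ≤ (K r + ρ (u r) + 2 * controlWeight ν G g₁ r) * ‖(X₁ - X) r‖ ^ 2
          + 2 * ∫ z, ⟪noiseAlong f u (r, z), (X₁ - X) r⟫ * (g₁ (r, z) - g (r, z)) ∂ν := by
  filter_upwards [hX₁.2.2.1, hX.2.2.1, hg₁.ae_controlDrift_sub_controlDrift hg
      (hc.sqExpIntegrable_noiseAlong hX₁) (hc.sqExpIntegrable_noiseAlong hX),
    hc.ae_controlDrift_noiseAlong_sub_le hm hg₁ hX₁ hX, ae_restrict_mem measurableSet_Icc]
    with r hr₁ hr hsplit hnoise hmem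
  have hA := hm.monotone r hmem (u₁ r) (u r)
  have hsplit := hsplit (X₁ r - X r)
  rw [hr₁, hr] at hA
  simp only [skeletonDrift, Pi.sub_apply, Pi.add_apply, map_sub i, hr₁, hr]
  linarith

variable [SecondCountableTopology V]

theorem norm_sub_sq_le (hc : IsSkeletonCoeff T α β θ C ν F L i A f)
    (hm : IsLocallyMonotoneCoeff T α β C ν K ρ G i A f) (hi : DenseRange i)
    (hg₁ : EntropyLE (spaceTime T ν) N g₁) (hg : EntropyLE (spaceTime T ν) N g)
    (hX₁ : IsSkeletonSolution T α ν i A f x g₁ X₁ u₁)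
    (hX : IsSkeletonSolution T α ν i A f x g X u) {δ : ℝ} (hδ : ∀ t ∈ Icc 0 T,
      ∫ q in Icc 0 t ×ˢ univ, ⟪noiseAlong f u q, (X₁ - X) q.1⟫ * (g₁ q - g q) ∂spaceTime T ν ≤ δ)
    {t : ℝ} (ht : t ∈ Icc 0 T) :
    ‖(X₁ - X) t‖ ^ 2
      ≤ 2 * δ * exp (∫ r in Icc 0 T, (K r + ρ (u r) + 2 * controlWeight ν G g₁ r)) := by
  have := hc.holderConjugate
  have hweak := (hc.isWeakSolution hg₁ hX₁).sub (hc.isDrift_skeletonDrift hg₁ hX₁)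
    (hc.isWeakSolution hg hX) (hc.isDrift_skeletonDrift hg hX)
  have hk : IntegrableOn (fun r ↦ K r + ρ (u r) + 2 * controlWeight ν G g₁ r) (Icc 0 T) :=
    (hm.integrableOn.add (hc.integrableOn_weight hm hX)).add
      ((hg₁.integrableOn_controlWeight hm.sqExpIntegrable).const_mul 2)
  have hk0 (r : ℝ) : 0 ≤ K r + ρ (u r) + 2 * controlWeight ν G g₁ r :=
    add_nonneg (add_nonneg (hm.nonneg r) (hm.weight_nonneg _))
      (mul_nonneg zero_le_two (controlWeight_nonneg r))
  obtain ⟨M, hM⟩ := isCompact_Icc.exists_bound_of_continuousOn hweak.continuousOn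
  have hpair := hg₁.integrable_inner_mul_sub hg (hc.sqExpIntegrable_noiseAlong hX)
    hweak.continuousOn hM
  have hR (s : ℝ) (hs : s ∈ Icc 0 T) : ∫ r in 0..s, 2 * ∫ z, ⟪noiseAlong f u (r, z), (X₁ - X) r⟫ *
      (g₁ (r, z) - g (r, z)) ∂ν ≤ 2 * δ := by
    rw [intervalIntegral.integral_const_mul, ← setIntegral_Icc_prod_univ hpair hs]
    exact mul_le_mul_of_nonneg_left (hδ s hs) zero_le_two
  have henergy := hweak.norm_sq_add_integral_le
    ((hc.isDrift_skeletonDrift hg₁ hX₁).sub (hc.isDrift_skeletonDrift hg hX))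
    ENNReal.ofReal_ne_top (c := 0) hk hk0 (integrable_zero _ _ _) (fun _ ↦ le_rfl)
    (hpair.integral_prod_left.const_mul 2)
    (by simpa using hc.ae_two_mul_skeletonDrift_sub_le hm hg₁ hg hX₁ hX) hR ht
  simpa [hweak.apply_zero (ht.1.trans ht.2) hi] using henergy

theorem exists_norm_sub_sq_le (hc : IsSkeletonCoeff T α β θ C ν F L i A f)
    (hm : IsLocallyMonotoneCoeff T α β C ν K ρ G i A f) (hi : DenseRange i)
    (hg : EntropyLE (spaceTime T ν) N g) (hX : IsSkeletonSolution T α ν i A f x g X u) :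
    ∃ c > 0, ∀ g₁ X₁ u₁, EntropyLE (spaceTime T ν) N g₁ →
      IsSkeletonSolution T α ν i A f x g₁ X₁ u₁ → ∀ δ ≥ 0, (∀ t ∈ Icc 0 T,
        ∫ q in Icc 0 t ×ˢ univ, ⟪noiseAlong f u q, (X₁ - X) q.1⟫ * (g₁ q - g q) ∂spaceTime T ν
          ≤ δ) → ∀ t ∈ Icc 0 T, ‖(X₁ - X) t‖ ^ 2 ≤ c * δ := by
  obtain ⟨S, hS⟩ := exists_forall_integral_controlWeight_le hm.sqExpIntegrable N
  refine ⟨2 * exp ((∫ r in Icc 0 T, (K r + ρ (u r))) + 2 * S), by positivity,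
    fun g₁ X₁ u₁ hg₁ hX₁ δ hδ0 hδ t ht ↦
      (hc.norm_sub_sq_le hm hi hg₁ hg hX₁ hX hδ ht).trans ?_⟩
  have hKρ : IntegrableOn (fun r ↦ K r + ρ (u r)) (Icc 0 T) :=
    hm.integrableOn.add (hc.integrableOn_weight hm hX)
  rw [integral_add hKρ ((hg₁.integrableOn_controlWeight hm.sqExpIntegrable).const_mul 2),
    integral_const_mul, mul_right_comm 2]
  gcongr
  exact hS g₁ hg₁

end IsSkeletonCoeff

theorem stmt_11_general [BorelSpace H] [SecondCountableTopology H] [BorelSpace V]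
    [SecondCountableTopology V] [SFinite ν] (hc : IsSkeletonCoeff T α β θ C ν F L i A f)
    (hm : IsLocallyMonotoneCoeff T α β C ν K ρ G i A f) (hT : 0 ≤ T) (hi : DenseRange i)
    {ι : Type*} {l : Filter ι} {gn : ι → ℝ × 𝕏 → ℝ} (hg : EntropyTendsto (spaceTime T ν) N gn l g)
    {Xn : ι → ℝ → H} {un : ι → ℝ → V}
    (hXn : ∀ n, IsSkeletonSolution T α ν i A f x (gn n) (Xn n) (un n))
    (hX : IsSkeletonSolution T α ν i A f x g X u) : TendstoUniformlyOn Xn X l (Icc 0 T) := by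
  obtain ⟨M, hM⟩ := hc.exists_isWeaklyEquiBV_sub hT hi hg.entropyLE hg.entropyLE_lim hXn hX
  obtain ⟨c, hc0, hstable⟩ := hc.exists_norm_sub_sq_le hm hi hg.entropyLE_lim hX
  have hpairing := hM.tendstoUniformlyOn_setIntegral hg hi
    (hc.measurable_noiseAlong hX.2.1.measurable) (hc.sqExpIntegrable_noiseAlong hX)
  rw [Metric.tendstoUniformlyOn_iff] at hpairing ⊢
  intro ε hε
  filter_upwards [hpairing (ε ^ 2 / (2 * c)) (by positivity)] with n hn t ht
  have hsq := hstable _ _ _ (hg.entropyLE n) (hXn n) (ε ^ 2 / (2 * c)) (by positivity)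
    (fun s hs ↦ (le_abs_self _).trans (by simpa using (hn s hs).le)) t ht
  rw [dist_comm, dist_eq_norm]
  refine lt_of_pow_lt_pow_left₀ 2 hε.le (hsq.trans_lt ?_)
  field_simp
  linarith

end Stability

theorem stmt_11
    {𝕏 : Type*} [TopologicalSpace 𝕏] [PolishSpace 𝕏] [LocallyCompactSpace 𝕏]
    [MeasurableSpace 𝕏] [BorelSpace 𝕏]
    {H : Type*} [NormedAddCommGroup H] [InnerProductSpace ℝ H]
    [TopologicalSpace.SeparableSpace H] [MeasurableSpace H] [BorelSpace H]
    {V : Type*} [NormedAddCommGroup V] [NormedSpace ℝ V]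
    [TopologicalSpace.SeparableSpace V] [MeasurableSpace V] [BorelSpace V]
    (hVrefl : Function.Surjective (NormedSpace.inclusionInDoubleDual ℝ V))
    (T : ℝ) (hT : 0 < T)
    (ν : Measure 𝕏) [SigmaFinite ν] (hνK : ∀ Kc : Set 𝕏, IsCompact Kc → ν Kc < ⊤)
    (νT : Measure (ℝ × 𝕏)) (hνT : νT = (volume.restrict (Set.Icc 0 T)).prod ν)
    (α β θ C : ℝ) (hα : 1 < α) (hβ : 0 ≤ β) (hθ : 0 < θ) (hC : 0 < C)
    (F K : ℝ → ℝ) (hFnn : ∀ t, 0 ≤ F t) (hKnn : ∀ t, 0 ≤ K t)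
    (hF : IntegrableOn F (Set.Icc 0 T)) (hK : IntegrableOn K (Set.Icc 0 T))
    (ρ : V → ℝ) (hρm : Measurable ρ) (hρnn : ∀ v, 0 ≤ ρ v)
    (hρb : ∀ R : ℝ, ∃ M : ℝ, ∀ v : V, ‖v‖ ≤ R → ρ v ≤ M)
    (i : V →L[ℝ] H) (hiInj : Function.Injective i) (hiDense : DenseRange i)
    (hiCpt : IsCompactOperator (⇑i))
    (A : ℝ → V → V →L[ℝ] ℝ)
    (hAm : ∀ v : V, Measurable fun q : ℝ × V => A q.1 q.2 v)
    (f : ℝ → V → 𝕏 → H)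
    (hfm : Measurable fun q : ℝ × V × 𝕏 => f q.1 q.2.1 q.2.2)
    (h1 : ∀ t ∈ Set.Icc (0 : ℝ) T, ∀ v₁ v₂ v : V,
      Continuous fun s : ℝ => A t (v₁ + s • v₂) v)
    (h2 : ∀ t ∈ Set.Icc (0 : ℝ) T, ∀ v₁ v₂ : V,
      2 * (A t v₁ (v₁ - v₂) - A t v₂ (v₁ - v₂))
          + ∫ z, ‖f t v₁ z - f t v₂ z‖ ^ (2 : ℕ) ∂ν
        ≤ (K t + ρ v₂) * ‖i v₁ - i v₂‖ ^ (2 : ℕ))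
    (h3 : ∀ t ∈ Set.Icc (0 : ℝ) T, ∀ v : V,
      2 * A t v v + θ * ‖v‖ ^ α ≤ F t * (1 + ‖i v‖ ^ (2 : ℕ)))
    (h4 : ∀ t ∈ Set.Icc (0 : ℝ) T, ∀ v : V,
      ‖A t v‖ ^ (α / (α - 1)) ≤ (F t + C * ‖v‖ ^ α) * (1 + ‖i v‖ ^ β))
    (Lf : ℝ × 𝕏 → ℝ) (hLfm : Measurable Lf) (hLfnn : ∀ q, 0 ≤ Lf q)
    (η₀ p Υ : ℝ) (hη₀ : 0 < η₀)
    (hΥ : Υ = max (max (2 * β * (α - 1) * (α + η₀) / α)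
        (4 * (α - 1) * (α + η₀) / α)) (max 4 (β + 2)))
    (hpΥ : Υ ≤ p)
    (hLfint : ∀ r ∈ ({2, 4, β + 2, Υ, Υ / 2} : Set ℝ),
      ∫⁻ q, ENNReal.ofReal (Lf q ^ r) ∂νT < ⊤)
    (hLfH : ∃ δ : ℝ, 0 < δ ∧ ∀ Γ : Set (ℝ × 𝕏), MeasurableSet Γ → νT Γ < ⊤ →
      ∫⁻ q in Γ, ENNReal.ofReal (Real.exp (δ * Lf q ^ p)) ∂νT < ⊤)
    (h5 : ∀ t ∈ Set.Icc (0 : ℝ) T, ∀ (v : V) (z : 𝕏),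
      ‖f t v z‖ ≤ Lf (t, z) * (1 + ‖i v‖))
    (Gf : ℝ × 𝕏 → ℝ) (hGfm : Measurable Gf) (hGfnn : ∀ q, 0 ≤ Gf q)
    (hGfint : ∫⁻ q, ENNReal.ofReal (Gf q ^ (2 : ℕ)) ∂νT < ⊤)
    (hGfH : ∃ δ : ℝ, 0 < δ ∧ ∀ Γ : Set (ℝ × 𝕏), MeasurableSet Γ → νT Γ < ⊤ →
      ∫⁻ q in Γ, ENNReal.ofReal (Real.exp (δ * Gf q ^ (2 : ℝ))) ∂νT < ⊤)
    (h6 : ∀ t ∈ Set.Icc (0 : ℝ) T, ∀ (v₁ v₂ : V) (z : 𝕏),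
      ‖f t v₁ z - f t v₂ z‖ ≤ Gf (t, z) * ‖i v₁ - i v₂‖)
    (hρgrow : ∀ v : V, ρ v ≤ C * (1 + ‖v‖ ^ α) * (1 + ‖i v‖ ^ β))
    (N : ℕ) (x : H) (gn : ℕ → ℝ × 𝕏 → ℝ) (g : ℝ × 𝕏 → ℝ)
    (hgn : ∀ n, Measurable (gn n) ∧ (∀ q, 0 ≤ gn n q) ∧
      (∫⁻ q, ENNReal.ofReal (gn n q * Real.log (gn n q) - gn n q + 1) ∂νT) ≤ (N : ℝ≥0∞))
    (hg : Measurable g ∧ (∀ q, 0 ≤ g q) ∧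
      (∫⁻ q, ENNReal.ofReal (g q * Real.log (g q) - g q + 1) ∂νT) ≤ (N : ℝ≥0∞))
    (hconv : ∀ φ : ℝ × 𝕏 → ℝ, Continuous φ → HasCompactSupport φ →
      Tendsto (fun n => ∫ q, φ q * gn n q ∂νT) atTop (nhds (∫ q, φ q * g q ∂νT)))
    (Xn : ℕ → ℝ → H) (un : ℕ → ℝ → V)
    (hXn : ∀ n, IsSkeletonSolution T α ν i A f x (gn n) (Xn n) (un n))
    (X : ℝ → H) (u : ℝ → V)
    (hX : IsSkeletonSolution T α ν i A f x g X u) :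
    ∀ ε : ℝ, 0 < ε → ∃ n₀ : ℕ, ∀ n ≥ n₀, ∀ t ∈ Set.Icc (0 : ℝ) T, ‖Xn n t - X t‖ ≤ ε := by
  subst hνT
  have := UniformSpace.secondCountable_of_separable H
  have := UniformSpace.secondCountable_of_separable V
  let := TopologicalSpace.upgradeIsCompletelyMetrizable 𝕏
  have : IsFiniteMeasureOnCompacts ν := ⟨fun s hs ↦ hνK s hs⟩
  have hΥ4 : 4 ≤ Υ := hΥ ▸ (le_max_left _ _).trans (le_max_right _ _)
  have hLf := sqExpIntegrable_of_setLIntegral_exp_lt_top hLfm hLfnn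
    (by simpa only [rpow_two] using hLfint 2 (by simp)) (by linarith) hLfH
  have hGf := sqExpIntegrable_of_setLIntegral_exp_lt_top hGfm hGfnn hGfint le_rfl hGfH
  have hcoeff : IsSkeletonCoeff T α β θ C ν F Lf i A f :=
    ⟨hα, hβ, hθ, hC.le, hFnn, hF, hAm, hfm, h3, h4, hLf,
      fun t ht v z ↦ (h5 t ht v z).trans_eq (by rw [norm_of_nonneg (hLfnn _)])⟩
  have hlocal : IsLocallyMonotoneCoeff T α β C ν K ρ Gf i A f :=
    ⟨hKnn, hK, hρm, hρnn, hρgrow, fun t ht v₁ v₂ ↦ (le_add_of_nonneg_right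
      (integral_nonneg fun z ↦ sq_nonneg _)).trans (h2 t ht v₁ v₂), hGf,
      fun t ht v₁ v₂ z ↦ (h6 t ht v₁ v₂ z).trans_eq (by rw [norm_of_nonneg (hGfnn _)])⟩
  have hunif := stmt_11_general hcoeff hlocal hT.le hiDense
    (entropyTendsto_of_tendsto_integral_mul (fun n ↦ entropyLE_of_lintegral_le (hgn n))
      (entropyLE_of_lintegral_le hg) hconv) hXn hX
  intro ε hε
  obtain ⟨n₀, hn₀⟩ := eventually_atTop.1 (Metric.tendstoUniformlyOn_iff.1 hunif ε hε)
  exact ⟨n₀, fun n hn t ht ↦ by simpa only [dist_eq_norm'] using (hn₀ n hn t ht).le⟩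
end

section
/- Fix N∈ℕ. Let r_n,r:[0,T]→V be strongly measurable with sup_n sup_{t∈[0,T]}‖i(r_n(t))‖_H < ∞ and sup_{t∈[0,T]}‖i(r(t))‖_H < ∞, and suppose that for some q>0, ∫_0^T ‖i(r_n(t))−i(r(t))‖_H^q dt → 0 as n→∞. Let g_n,g∈S^N be such that ∫_{𝕏_T} φ·g_n dν_T → ∫_{𝕏_T} φ·g dν_T for every continuous compactly supported φ:𝕏_T→ℝ, and assume the maps (s,z)↦f(s,r_n(s),z)·(g_n(s,z)−1) and (s,z)↦f(s,r(s),z)·(g(s,z)−1) are Bochner ν_T-integrable. Then for every t∈[0,T] and every h∈H: ⟨∫_0^t ∫_𝕏 f(s,r_n(s),z)·(g_n(s,z)−1) ν(dz) ds, h⟩_H → ⟨∫_0^t ∫_𝕏 f(s,r(s),z)·(g(s,z)−1) ν(dz) ds, h⟩_H as n→∞. -/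
open MeasureTheory Real Filter
open scoped ENNReal RealInnerProductSpace

open InformationTheory (klFun klFun_nonneg measurable_klFun)
open scoped NNReal Topology

/-!
The entropy density `l r = r log r - r + 1` and the exponential remainder `exp y - 1 - y` are
convex conjugates up to a shift, so Young's inequality, applied to `σ ‖φ‖` and `g`, gives
`∫ ‖(g - 1) φ‖ ≤ σ⁻¹ (N + ∫ (exp (σ ‖φ‖) - 1 - σ ‖φ‖))` whenever the entropy of `g` is at most `N`.
Letting `σ → ∞`, the pairings `φ ↦ ∫ (g - 1) φ` are equicontinuous, uniformly over such `g`, on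
the space of all `φ` for which the right-hand side is finite for every `σ`. Simple functions are
dense there, and continuous functions of compact support approximate indicators, so vague
convergence of the densities `gₙ` tests against every such `φ`, with convergence in norm when `φ`
is vector-valued; the same bound lets `φ` vary with `n` by dominated convergence. Finally, a square
integrable function in `ℋ₂` belongs to this space, because `σ x ≤ σ² / δ + δ x²`.
-/

/-- The first-order Taylor remainder of `exp` at `0`, which is the convex conjugate of
`x ↦ klFun (1 + x)`. -/
noncomputable def expRem (y : ℝ) : ℝ := exp y - 1 - y

lemma expRem_zero : expRem 0 = 0 := by simp [expRem]

lemma expRem_nonneg (y : ℝ) : 0 ≤ expRem y := by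
  unfold expRem
  linarith [add_one_le_exp y]

lemma expRem_pos {y : ℝ} (hy : y ≠ 0) : 0 < expRem y := by
  unfold expRem
  linarith [add_one_lt_exp hy]

@[fun_prop]
lemma continuous_expRem : Continuous expRem := by
  unfold expRem
  fun_prop

lemma expRem_le_exp {y : ℝ} (hy : 0 ≤ y) : expRem y ≤ exp y := by
  unfold expRem
  linarith

lemma expRem_le_expRem {x y : ℝ} (hx : 0 ≤ x) (hxy : x ≤ y) : expRem x ≤ expRem y := by
  have hexp : exp y = exp x * exp (y - x) := by rw [← exp_add, add_sub_cancel]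
  unfold expRem
  nlinarith [add_one_le_exp (y - x), one_le_exp hx]

lemma expRem_neg_le {y : ℝ} (hy : 0 ≤ y) : expRem (-y) ≤ expRem y := by
  have hsinh := self_le_sinh_iff.2 hy
  rw [sinh_eq] at hsinh
  unfold expRem
  linarith

lemma expRem_le_sq_mul_exp {y : ℝ} (hy : 0 ≤ y) : expRem y ≤ y ^ 2 * exp y := by
  have hexp : exp y - 1 ≤ y * exp y := by
    have hinv : exp (-y) * exp y = 1 := by rw [← exp_add, neg_add_cancel, exp_zero]
    nlinarith [exp_pos y, add_one_le_exp (-y)]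
  unfold expRem
  nlinarith

lemma expRem_mul_le_exp_mul_exp_sq {σ δ x : ℝ} (hσ : 0 ≤ σ) (hδ : 0 < δ) (hx : 0 ≤ x) :
    expRem (σ * x) ≤ exp (σ ^ 2 / δ) * exp (δ * x ^ 2) := by
  have hyoung : σ * x ≤ σ ^ 2 / δ + δ * x ^ 2 := by
    rw [div_add' _ _ _ hδ.ne', le_div_iff₀ hδ]
    nlinarith [sq_nonneg (σ - δ * x), mul_nonneg (mul_nonneg hσ hx) hδ.le]
  rw [← exp_add]
  exact (expRem_le_exp (by positivity)).trans (exp_le_exp.2 hyoung)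

lemma expRem_mul_le_of_le_one {σ x : ℝ} (hσ : 0 ≤ σ) (hx : 0 ≤ x) (hx1 : x ≤ 1) :
    expRem (σ * x) ≤ σ ^ 2 * exp σ * x ^ 2 :=
  calc expRem (σ * x) ≤ (σ * x) ^ 2 * exp (σ * x) := expRem_le_sq_mul_exp (by positivity)
    _ ≤ (σ * x) ^ 2 * exp σ := by gcongr; exact mul_le_of_le_one_right hσ hx1
    _ = σ ^ 2 * exp σ * x ^ 2 := by ring

lemma mul_sub_one_le_klFun_add_expRem (y : ℝ) {b : ℝ} (hb : 0 ≤ b) :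
    y * (b - 1) ≤ klFun b + expRem y := by
  unfold klFun expRem
  rcases hb.eq_or_lt with rfl | hb
  · linarith [exp_pos y]
  · have hexp : exp y = b * exp (y - log b) := by
      rw [exp_sub, exp_log hb, mul_div_cancel₀ _ hb.ne']
    nlinarith [add_one_le_exp (y - log b)]

lemma mul_abs_sub_one_le_klFun_add_expRem {y b : ℝ} (hy : 0 ≤ y) (hb : 0 ≤ b) :
    y * |b - 1| ≤ klFun b + expRem y := by
  rcases abs_cases (b - 1) with ⟨habs, -⟩ | ⟨habs, -⟩
  · rw [habs]
    exact mul_sub_one_le_klFun_add_expRem y hb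
  · rw [habs]
    linarith [mul_sub_one_le_klFun_add_expRem (-y) hb, expRem_neg_le hy]

section Heart

variable {Y E F ι : Type*} [MeasurableSpace Y] {μ : Measure Y} [NormedAddCommGroup E]
  [NormedAddCommGroup F] {l : Filter ι}

/-- The modular of the Orlicz space of the Young function `expRem`, evaluated at `σ • φ`. In terms
of the Luxemburg norm, `expModular σ φ μ ≤ 1` says `‖φ‖ ≤ σ⁻¹`. -/
noncomputable def expModular (σ : ℝ) (φ : Y → E) (μ : Measure Y) : ℝ≥0∞ :=
  ∫⁻ q, ENNReal.ofReal (expRem (σ * ‖φ q‖)) ∂μ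

/-- The heart (Morse–Transue space) of the exponential Orlicz space: all multiples of `φ` have
finite modular. Densities of finite entropy act on this space by integration. -/
structure MemExpHeart (φ : Y → E) (μ : Measure Y) : Prop where
  aestronglyMeasurable : AEStronglyMeasurable φ μ
  expModular_lt_top : ∀ σ : ℝ, 0 < σ → expModular σ φ μ < ⊤

lemma expModular_mono {φ : Y → E} {G : Y → F} {σ : ℝ} (hσ : 0 ≤ σ)
    (h : ∀ᵐ q ∂μ, ‖φ q‖ ≤ ‖G q‖) : expModular σ φ μ ≤ expModular σ G μ := by
  refine lintegral_mono_ae ?_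
  filter_upwards [h] with q hq
  exact ENNReal.ofReal_le_ofReal (expRem_le_expRem (by positivity) (by gcongr))

lemma MemExpHeart.mono {φ : Y → E} {G : Y → F} (hG : MemExpHeart G μ)
    (hφ : AEStronglyMeasurable φ μ) (h : ∀ᵐ q ∂μ, ‖φ q‖ ≤ ‖G q‖) : MemExpHeart φ μ :=
  ⟨hφ, fun σ hσ => (expModular_mono hσ.le h).trans_lt (hG.expModular_lt_top σ hσ)⟩

lemma MemExpHeart.norm {φ : Y → E} (hφ : MemExpHeart φ μ) : MemExpHeart (fun q => ‖φ q‖) μ :=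
  hφ.mono hφ.aestronglyMeasurable.norm (Eventually.of_forall fun q => (norm_norm (φ q)).le)

lemma memExpHeart_zero : MemExpHeart (0 : Y → E) μ :=
  ⟨aestronglyMeasurable_zero, fun σ _ => by simp [expModular, expRem_zero]⟩

lemma MemExpHeart.const_smul [NormedSpace ℝ E] {φ : Y → E} (hφ : MemExpHeart φ μ) (c : ℝ) :
    MemExpHeart (c • φ) μ := by
  rcases eq_or_ne c 0 with rfl | hc
  · simpa only [zero_smul] using memExpHeart_zero
  · refine ⟨hφ.aestronglyMeasurable.const_smul c, fun σ hσ => ?_⟩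
    simpa only [expModular, Pi.smul_apply, norm_smul, mul_assoc] using
      hφ.expModular_lt_top (σ * ‖c‖) (by positivity)

lemma expModular_indicator_const (σ : ℝ) {B : Set Y} (hB : MeasurableSet B) (c : E) :
    expModular σ (B.indicator fun _ => c) μ = ENNReal.ofReal (expRem (σ * ‖c‖)) * μ B := by
  rw [expModular, ← lintegral_indicator_const hB]
  congr with q
  by_cases hq : q ∈ B <;> simp [hq, expRem_zero]

lemma memExpHeart_indicator_const {B : Set Y} (hB : MeasurableSet B) (hμB : μ B ≠ ⊤) (c : E) :
    MemExpHeart (B.indicator fun _ => c) μ := by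
  refine ⟨(stronglyMeasurable_const.indicator hB).aestronglyMeasurable, fun σ _ => ?_⟩
  rw [expModular_indicator_const σ hB]
  finiteness

lemma MemExpHeart.measure_ne_top {B : Set Y} (hB : MeasurableSet B) {c : E} (hc : c ≠ 0)
    (h : MemExpHeart (B.indicator fun _ => c) μ) : μ B ≠ ⊤ := by
  have hpos : 0 < expRem (1 * ‖c‖) := expRem_pos (by simpa using hc)
  have hfin := h.expModular_lt_top 1 one_pos
  rw [expModular_indicator_const 1 hB] at hfin
  exact (ENNReal.lt_top_of_mul_ne_top_right hfin.ne (by simpa using hpos)).ne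

lemma memExpHeart_of_hasCompactSupport [TopologicalSpace Y] [OpensMeasurableSpace Y]
    [IsFiniteMeasureOnCompacts μ] {φ : Y → E} (hc : Continuous φ) (hs : HasCompactSupport φ) :
    MemExpHeart φ μ := by
  refine ⟨(hc.integrable_of_hasCompactSupport hs).aestronglyMeasurable, fun σ _ => ?_⟩
  have hmod : Integrable (fun q => expRem (σ * ‖φ q‖)) μ :=
    Continuous.integrable_of_hasCompactSupport (by fun_prop)
      (hs.comp_left (g := fun x => expRem (σ * ‖x‖)) (by simp [expRem_zero]))
  exact hmod.lintegral_lt_top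

/-- Chebyshev's inequality makes `{1 ≤ |G|}` of finite measure, where exponential integrability
applies; on its complement the modular is quadratic. -/
lemma memExpHeart_of_lintegral_sq_of_exp_sq {G : Y → ℝ} (hGm : Measurable G)
    (hsq : ∫⁻ q, ENNReal.ofReal (G q ^ 2) ∂μ < ⊤)
    (hexp : ∃ δ : ℝ, 0 < δ ∧ ∀ Γ : Set Y, MeasurableSet Γ → μ Γ < ⊤ →
      ∫⁻ q in Γ, ENNReal.ofReal (exp (δ * G q ^ 2)) ∂μ < ⊤) :
    MemExpHeart G μ := by
  obtain ⟨δ, hδ, hΓ⟩ := hexp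
  set A : Set Y := {q | 1 ≤ |G q|}
  have hA : MeasurableSet A := measurableSet_le measurable_const hGm.abs
  have hμA : μ A < ⊤ := by
    have hcheb := meas_ge_le_lintegral_div (μ := μ) (f := fun q => ENNReal.ofReal (G q ^ 2))
      (by fun_prop) one_ne_zero ENNReal.one_ne_top
    rw [div_one] at hcheb
    refine (measure_mono fun q (hq : 1 ≤ |G q|) => ?_).trans_lt (hcheb.trans_lt hsq)
    simpa using hq
  refine ⟨hGm.aestronglyMeasurable, fun σ hσ => ?_⟩
  have hlarge : ∀ q, ENNReal.ofReal (expRem (σ * ‖G q‖)) ≤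
      ENNReal.ofReal (exp (σ ^ 2 / δ)) * ENNReal.ofReal (exp (δ * G q ^ 2)) := fun q => by
    rw [← ENNReal.ofReal_mul (exp_pos _).le, ← sq_abs (G q), ← norm_eq_abs]
    exact ENNReal.ofReal_le_ofReal (expRem_mul_le_exp_mul_exp_sq hσ.le hδ (norm_nonneg _))
  have hsmall : ∀ q ∈ Aᶜ, ENNReal.ofReal (expRem (σ * ‖G q‖)) ≤
      ENNReal.ofReal (σ ^ 2 * exp σ) * ENNReal.ofReal (G q ^ 2) := fun q hq => by
    have hle : ‖G q‖ ≤ 1 := (not_le.1 (show ¬1 ≤ |G q| from hq)).le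
    rw [← ENNReal.ofReal_mul (by positivity), ← sq_abs (G q), ← norm_eq_abs]
    exact ENNReal.ofReal_le_ofReal (expRem_mul_le_of_le_one hσ.le (norm_nonneg _) hle)
  rw [expModular, ← lintegral_add_compl _ hA]
  refine ENNReal.add_lt_top.2 ⟨(lintegral_mono hlarge).trans_lt ?_,
    (setLIntegral_mono' hA.compl hsmall).trans_lt ?_⟩ <;>
  rw [lintegral_const_mul' _ _ ENNReal.ofReal_ne_top]
  · exact ENNReal.mul_lt_top ENNReal.ofReal_lt_top (hΓ A hA hμA)
  · exact ENNReal.mul_lt_top ENNReal.ofReal_lt_top ((setLIntegral_le_lintegral _ _).trans_lt hsq)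

lemma ae_norm_le_of_tendsto [l.NeBot] [l.IsCountablyGenerated] {φ : ι → Y → E} {ψ : Y → E}
    {b : Y → ℝ} (hle : ∀ n, ∀ᵐ q ∂μ, ‖φ n q‖ ≤ b q)
    (hlim : ∀ᵐ q ∂μ, Tendsto (φ · q) l (𝓝 (ψ q))) : ∀ᵐ q ∂μ, ‖ψ q‖ ≤ b q := by
  obtain ⟨u, hu⟩ := l.exists_seq_tendsto
  filter_upwards [ae_all_iff.2 fun k => hle (u k), hlim] with q hq hqlim
  exact le_of_tendsto (hqlim.comp hu).norm (Eventually.of_forall hq)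

lemma MemExpHeart.of_tendsto [l.NeBot] [l.IsCountablyGenerated] {φ : ι → Y → E} {ψ : Y → E}
    {G : Y → F} (hG : MemExpHeart G μ) (hφ : ∀ n, AEStronglyMeasurable (φ n) μ)
    (hle : ∀ n, ∀ᵐ q ∂μ, ‖φ n q‖ ≤ ‖G q‖) (hlim : ∀ᵐ q ∂μ, Tendsto (φ · q) l (𝓝 (ψ q))) :
    MemExpHeart ψ μ :=
  hG.mono (aestronglyMeasurable_of_tendsto_ae l hφ hlim) (ae_norm_le_of_tendsto hle hlim)

lemma MemExpHeart.tendsto_expModular [l.IsCountablyGenerated] {φ : ι → Y → E} {G : Y → F}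
    (hG : MemExpHeart G μ) (hφ : ∀ n, AEStronglyMeasurable (φ n) μ)
    (hle : ∀ n, ∀ᵐ q ∂μ, ‖φ n q‖ ≤ ‖G q‖) (hlim : ∀ᵐ q ∂μ, Tendsto (φ · q) l (𝓝 0))
    {σ : ℝ} (hσ : 0 < σ) : Tendsto (fun n => expModular σ (φ n) μ) l (𝓝 0) := by
  have hcont : Continuous fun x : E => ENNReal.ofReal (expRem (σ * ‖x‖)) :=
    ENNReal.continuous_ofReal.comp (by fun_prop)
  have hdct := tendsto_lintegral_filter_of_dominated_convergence' (l := l) (f := fun _ => 0)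
    (fun q => ENNReal.ofReal (expRem (σ * ‖G q‖)))
    (Eventually.of_forall fun n => (hcont.comp_aestronglyMeasurable (hφ n)).aemeasurable)
    (Eventually.of_forall fun n => ?_) (hG.expModular_lt_top σ hσ).ne ?_
  · simpa only [expModular, lintegral_zero] using hdct
  · filter_upwards [hle n] with q hq
    exact ENNReal.ofReal_le_ofReal (expRem_le_expRem (by positivity) (by gcongr))
  · filter_upwards [hlim] with q hq
    simpa [expRem_zero, Function.comp_def] using (hcont.tendsto 0).comp hq

lemma MemExpHeart.exists_simpleFunc [NormedSpace ℝ E] {ψ : Y → E} (hψ : MemExpHeart ψ μ) {σ : ℝ}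
    (hσ : 0 < σ) : ∃ s : SimpleFunc Y E, MemExpHeart s μ ∧ expModular σ (ψ - ⇑s) μ ≤ 1 := by
  borelize E
  obtain ⟨ψ', hm, hψ'⟩ := hψ.aestronglyMeasurable
  have := hm.separableSpace_range_union_singleton (b := (0 : E))
  have h₀ : (0 : E) ∈ Set.range ψ' ∪ {0} := Or.inr rfl
  let s : ℕ → SimpleFunc Y E := SimpleFunc.approxOn ψ' hm.measurable _ 0 h₀
  have hle : ∀ n, ∀ᵐ q ∂μ, ‖(ψ - ⇑(s n)) q‖ ≤ ‖ψ q‖ := fun n => by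
    filter_upwards [hψ'] with q hq
    have hdist : ‖s n q - ψ' q‖ ≤ ‖ψ' q - 0‖ :=
      SimpleFunc.nnnorm_approxOn_le hm.measurable h₀ q n
    rwa [sub_zero, norm_sub_rev, ← hq] at hdist
  have hlim : ∀ᵐ q ∂μ, Tendsto (fun n => (ψ - ⇑(s n)) q) atTop (𝓝 0) := by
    filter_upwards [hψ'] with q hq
    have hs : Tendsto (fun n => s n q) atTop (𝓝 (ψ' q)) :=
      SimpleFunc.tendsto_approxOn hm.measurable h₀ (subset_closure (Or.inl ⟨q, rfl⟩))
    simpa only [Pi.sub_apply, hq, sub_self] using hs.const_sub (ψ' q)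
  have hmod := hψ.tendsto_expModular (fun n => hψ.aestronglyMeasurable.sub
    (s n).aestronglyMeasurable) hle hlim hσ
  obtain ⟨n, hn⟩ := (ENNReal.tendsto_nhds_zero.1 hmod 1 one_pos).exists
  refine ⟨s n, (hψ.const_smul 2).mono (s n).aestronglyMeasurable ?_, hn⟩
  filter_upwards [hψ'] with q hq
  rw [Pi.smul_apply, norm_smul, norm_ofNat, hq, two_mul]
  exact SimpleFunc.norm_approxOn_zero_le hm.measurable h₀ q n

/-- Nonnegative densities of relative entropy at most `N` with respect to `μ`, the sublevel set
`S^N` of the functional `L_T`; `klFun r` is `l r = r log r - r + 1`. -/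
structure EntropyLE_s13 (g : Y → ℝ) (N : ℝ≥0) (μ : Measure Y) : Prop where
  aemeasurable : AEMeasurable g μ
  nonneg : ∀ᵐ q ∂μ, 0 ≤ g q
  lintegral_le : ∫⁻ q, ENNReal.ofReal (klFun (g q)) ∂μ ≤ N

variable [NormedSpace ℝ E] {g g' : Y → ℝ} {gs : ι → Y → ℝ} {N : ℝ≥0} {φ ψ : Y → E} {σ : ℝ}

lemma EntropyLE_s13.lintegral_enorm_sub_one_smul_le (hg : EntropyLE_s13 g N μ) (φ : Y → E)
    (hσ : 0 < σ) :
    ∫⁻ q, ‖(g q - 1) • φ q‖ₑ ∂μ ≤ ENNReal.ofReal σ⁻¹ * (N + expModular σ φ μ) := by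
  have hkl : AEMeasurable (fun q => ENNReal.ofReal (klFun (g q))) μ :=
    (measurable_klFun.comp_aemeasurable hg.aemeasurable).ennreal_ofReal
  have hyoung : ∀ᵐ q ∂μ, ‖(g q - 1) • φ q‖ₑ ≤ ENNReal.ofReal σ⁻¹ *
      (ENNReal.ofReal (klFun (g q)) + ENNReal.ofReal (expRem (σ * ‖φ q‖))) := by
    filter_upwards [hg.nonneg] with q hq
    rw [← ENNReal.ofReal_add (klFun_nonneg hq) (expRem_nonneg _),
      ← ENNReal.ofReal_mul (by positivity), ← ofReal_norm, norm_smul, norm_eq_abs]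
    refine ENNReal.ofReal_le_ofReal ((le_inv_mul_iff₀ hσ).2 ?_)
    rw [mul_comm |_|, ← mul_assoc]
    exact mul_abs_sub_one_le_klFun_add_expRem (by positivity) hq
  calc ∫⁻ q, ‖(g q - 1) • φ q‖ₑ ∂μ
      ≤ ∫⁻ q, ENNReal.ofReal σ⁻¹ * (ENNReal.ofReal (klFun (g q)) +
          ENNReal.ofReal (expRem (σ * ‖φ q‖))) ∂μ := lintegral_mono_ae hyoung
    _ = ENNReal.ofReal σ⁻¹ * (∫⁻ q, ENNReal.ofReal (klFun (g q)) ∂μ + expModular σ φ μ) := by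
        rw [lintegral_const_mul' _ _ ENNReal.ofReal_ne_top, lintegral_add_left' hkl, expModular]
    _ ≤ ENNReal.ofReal σ⁻¹ * (N + expModular σ φ μ) := by
        gcongr
        exact hg.lintegral_le

lemma EntropyLE_s13.integrable_sub_one_smul (hg : EntropyLE_s13 g N μ) (hφ : MemExpHeart φ μ) :
    Integrable (fun q => (g q - 1) • φ q) μ := by
  refine ⟨(hg.aemeasurable.sub_const 1).aestronglyMeasurable.smul hφ.aestronglyMeasurable, ?_⟩
  refine (hg.lintegral_enorm_sub_one_smul_le φ one_pos).trans_lt ?_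
  exact ENNReal.mul_lt_top ENNReal.ofReal_lt_top
    (ENNReal.add_lt_top.2 ⟨ENNReal.coe_lt_top, hφ.expModular_lt_top 1 one_pos⟩)

lemma EntropyLE_s13.dist_integral_sub_one_smul_le (hg : EntropyLE_s13 g N μ) (hφ : MemExpHeart φ μ)
    (hψ : MemExpHeart ψ μ) (hσ : 0 < σ) (hle : expModular σ (φ - ψ) μ ≤ 1) :
    dist (∫ q, (g q - 1) • φ q ∂μ) (∫ q, (g q - 1) • ψ q ∂μ) ≤ σ⁻¹ * (N + 1) := by
  have hbound : ‖∫ q, (g q - 1) • (φ - ψ) q ∂μ‖ₑ ≤ ENNReal.ofReal (σ⁻¹ * (N + 1)) :=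
    calc ‖∫ q, (g q - 1) • (φ - ψ) q ∂μ‖ₑ
        ≤ ∫⁻ q, ‖(g q - 1) • (φ - ψ) q‖ₑ ∂μ := enorm_integral_le_lintegral_enorm _
      _ ≤ ENNReal.ofReal σ⁻¹ * (N + expModular σ (φ - ψ) μ) :=
          hg.lintegral_enorm_sub_one_smul_le _ hσ
      _ ≤ ENNReal.ofReal σ⁻¹ * (N + 1) := by gcongr
      _ = ENNReal.ofReal (σ⁻¹ * (N + 1)) := by
          rw [ENNReal.ofReal_mul (by positivity), ENNReal.ofReal_add N.coe_nonneg zero_le_one,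
            ENNReal.ofReal_coe_nnreal, ENNReal.ofReal_one]
  rw [dist_eq_norm, ← integral_sub (hg.integrable_sub_one_smul hφ) (hg.integrable_sub_one_smul hψ)]
  rw [← ofReal_norm, ENNReal.ofReal_le_ofReal_iff (by positivity)] at hbound
  simpa only [Pi.sub_apply, smul_sub] using hbound

lemma tendsto_integral_sub_one_smul_of_approx (hψ : MemExpHeart ψ μ)
    (hgs : ∀ n, EntropyLE_s13 (gs n) N μ) (hg' : EntropyLE_s13 g' N μ)
    (happrox : ∀ σ : ℝ, 0 < σ → ∃ φ : Y → E, MemExpHeart φ μ ∧ expModular σ (ψ - φ) μ ≤ 1 ∧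
      Tendsto (fun n => ∫ q, (gs n q - 1) • φ q ∂μ) l (𝓝 (∫ q, (g' q - 1) • φ q ∂μ))) :
    Tendsto (fun n => ∫ q, (gs n q - 1) • ψ q ∂μ) l (𝓝 (∫ q, (g' q - 1) • ψ q ∂μ)) := by
  rw [Metric.tendsto_nhds]
  intro ε hε
  have hσ : 0 < 3 * (N + 1) / ε := by positivity
  have hσε : (3 * (N + 1) / ε)⁻¹ * (N + 1) = ε / 3 := by field_simp
  obtain ⟨φ, hφ, hle, hlim⟩ := happrox _ hσ
  filter_upwards [Metric.tendsto_nhds.1 hlim (ε / 3) (by positivity)] with n hn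
  have hψφ := (hgs n).dist_integral_sub_one_smul_le hψ hφ hσ hle
  have hφψ := hg'.dist_integral_sub_one_smul_le hψ hφ hσ hle
  rw [dist_comm] at hφψ
  linarith [dist_triangle4 (∫ q, (gs n q - 1) • ψ q ∂μ) (∫ q, (gs n q - 1) • φ q ∂μ)
    (∫ q, (g' q - 1) • φ q ∂μ) (∫ q, (g' q - 1) • ψ q ∂μ)]

/-- Since `σ` is arbitrary in the entropy bound, the term `σ⁻¹ N` costs nothing in the limit. -/
lemma MemExpHeart.tendsto_lintegral_enorm_sub_one_smul [l.IsCountablyGenerated]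
    {φs : ι → Y → E} {G : Y → F} (hG : MemExpHeart G μ)
    (hφs : ∀ n, AEStronglyMeasurable (φs n) μ) (hle : ∀ n, ∀ᵐ q ∂μ, ‖φs n q‖ ≤ ‖G q‖)
    (hlim : ∀ᵐ q ∂μ, Tendsto (φs · q) l (𝓝 0)) (hgs : ∀ n, EntropyLE_s13 (gs n) N μ) :
    Tendsto (fun n => ∫⁻ q, ‖(gs n q - 1) • φs n q‖ₑ ∂μ) l (𝓝 0) := by
  rw [ENNReal.tendsto_nhds_zero]
  intro ε hε
  obtain ⟨σ, hσ, hσε⟩ : ∃ σ : ℝ, 0 < σ ∧ ENNReal.ofReal σ⁻¹ * (N + 1) ≤ ε := by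
    have hinv : Tendsto (fun σ : ℝ => ENNReal.ofReal σ⁻¹ * (N + 1)) atTop (𝓝 0) := by
      simpa using ENNReal.Tendsto.mul_const
        (ENNReal.tendsto_ofReal tendsto_inv_atTop_zero) (Or.inr (by finiteness))
    exact ((eventually_gt_atTop 0).and (ENNReal.tendsto_nhds_zero.1 hinv ε hε)).exists
  filter_upwards [ENNReal.tendsto_nhds_zero.1
    (hG.tendsto_expModular hφs hle hlim hσ) 1 one_pos] with n hn
  calc ∫⁻ q, ‖(gs n q - 1) • φs n q‖ₑ ∂μ
      ≤ ENNReal.ofReal σ⁻¹ * (N + expModular σ (φs n) μ) :=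
        (hgs n).lintegral_enorm_sub_one_smul_le _ hσ
    _ ≤ ENNReal.ofReal σ⁻¹ * (N + 1) := by gcongr
    _ ≤ ε := hσε

section Vague

variable [TopologicalSpace Y]

/-- Vague convergence of the densities `gs` to `g'` with respect to `μ`. -/
def TendstoVaguely (gs : ι → Y → ℝ) (l : Filter ι) (g' : Y → ℝ) (μ : Measure Y) : Prop :=
  ∀ φ : Y → ℝ, Continuous φ → HasCompactSupport φ →
    Tendsto (fun n => ∫ q, φ q * gs n q ∂μ) l (𝓝 (∫ q, φ q * g' q ∂μ))

lemma TendstoVaguely.comp {κ : Type*} {l' : Filter κ} {u : κ → ι} (hv : TendstoVaguely gs l g' μ)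
    (hu : Tendsto u l' l) : TendstoVaguely (gs ∘ u) l' g' μ :=
  fun φ hc hs => (hv φ hc hs).comp hu

lemma TendstoVaguely.tendsto_integral_sub_one_smul_of_hasCompactSupport [OpensMeasurableSpace Y]
    [IsFiniteMeasureOnCompacts μ] (hv : TendstoVaguely gs l g' μ)
    (hgs : ∀ n, EntropyLE_s13 (gs n) N μ) (hg' : EntropyLE_s13 g' N μ) {φ : Y → ℝ} (hc : Continuous φ)
    (hs : HasCompactSupport φ) :
    Tendsto (fun n => ∫ q, (gs n q - 1) • φ q ∂μ) l (𝓝 (∫ q, (g' q - 1) • φ q ∂μ)) := by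
  have hφ : Integrable φ μ := hc.integrable_of_hasCompactSupport hs
  have hsplit : ∀ k : Y → ℝ, EntropyLE_s13 k N μ →
      ∫ q, (k q - 1) • φ q ∂μ = ∫ q, φ q * k q ∂μ - ∫ q, φ q ∂μ := fun k hk => by
    have hint := hk.integrable_sub_one_smul (memExpHeart_of_hasCompactSupport hc hs)
    rw [eq_sub_iff_add_eq, ← integral_add hint hφ]
    congr with q
    rw [smul_eq_mul]
    ring
  simp_rw [fun n => hsplit _ (hgs n), hsplit _ hg']
  exact (hv φ hc hs).sub_const _

variable [BorelSpace Y] [T2Space Y] [LocallyCompactSpace Y] [μ.Regular]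

/-- A Urysohn function between a compact `K ⊆ B` and an open `U ⊇ B` differs from the indicator of
`B` by at most `1`, and only on `U \ K`, a set of small measure. -/
lemma exists_hasCompactSupport_expModular_indicator_sub_le {B : Set Y} (hB : MeasurableSet B)
    (hμB : μ B ≠ ⊤) (hσ : 0 < σ) :
    ∃ φ : Y → ℝ, Continuous φ ∧ HasCompactSupport φ ∧
      expModular σ (B.indicator (fun _ => (1 : ℝ)) - φ) μ ≤ 1 := by
  set c := ENNReal.ofReal (expRem σ)
  have hε : (2 * c)⁻¹ ≠ 0 := by
    rw [ENNReal.inv_ne_zero]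
    finiteness
  obtain ⟨K, hKB, hK, hμK⟩ := hB.exists_isCompact_sdiff_lt hμB hε
  obtain ⟨U, hBU, hU, -, hμU⟩ := hB.exists_isOpen_sdiff_lt hμB hε
  obtain ⟨φ, hφK, hs, hφU, hφ01⟩ :=
    exists_continuousMap_one_of_isCompact_subset_isOpen hK hU (hKB.trans hBU)
  have hle : ∀ q, ‖(B.indicator (fun _ => (1 : ℝ)) - ⇑φ) q‖ ≤
      ‖(U \ K).indicator (fun _ => (1 : ℝ)) q‖ := fun q => by
    by_cases hqK : q ∈ K
    · simp [hKB hqK, hφK hqK]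
    by_cases hqU : q ∈ U
    · have hind : B.indicator (fun _ => (1 : ℝ)) q ∈ Set.Icc 0 1 := by
        by_cases hqB : q ∈ B <;> simp [hqB]
      simpa [hqK, hqU] using abs_sub_le_of_le_of_le hind.1 hind.2 (hφ01 q).1 (hφ01 q).2
    · have hφq : φ q = 0 := image_eq_zero_of_notMem_tsupport fun hq => hqU (hφU hq)
      have hqB : q ∉ B := fun hq => hqU (hBU hq)
      simp [hqU, hqB, hφq]
  refine ⟨φ, φ.continuous, hs, ?_⟩
  calc expModular σ (B.indicator (fun _ => (1 : ℝ)) - ⇑φ) μ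
      ≤ expModular σ ((U \ K).indicator fun _ => (1 : ℝ)) μ :=
        expModular_mono hσ.le (Eventually.of_forall hle)
    _ = c * μ (U \ K) := by
        rw [expModular_indicator_const σ (hU.measurableSet.diff hK.measurableSet), norm_one,
          mul_one]
    _ ≤ c * ((2 * c)⁻¹ + (2 * c)⁻¹) := by
        gcongr
        calc μ (U \ K) ≤ μ (U \ B ∪ B \ K) := measure_mono (sdiff_triangle U B K)
          _ ≤ _ := (measure_union_le _ _).trans (add_le_add hμU.le hμK.le)
    _ = 2 * c * (2 * c)⁻¹ := by ring
    _ ≤ 1 := ENNReal.mul_inv_le_one _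

lemma TendstoVaguely.tendsto_integral_sub_one_smul_indicator_const [CompleteSpace E]
    (hv : TendstoVaguely gs l g' μ) (hgs : ∀ n, EntropyLE_s13 (gs n) N μ) (hg' : EntropyLE_s13 g' N μ)
    {B : Set Y} (hB : MeasurableSet B) (hμB : μ B ≠ ⊤) (c : E) :
    Tendsto (fun n => ∫ q, (gs n q - 1) • B.indicator (fun _ => c) q ∂μ) l
      (𝓝 (∫ q, (g' q - 1) • B.indicator (fun _ => c) q ∂μ)) := by
  have hscalar : Tendsto (fun n => ∫ q, (gs n q - 1) • B.indicator (fun _ => (1 : ℝ)) q ∂μ) l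
      (𝓝 (∫ q, (g' q - 1) • B.indicator (fun _ => (1 : ℝ)) q ∂μ)) := by
    refine tendsto_integral_sub_one_smul_of_approx (memExpHeart_indicator_const hB hμB 1) hgs hg'
      fun σ hσ => ?_
    obtain ⟨φ, hc, hs, hle⟩ := exists_hasCompactSupport_expModular_indicator_sub_le hB hμB hσ
    exact ⟨φ, memExpHeart_of_hasCompactSupport hc hs, hle,
      hv.tendsto_integral_sub_one_smul_of_hasCompactSupport hgs hg' hc hs⟩
  have hfactor : ∀ k : Y → ℝ, ∫ q, (k q - 1) • B.indicator (fun _ => c) q ∂μ =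
      (∫ q, (k q - 1) • B.indicator (fun _ => (1 : ℝ)) q ∂μ) • c := fun k => by
    rw [← integral_smul_const]
    congr with q
    by_cases hq : q ∈ B <;> simp [hq]
  simpa only [hfactor] using hscalar.smul_const c

lemma TendstoVaguely.tendsto_integral_sub_one_smul_simpleFunc [CompleteSpace E]
    (hv : TendstoVaguely gs l g' μ) (hgs : ∀ n, EntropyLE_s13 (gs n) N μ) (hg' : EntropyLE_s13 g' N μ)
    (s : SimpleFunc Y E) (hs : MemExpHeart s μ) :
    Tendsto (fun n => ∫ q, (gs n q - 1) • s q ∂μ) l (𝓝 (∫ q, (g' q - 1) • s q ∂μ)) := by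
  classical
  induction s using SimpleFunc.induction with
  | @const c B hB =>
    rw [SimpleFunc.coe_piecewise, SimpleFunc.coe_const, SimpleFunc.coe_const,
      Function.const_zero, Set.piecewise_eq_indicator] at hs ⊢
    rcases eq_or_ne c 0 with rfl | hc
    · simpa using tendsto_const_nhds
    · exact hv.tendsto_integral_sub_one_smul_indicator_const hgs hg' hB (hs.measure_ne_top hB hc) c
  | @add s s' hdisj ihs ihs' =>
    have hzero : ∀ q, s q = 0 ∨ s' q = 0 := fun q => by
      by_contra! h
      exact Set.disjoint_left.1 hdisj h.1 h.2
    have hs₁ : MemExpHeart s μ := hs.mono s.aestronglyMeasurable <| Eventually.of_forall fun q => by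
      rcases hzero q with h | h <;> simp [h]
    have hs₂ : MemExpHeart s' μ :=
      hs.mono s'.aestronglyMeasurable <| Eventually.of_forall fun q => by
        rcases hzero q with h | h <;> simp [h]
    have hsplit : ∀ k : Y → ℝ, EntropyLE_s13 k N μ → ∫ q, (k q - 1) • (s + s') q ∂μ =
        ∫ q, (k q - 1) • s q ∂μ + ∫ q, (k q - 1) • s' q ∂μ := fun k hk => by
      simp only [SimpleFunc.coe_add, Pi.add_apply, smul_add]
      exact integral_add (hk.integrable_sub_one_smul hs₁) (hk.integrable_sub_one_smul hs₂)
    simp_rw [fun n => hsplit _ (hgs n), hsplit _ hg']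
    exact (ihs hs₁).add (ihs' hs₂)

theorem TendstoVaguely.tendsto_integral_sub_one_smul [CompleteSpace E]
    (hv : TendstoVaguely gs l g' μ) (hgs : ∀ n, EntropyLE_s13 (gs n) N μ) (hg' : EntropyLE_s13 g' N μ)
    (hψ : MemExpHeart ψ μ) :
    Tendsto (fun n => ∫ q, (gs n q - 1) • ψ q ∂μ) l (𝓝 (∫ q, (g' q - 1) • ψ q ∂μ)) := by
  refine tendsto_integral_sub_one_smul_of_approx hψ hgs hg' fun σ hσ => ?_
  obtain ⟨s, hs, hle⟩ := hψ.exists_simpleFunc hσ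
  exact ⟨s, hs, hle, hv.tendsto_integral_sub_one_smul_simpleFunc hgs hg' s hs⟩

theorem TendstoVaguely.tendsto_integral_sub_one_smul_of_dominated [CompleteSpace E] [l.NeBot]
    [l.IsCountablyGenerated] (hv : TendstoVaguely gs l g' μ) (hgs : ∀ n, EntropyLE_s13 (gs n) N μ)
    (hg' : EntropyLE_s13 g' N μ) {φs : ι → Y → E} {G : Y → F} (hG : MemExpHeart G μ)
    (hφs : ∀ n, AEStronglyMeasurable (φs n) μ) (hle : ∀ n, ∀ᵐ q ∂μ, ‖φs n q‖ ≤ ‖G q‖)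
    (hlim : ∀ᵐ q ∂μ, Tendsto (φs · q) l (𝓝 (ψ q))) :
    Tendsto (fun n => ∫ q, (gs n q - 1) • φs n q ∂μ) l (𝓝 (∫ q, (g' q - 1) • ψ q ∂μ)) := by
  have hψ : MemExpHeart ψ μ := hG.of_tendsto hφs hle hlim
  have hdiff_le : ∀ n, ∀ᵐ q ∂μ, ‖(φs n - ψ) q‖ ≤ ‖((2 : ℝ) • fun q => ‖G q‖) q‖ := fun n => by
    filter_upwards [hle n, ae_norm_le_of_tendsto hle hlim] with q hn hq
    simp only [Pi.sub_apply, Pi.smul_apply, norm_smul, norm_norm, norm_ofNat]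
    linarith [norm_sub_le (φs n q) (ψ q)]
  have hdiff_lim : ∀ᵐ q ∂μ, Tendsto (fun n => (φs n - ψ) q) l (𝓝 0) := by
    filter_upwards [hlim] with q hq
    simpa only [Pi.sub_apply, sub_self] using hq.sub_const (ψ q)
  have hdiff := (hG.norm.const_smul 2).tendsto_lintegral_enorm_sub_one_smul
    (fun n => (hφs n).sub hψ.aestronglyMeasurable) hdiff_le hdiff_lim hgs
  have hdiff_int : Tendsto (fun n => ∫ q, (gs n q - 1) • (φs n - ψ) q ∂μ) l (𝓝 0) :=
    tendsto_zero_iff_enorm_tendsto_zero.2 <| tendsto_of_tendsto_of_tendsto_of_le_of_le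
      tendsto_const_nhds hdiff (fun _ => zero_le) fun _ => enorm_integral_le_lintegral_enorm _
  have hsplit : ∀ n, ∫ q, (gs n q - 1) • φs n q ∂μ =
      ∫ q, (gs n q - 1) • (φs n - ψ) q ∂μ + ∫ q, (gs n q - 1) • ψ q ∂μ := fun n => by
    simp only [Pi.sub_apply, smul_sub]
    rw [integral_sub ((hgs n).integrable_sub_one_smul (hG.mono (hφs n) (hle n)))
      ((hgs n).integrable_sub_one_smul hψ), sub_add_cancel]
  simpa only [hsplit, zero_add] using
    hdiff_int.add (hv.tendsto_integral_sub_one_smul hgs hg' hψ)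

theorem TendstoVaguely.tendsto_setIntegral_sub_one_smul_of_dominated [CompleteSpace E] [l.NeBot]
    [l.IsCountablyGenerated] (hv : TendstoVaguely gs l g' μ) (hgs : ∀ n, EntropyLE_s13 (gs n) N μ)
    (hg' : EntropyLE_s13 g' N μ) {φs : ι → Y → E} {G : Y → F} (hG : MemExpHeart G μ)
    (hφs : ∀ n, AEStronglyMeasurable (φs n) μ) (hle : ∀ n, ∀ᵐ q ∂μ, ‖φs n q‖ ≤ ‖G q‖)
    (hlim : ∀ᵐ q ∂μ, Tendsto (φs · q) l (𝓝 (ψ q))) {B : Set Y} (hB : MeasurableSet B) :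
    Tendsto (fun n => ∫ q in B, (gs n q - 1) • φs n q ∂μ) l
      (𝓝 (∫ q in B, (g' q - 1) • ψ q ∂μ)) := by
  simp only [← integral_indicator hB, Set.indicator_smul]
  refine hv.tendsto_integral_sub_one_smul_of_dominated hgs hg' hG
    (fun n => (hφs n).indicator hB) (fun n => ?_) ?_
  · filter_upwards [hle n] with q hq
    exact (norm_indicator_le_norm_self _ _).trans hq
  · filter_upwards [hlim] with q hq
    by_cases hqB : q ∈ B
    · simpa only [Set.indicator_of_mem hqB] using hq
    · simpa only [Set.indicator_of_notMem hqB] using tendsto_const_nhds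

end Vague

end Heart

lemma tendstoInMeasure_of_tendsto_integral_norm_rpow {Y F ι : Type*} [MeasurableSpace Y]
    {μ : Measure Y} [NormedAddCommGroup F] {l : Filter ι} {u : ι → Y → F} {w : Y → F} {p : ℝ}
    (hp : 0 < p) (hu : ∀ n, MemLp (u n) (ENNReal.ofReal p) μ) (hw : MemLp w (ENNReal.ofReal p) μ)
    (h : Tendsto (fun n => ∫ q, ‖u n q - w q‖ ^ p ∂μ) l (𝓝 0)) : TendstoInMeasure μ u l w := by
  have hp₀ : ENNReal.ofReal p ≠ 0 := by simpa using hp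
  refine tendstoInMeasure_of_tendsto_eLpNorm hp₀ (fun n => (hu n).aestronglyMeasurable)
    hw.aestronglyMeasurable ?_
  have hnorm : ∀ n, eLpNorm (u n - w) (ENNReal.ofReal p) μ =
      ENNReal.ofReal ((∫ q, ‖u n q - w q‖ ^ p ∂μ) ^ p⁻¹) := fun n => by
    simpa only [ENNReal.toReal_ofReal hp.le, Pi.sub_apply] using
      ((hu n).sub hw).eLpNorm_eq_integral_rpow_norm hp₀ ENNReal.ofReal_ne_top
  simpa only [hnorm, zero_rpow (inv_pos.2 hp).ne', ENNReal.ofReal_zero] using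
    ENNReal.tendsto_ofReal (h.rpow_const (Or.inr (inv_pos.2 hp).le))

lemma tendsto_comap_of_norm_sub_le {V E F : Type*} [NormedAddCommGroup E] [NormedAddCommGroup F]
    {j : V → F} {φ : V → E} {C : ℝ} {w : V} (h : ∀ v, ‖φ v - φ w‖ ≤ C * ‖j v - j w‖) :
    Tendsto φ (comap j (𝓝 (j w))) (𝓝 (φ w)) := by
  have hj := tendsto_iff_norm_sub_tendsto_zero.1 (tendsto_comap (f := j) (x := 𝓝 (j w)))
  refine tendsto_iff_norm_sub_tendsto_zero.2 (squeeze_zero (fun _ => norm_nonneg _) h ?_)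
  simpa only [mul_zero] using hj.const_mul C

theorem stmt_13_general {S Z V E F : Type*} [TopologicalSpace S] [PolishSpace S]
    [LocallyCompactSpace S] [MeasurableSpace S] [BorelSpace S] [TopologicalSpace Z] [PolishSpace Z]
    [LocallyCompactSpace Z] [MeasurableSpace Z] [BorelSpace Z] [MeasurableSpace V]
    [NormedAddCommGroup E] [NormedSpace ℝ E] [CompleteSpace E] [NormedAddCommGroup F]
    {τ : Measure S} [IsFiniteMeasureOnCompacts τ] {ν : Measure Z} [IsFiniteMeasureOnCompacts ν]
    {j : V → F} {f : S → V → Z → E}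
    (hf : StronglyMeasurable fun q : S × V × Z => f q.1 q.2.1 q.2.2)
    {L : S × Z → ℝ} (hL : MemExpHeart L (τ.prod ν))
    (hf_le : ∀ s v z, ‖f s v z‖ ≤ L (s, z) * (1 + ‖j v‖))
    (hf_cont : ∀ s w z, Tendsto (f s · z) (comap j (𝓝 (j w))) (𝓝 (f s w z)))
    {vs : ℕ → S → V} {v : S → V} (hvs : ∀ n, Measurable (vs n)) {M : ℝ}
    (hvs_le : ∀ n, ∀ᵐ s ∂τ, ‖j (vs n s)‖ ≤ M)
    (hvs_lim : TendstoInMeasure τ (fun n s => j (vs n s)) atTop fun s => j (v s))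
    {N : ℝ≥0} {gs : ℕ → S × Z → ℝ} {g : S × Z → ℝ} (hgs : ∀ n, EntropyLE_s13 (gs n) N (τ.prod ν))
    (hg : EntropyLE_s13 g N (τ.prod ν)) (hgs_lim : TendstoVaguely gs atTop g (τ.prod ν))
    {A : Set S} (hA : MeasurableSet A) :
    Tendsto (fun n => ∫ s in A, ∫ z, (gs n (s, z) - 1) • f s (vs n s) z ∂ν ∂τ) atTop
      (𝓝 (∫ s in A, ∫ z, (g (s, z) - 1) • f s (v s) z ∂ν ∂τ)) := by
  have hmeas : ∀ n, AEStronglyMeasurable (fun q : S × Z => f q.1 (vs n q.1) q.2) (τ.prod ν) :=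
    fun n => (hf.comp_measurable (g := fun q : S × Z => (q.1, vs n q.1, q.2))
      (by fun_prop)).aestronglyMeasurable
  have hle : ∀ n, ∀ᵐ q ∂τ.prod ν, ‖f q.1 (vs n q.1) q.2‖ ≤ ‖((1 + M) • L) q‖ := fun n => by
    filter_upwards [Measure.quasiMeasurePreserving_fst.ae (hvs_le n)] with q hq
    calc ‖f q.1 (vs n q.1) q.2‖ ≤ L q * (1 + ‖j (vs n q.1)‖) := hf_le _ _ _
      _ ≤ ‖L q‖ * ‖1 + M‖ := by
        gcongr
        · exact le_norm_self _
        · exact (add_le_add_right hq 1).trans (le_norm_self _)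
      _ = ‖((1 + M) • L) q‖ := by rw [Pi.smul_apply, norm_smul, mul_comm]
  have hG := hL.const_smul (1 + M)
  have hfubini : ∀ k (w : S → V), EntropyLE_s13 k N (τ.prod ν) →
      MemExpHeart (fun q : S × Z => f q.1 (w q.1) q.2) (τ.prod ν) →
      ∫ s in A, ∫ z, (k (s, z) - 1) • f s (w s) z ∂ν ∂τ =
        ∫ q in A ×ˢ Set.univ, (k q - 1) • f q.1 (w q.1) q.2 ∂τ.prod ν := fun k w hk hw => by
    rw [setIntegral_prod _ (hk.integrable_sub_one_smul hw).integrableOn, Measure.restrict_univ]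
  refine tendsto_of_subseq_tendsto fun ns hns => ?_
  obtain ⟨ms, hms, hae⟩ := (hvs_lim.comp hns).exists_seq_tendsto_ae
  have hlim : ∀ᵐ q ∂τ.prod ν, Tendsto (fun k => f q.1 (vs (ns (ms k)) q.1) q.2) atTop
      (𝓝 (f q.1 (v q.1) q.2)) := by
    filter_upwards [Measure.quasiMeasurePreserving_fst.ae hae] with q hq
    exact (hf_cont q.1 (v q.1) q.2).comp (tendsto_comap_iff.2 hq)
  refine ⟨ms, ?_⟩
  rw [hfubini g v hg (hG.of_tendsto (fun k => hmeas _) (fun k => hle _) hlim)]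
  simp_rw [fun n => hfubini _ _ (hgs n) (hG.mono (hmeas n) (hle n))]
  exact (hgs_lim.comp (hns.comp hms.tendsto_atTop)).tendsto_setIntegral_sub_one_smul_of_dominated
    (fun k => hgs _) hg hG (fun k => hmeas _) (fun k => hle _) hlim (hA.prod .univ)

theorem stmt_13
    {𝕏 : Type*} [TopologicalSpace 𝕏] [PolishSpace 𝕏] [LocallyCompactSpace 𝕏]
    [MeasurableSpace 𝕏] [BorelSpace 𝕏]
    {H : Type*} [NormedAddCommGroup H] [InnerProductSpace ℝ H]
    [TopologicalSpace.SeparableSpace H] [MeasurableSpace H] [BorelSpace H]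
    {V : Type*} [NormedAddCommGroup V] [NormedSpace ℝ V]
    [TopologicalSpace.SeparableSpace V] [MeasurableSpace V] [BorelSpace V]
    (T : ℝ) (hT : 0 < T)
    (ν : Measure 𝕏) [SigmaFinite ν] (hνK : ∀ Kc : Set 𝕏, IsCompact Kc → ν Kc < ⊤)
    (νT : Measure (ℝ × 𝕏)) (hνT : νT = (volume.restrict (Set.Icc 0 T)).prod ν)
    (i : V →L[ℝ] H) (hiInj : Function.Injective i) (hiDense : DenseRange i)
    (f : ℝ → V → 𝕏 → H)
    (hfm : Measurable fun q : ℝ × V × 𝕏 => f q.1 q.2.1 q.2.2)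
    (Lf : ℝ × 𝕏 → ℝ) (hLfm : Measurable Lf) (hLfnn : ∀ q, 0 ≤ Lf q)
    (hLfint : ∫⁻ q, ENNReal.ofReal (Lf q ^ (2 : ℕ)) ∂νT < ⊤)
    (hLfH : ∃ δ : ℝ, 0 < δ ∧ ∀ Γ : Set (ℝ × 𝕏), MeasurableSet Γ → νT Γ < ⊤ →
      ∫⁻ q in Γ, ENNReal.ofReal (Real.exp (δ * Lf q ^ (2 : ℝ))) ∂νT < ⊤)
    (hfb : ∀ (t : ℝ) (v : V) (z : 𝕏), ‖f t v z‖ ≤ Lf (t, z) * (1 + ‖i v‖))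
    (Gf : ℝ × 𝕏 → ℝ) (hGfm : Measurable Gf) (hGfnn : ∀ q, 0 ≤ Gf q)
    (hGfint : ∫⁻ q, ENNReal.ofReal (Gf q ^ (2 : ℕ)) ∂νT < ⊤)
    (hGfH : ∃ δ : ℝ, 0 < δ ∧ ∀ Γ : Set (ℝ × 𝕏), MeasurableSet Γ → νT Γ < ⊤ →
      ∫⁻ q in Γ, ENNReal.ofReal (Real.exp (δ * Gf q ^ (2 : ℝ))) ∂νT < ⊤)
    (hfLip : ∀ (t : ℝ) (v₁ v₂ : V) (z : 𝕏),
      ‖f t v₁ z - f t v₂ z‖ ≤ Gf (t, z) * ‖i v₁ - i v₂‖)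
    (N : ℕ)
    (SN : Set (ℝ × 𝕏 → ℝ))
    (hSN : SN = {g : ℝ × 𝕏 → ℝ | Measurable g ∧ (∀ q, 0 ≤ g q) ∧
      ∫⁻ q, ENNReal.ofReal (g q * Real.log (g q) - g q + 1) ∂νT ≤ (N : ℝ≥0∞)})
    (rn : ℕ → ℝ → V) (r : ℝ → V)
    (hrnm : ∀ n, StronglyMeasurable (rn n)) (hrm : StronglyMeasurable r)
    (hrnbdd : ∃ M : ℝ, ∀ n, ∀ t ∈ Set.Icc (0 : ℝ) T, ‖i (rn n t)‖ ≤ M)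
    (hrbdd : ∃ M : ℝ, ∀ t ∈ Set.Icc (0 : ℝ) T, ‖i (r t)‖ ≤ M)
    (q : ℝ) (hq : 0 < q)
    (hrconv : Tendsto (fun n => ∫ t in Set.Icc (0 : ℝ) T, ‖i (rn n t) - i (r t)‖ ^ q)
      atTop (nhds 0))
    (gn : ℕ → ℝ × 𝕏 → ℝ) (g : ℝ × 𝕏 → ℝ)
    (hgn : ∀ n, gn n ∈ SN) (hg : g ∈ SN)
    (hgconv : ∀ φ : ℝ × 𝕏 → ℝ, Continuous φ → HasCompactSupport φ →
      Tendsto (fun n => ∫ q', φ q' * gn n q' ∂νT) atTop (nhds (∫ q', φ q' * g q' ∂νT)))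
    (hintn : ∀ n, Integrable (fun qz : ℝ × 𝕏 => (gn n qz - 1) • f qz.1 (rn n qz.1) qz.2) νT)
    (hint : Integrable (fun qz : ℝ × 𝕏 => (g qz - 1) • f qz.1 (r qz.1) qz.2) νT) :
    ∀ t ∈ Set.Icc (0 : ℝ) T, ∀ h : H,
      Tendsto (fun n =>
          ⟪∫ s in Set.Icc (0 : ℝ) t, ∫ z, (gn n (s, z) - 1) • f s (rn n s) z ∂ν, h⟫)
        atTop
        (nhds ⟪∫ s in Set.Icc (0 : ℝ) t, ∫ z, (g (s, z) - 1) • f s (r s) z ∂ν, h⟫) := by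
  intro t ht h
  by_cases hH : CompleteSpace H
  swap
  · -- Bochner integrals with values in an incomplete space are `0` by convention.
    simp [integral, hH]
  have hentropy : ∀ k ∈ SN, EntropyLE_s13 k N νT := fun k hk => by
    obtain ⟨hm, hnn, hle⟩ := hSN ▸ hk
    exact ⟨hm.aemeasurable, .of_forall hnn, by
      simpa only [klFun, sub_add_eq_add_sub, ENNReal.coe_natCast] using hle⟩
  subst hνT
  have : IsFiniteMeasureOnCompacts ν := ⟨hνK⟩
  have := UniformSpace.secondCountable_of_separable H
  obtain ⟨M, hM⟩ := hrnbdd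
  obtain ⟨M', hM'⟩ := hrbdd
  have hmem : ∀ (u : ℝ → V) (C : ℝ), StronglyMeasurable u → (∀ s ∈ Set.Icc 0 T, ‖i (u s)‖ ≤ C) →
      MemLp (fun s => i (u s)) (ENNReal.ofReal q) (volume.restrict (Set.Icc 0 T)) :=
    fun u C hu hC => .of_bound (i.continuous.comp_stronglyMeasurable hu).aestronglyMeasurable C
      (ae_restrict_of_forall_mem measurableSet_Icc hC)
  have hlim := stmt_13_general hfm.stronglyMeasurable
    (memExpHeart_of_lintegral_sq_of_exp_sq hLfm hLfint (by simpa only [rpow_two] using hLfH)) hfb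
    (fun s w z => tendsto_comap_of_norm_sub_le fun v => hfLip s v w z)
    (fun n => (hrnm n).measurable) (fun n => ae_restrict_of_forall_mem measurableSet_Icc (hM n))
    (tendstoInMeasure_of_tendsto_integral_norm_rpow hq (fun n => hmem _ M (hrnm n) (hM n))
      (hmem r M' hrm hM') hrconv)
    (fun n => hentropy _ (hgn n)) (hentropy g hg) hgconv (measurableSet_Icc (a := 0) (b := t))
  rw [Measure.restrict_restrict_of_subset (Set.Icc_subset_Icc_right ht.2)] at hlim
  exact hlim.inner tendsto_const_nhds
end
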